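/- arXiv:2411.04514 — 3 statements merged into one kernel-verified Lean document; each statement's English description precedes it below -/
import Mathlib

section
/- Let R be a commutative noetherian ring, p a prime ideal, and k an integer with 0 < k ≤ depth(R_p). Then for an R-module M the following are equivalent: (i) Tor^R_j(S_k(pR_p; R_p), M) = 0 for all j ≥ 1; (ii) depth_{R_p}(M_p) ≥ k; (iii) p is not an associated prime of the direct sum ⊕_{i=0}^{k-1} Ω_{-i}(M) of the first k minimal cosyzygies of M. -/
open CategoryTheory Opposite

noncomputable section

/-- Vanishing of the `n`-th Ext group of two `R`-modules. -/
def extV (R : Type) [Ring R] (M N : ModuleCat.{0} R) (n : ℕ) : Prop :=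
  Subsingleton (((_root_.Ext ℤ (ModuleCat.{0} R) n).obj (op M)).obj N)

/-- Vanishing of the `n`-th Tor group of two `R`-modules. -/
def torV (R : Type) [CommRing R] (M N : ModuleCat.{0} R) (n : ℕ) : Prop :=
  Subsingleton (((Tor (ModuleCat.{0} R) n).obj M).obj N)

/-- `f : A →ₗ[R] B` is a pure monomorphism. -/
def IsPureMono (R : Type) [CommRing R] {A B : Type} [AddCommGroup A] [Module R A]
    [AddCommGroup B] [Module R B] (f : A →ₗ[R] B) : Prop :=
  Function.Injective f ∧
    ∀ (Q : Type) [AddCommGroup Q] [Module R Q], Function.Injective (LinearMap.lTensor Q f)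

/-- An `R`-module `N` is pure-injective if it is injective with respect to
pure monomorphisms. -/
def PureInjective (R : Type) [CommRing R] (N : Type) [AddCommGroup N] [Module R N] : Prop :=
  ∀ (A B : Type) [AddCommGroup A] [Module R A] [AddCommGroup B] [Module R B]
    (f : A →ₗ[R] B), IsPureMono R f → ∀ g : A →ₗ[R] N, ∃ h : B →ₗ[R] N, h.comp f = g

/-- `N` has injective dimension at most `n`. -/
def injDimLE (R : Type) [Ring R] (N : ModuleCat.{0} R) (n : ℕ) : Prop :=
  ∀ M : ModuleCat.{0} R, ∀ j : ℕ, n < j → extV R M N j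

/-- `M` has projective dimension at most `n`. -/
def projDimLE (R : Type) [Ring R] (M : ModuleCat.{0} R) (n : ℕ) : Prop :=
  ∀ N : ModuleCat.{0} R, ∀ j : ℕ, n < j → extV R M N j

/-- `M` has flat dimension at most `n`. -/
def flatDimLE (R : Type) [CommRing R] (M : ModuleCat.{0} R) (n : ℕ) : Prop :=
  ∀ N : ModuleCat.{0} R, ∀ j : ℕ, n < j → torV R M N j

/-- The depth of a module over a commutative local ring. -/
def rdepth (A : Type) [CommRing A] [IsLocalRing A] (M : Type) [AddCommGroup M]
    [Module A M] : ℕ∞ :=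
  sInf {n : ℕ∞ | ∃ i : ℕ, n = (i : ℕ∞) ∧
    ¬ extV A (ModuleCat.of A (IsLocalRing.ResidueField A)) (ModuleCat.of A M) i}

/-- `depth(R_p)`. -/
def ringDepthAt (R : Type) [CommRing R] (p : PrimeSpectrum R) : ℕ∞ :=
  rdepth (Localization.AtPrime p.asIdeal) (Localization.AtPrime p.asIdeal)

/-- `depth_{R_p}(M_p)`. -/
def depthAt (R : Type) [CommRing R] (p : PrimeSpectrum R) (M : Type) [AddCommGroup M]
    [Module R M] : ℕ∞ :=
  rdepth (Localization.AtPrime p.asIdeal) (LocalizedModule p.asIdeal.primeCompl M)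

/-- `f : M →ₗ[R] E` exhibits `E` as an injective envelope of `M`. -/
def IsInjectiveEnvelope (R : Type) [Ring R] {M E : Type} [AddCommGroup M] [Module R M]
    [AddCommGroup E] [Module R E] (f : M →ₗ[R] E) : Prop :=
  Module.Injective R E ∧ Function.Injective f ∧
    ∀ K : Submodule R E, K ≠ ⊥ → K ⊓ LinearMap.range f ≠ ⊥

/-- The degree-`i` term of the Koszul cochain complex on `ℓ` generators over `A`:
a free module on the `i`-element subsets of `Fin ℓ`. -/
abbrev KosTerm (A : Type) [CommRing A] (ℓ i : ℕ) : Type :=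
  {s : Finset (Fin ℓ) // s.card = i} → A

/-- The Koszul cochain differential (for the sequence `x`), from degree `i`
to degree `i+1`. -/
def kosD (A : Type) [CommRing A] {ℓ : ℕ} (x : Fin ℓ → A) (i : ℕ) :
    KosTerm A ℓ i →ₗ[A] KosTerm A ℓ (i + 1) where
  toFun f T := ∑ t ∈ T.1.attach,
    ((-1 : A) ^ ((T.1.filter (fun s => s < t.1)).card) * x t.1) •
      f ⟨T.1.erase t.1, by
        rw [Finset.card_erase_of_mem t.2, T.2]; omega⟩
  map_add' f g := by
    funext T
    simp [mul_add, Finset.sum_add_distrib]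
  map_smul' a f := by
    funext T
    rw [RingHom.id_apply]
    simp only [Pi.smul_apply, smul_eq_mul, Finset.mul_sum]
    exact Finset.sum_congr rfl fun t _ => by ring

/-- `S_k(x; A)`: the cokernel of the `(k-1)`-st differential of the Koszul cochain
complex of the sequence `x` (with `S_0 = A`). -/
def KosCoker (A : Type) [CommRing A] {ℓ : ℕ} (x : Fin ℓ → A) : ℕ → Type
  | 0 => A
  | m + 1 => KosTerm A ℓ (m + 1) ⧸ LinearMap.range (kosD A x m)

instance kosCokerAddCommGroup (A : Type) [CommRing A] {ℓ : ℕ} (x : Fin ℓ → A) :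
    (k : ℕ) → AddCommGroup (KosCoker A x k)
  | 0 => inferInstanceAs (AddCommGroup A)
  | m + 1 => inferInstanceAs
      (AddCommGroup (KosTerm A ℓ (m + 1) ⧸ LinearMap.range (kosD A x m)))

instance kosCokerModule (A : Type) [CommRing A] {ℓ : ℕ} (x : Fin ℓ → A) :
    (k : ℕ) → Module A (KosCoker A x k)
  | 0 => inferInstanceAs (Module A A)
  | m + 1 => inferInstanceAs
      (Module A (KosTerm A ℓ (m + 1) ⧸ LinearMap.range (kosD A x m)))

/-- The `R`-module structure on `S_k(x; A)` obtained by restriction of scalars. -/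
instance kosCokerModule' (R A : Type) [CommRing R] [CommRing A] [Algebra R A]
    {ℓ : ℕ} (x : Fin ℓ → A) (k : ℕ) : Module R (KosCoker A x k) :=
  Module.compHom _ (algebraMap R A)

/-- A choice of minimal injective coresolution data for `M`: `C n` is the `n`-th
cosyzygy obtained by successively taking injective envelopes. -/
structure CosyzygySeq (R : Type) [CommRing R] (M : Type) [AddCommGroup M] [Module R M] :
    Type 1 where
  C : ℕ → ModuleCat.{0} R
  iso0 : (↥(C 0)) ≃ₗ[R] M
  E : ℕ → ModuleCat.{0} R
  emb : ∀ n, (↥(C n)) →ₗ[R] (↥(E n))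
  env : ∀ n, IsInjectiveEnvelope R (emb n)
  isoSucc : ∀ n, (↥(C (n + 1))) ≃ₗ[R] ((↥(E n)) ⧸ LinearMap.range (emb n))


section chase
variable {A : Type*} [CommRing A]

theorem s8_chase {N1 N2 N3 F0 F1 F2 F3 C0 C1 C2 : Type*}
    [AddCommGroup N1] [AddCommGroup N2] [AddCommGroup N3] [AddCommGroup F0] [AddCommGroup F1]
    [AddCommGroup F2] [AddCommGroup F3] [AddCommGroup C0] [AddCommGroup C1] [AddCommGroup C2]
    [Module A N1] [Module A N2] [Module A N3] [Module A F0] [Module A F1]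
    [Module A F2] [Module A F3] [Module A C0] [Module A C1] [Module A C2]
    {n1 : N1 →ₗ[A] N2} {n2 : N2 →ₗ[A] N3} {f0 : F0 →ₗ[A] F1} {f1 : F1 →ₗ[A] F2}
    {f2 : F2 →ₗ[A] F3} {c0 : C0 →ₗ[A] C1} {c1 : C1 →ₗ[A] C2}
    {i1 : N1 →ₗ[A] F1} {i2 : N2 →ₗ[A] F2} {i3 : N3 →ₗ[A] F3}
    {q0 : F0 →ₗ[A] C0} {q1 : F1 →ₗ[A] C1} {q2 : F2 →ₗ[A] C2}
    (hi1 : ∀ x, i2 (n1 x) = f1 (i1 x)) (hi2 : ∀ x, i3 (n2 x) = f2 (i2 x))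
    (hq0 : ∀ x, q1 (f0 x) = c0 (q0 x)) (hq1 : ∀ x, q2 (f1 x) = c1 (q1 x))
    (h2 : Function.Injective i2) (h3 : Function.Injective i3)
    (e1 : Function.Exact i1 q1) (e2 : Function.Exact i2 q2)
    (s0 : Function.Surjective q0) (s1 : Function.Surjective q1)
    (x1 : Function.Exact f0 f1) (x2 : Function.Exact f1 f2) :
    Function.Exact c0 c1 ↔ Function.Exact n1 n2 := by
  constructor
  · intro hC y
    constructor
    · intro hy
      have : f2 (i2 y) = 0 := by rw [← hi2, hy, map_zero]
      obtain ⟨g, hg⟩ := (x2 _).1 this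
      have : c1 (q1 g) = 0 := by rw [← hq1, hg]; exact e2.apply_apply_eq_zero y
      obtain ⟨hb, hhb⟩ := (hC _).1 this
      obtain ⟨h, rfl⟩ := s0 hb
      have : q1 (g - f0 h) = 0 := by rw [map_sub, hq0, hhb, sub_self]
      obtain ⟨n, hn⟩ := (e1 _).1 this
      refine ⟨n, h2 ?_⟩
      rw [hi1, hn, map_sub, hg, x1.apply_apply_eq_zero, sub_zero]
    · rintro ⟨z, rfl⟩
      apply h3
      rw [hi2, hi1, x2.apply_apply_eq_zero, map_zero]
  · intro hN y
    obtain ⟨f, rfl⟩ := s1 y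
    constructor
    · intro hy
      rw [← hq1] at hy
      obtain ⟨n, hn⟩ := (e2 _).1 hy
      have : n2 n = 0 := by
        apply h3
        rw [hi2, hn, x2.apply_apply_eq_zero, map_zero]
      obtain ⟨g, hg⟩ := (hN _).1 this
      have : f1 (f - i1 g) = 0 := by rw [map_sub, ← hi1, hg, hn, sub_self]
      obtain ⟨h, hh⟩ := (x1 _).1 this
      refine ⟨q0 h, ?_⟩
      rw [← hq0, hh, map_sub, e1.apply_apply_eq_zero, sub_zero]
    · rintro ⟨z, hz⟩
      obtain ⟨w, rfl⟩ := s0 z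
      rw [← hz, ← hq0, ← hq1, x1.apply_apply_eq_zero, map_zero]

theorem s8_chase0 {X0 X1 XM F0 F1 F2 FM C0 C1 C2 : Type*}
    [AddCommGroup X0] [AddCommGroup X1] [AddCommGroup XM] [AddCommGroup F0] [AddCommGroup F1]
    [AddCommGroup F2] [AddCommGroup FM] [AddCommGroup C0] [AddCommGroup C1] [AddCommGroup C2]
    [Module A X0] [Module A X1] [Module A XM] [Module A F0] [Module A F1]
    [Module A F2] [Module A FM] [Module A C0] [Module A C1] [Module A C2]
    {a1 : X1 →ₗ[A] X0} {a0 : X0 →ₗ[A] XM}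
    {f2 : F2 →ₗ[A] F1} {f1 : F1 →ₗ[A] F0} {f0 : F0 →ₗ[A] FM}
    {c2 : C2 →ₗ[A] C1} {c1 : C1 →ₗ[A] C0}
    {iM : XM →ₗ[A] FM} {i0 : X0 →ₗ[A] F0} {i1 : X1 →ₗ[A] F1}
    {q2 : F2 →ₗ[A] C2} {q1 : F1 →ₗ[A] C1} {q0 : F0 →ₗ[A] C0}
    (hi0 : ∀ x, iM (a0 x) = f0 (i0 x)) (hi1 : ∀ x, i0 (a1 x) = f1 (i1 x))
    (hq2 : ∀ x, q1 (f2 x) = c2 (q2 x)) (hq1 : ∀ x, q0 (f1 x) = c1 (q1 x))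
    (h0 : Function.Injective i0)
    (e1 : Function.Exact i1 q1) (e0 : Function.Exact i0 q0)
    (s2 : Function.Surjective q2) (s1 : Function.Surjective q1)
    (sa : Function.Surjective a0) (xa : Function.Exact a1 a0)
    (x1 : Function.Exact f2 f1) (x0 : Function.Exact f1 f0) :
    Function.Exact c2 c1 ↔ Function.Injective iM := by
  constructor
  · intro hC
    rw [injective_iff_map_eq_zero]
    intro z hz
    obtain ⟨z0, rfl⟩ := sa z
    rw [hi0] at hz
    obtain ⟨w, hw⟩ := (x0 _).1 hz
    have : c1 (q1 w) = 0 := by rw [← hq1, hw, e0.apply_apply_eq_zero]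
    obtain ⟨vb, hv⟩ := (hC _).1 this
    obtain ⟨v, rfl⟩ := s2 vb
    have : q1 (w - f2 v) = 0 := by rw [map_sub, hq2, hv, sub_self]
    obtain ⟨n, hn⟩ := (e1 _).1 this
    have : a1 n = z0 := h0 (by rw [hi1, hn, map_sub, hw, x1.apply_apply_eq_zero, sub_zero])
    rw [← this, xa.apply_apply_eq_zero]
  · intro hM y
    obtain ⟨w, rfl⟩ := s1 y
    constructor
    · intro hy
      rw [← hq1] at hy
      obtain ⟨z0, hz0⟩ := (e0 _).1 hy
      have : a0 z0 = 0 := hM (by rw [hi0, hz0, x0.apply_apply_eq_zero, map_zero])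
      obtain ⟨n, rfl⟩ := (xa _).1 this
      have : f1 (w - i1 n) = 0 := by rw [map_sub, ← hi1, hz0, sub_self]
      obtain ⟨v, hv⟩ := (x1 _).1 this
      refine ⟨q2 v, ?_⟩
      rw [← hq2, hv, map_sub, e1.apply_apply_eq_zero, sub_zero]
    · rintro ⟨z, hz⟩
      obtain ⟨w, rfl⟩ := s2 z
      rw [← hz, ← hq2, ← hq1, x1.apply_apply_eq_zero, map_zero]

/-- exactness of a cochain complex in degree `n`. -/
def s8CEx {G : ℕ → Type} [∀ n, AddCommGroup (G n)] [∀ n, Module A (G n)]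
    (δ : ∀ n, G n →ₗ[A] G (n + 1)) : ℕ → Prop
  | 0 => Function.Injective (δ 0)
  | n + 1 => Function.Exact (δ n) (δ (n + 1))

theorem s8_inj_iff {G H : Type*} [AddCommGroup G] [AddCommGroup H] [Module A G] [Module A H]
    (f : G →ₗ[A] H) : Function.Exact (0 : PUnit.{1} →ₗ[A] G) f ↔ Function.Injective f := by
  rw [injective_iff_map_eq_zero]
  constructor
  · intro h a ha
    obtain ⟨y, hy⟩ := (h a).1 ha
    exact hy.symm
  · intro h a
    exact ⟨fun ha => ⟨0, (h a ha).symm⟩, fun ⟨y, hy⟩ => by rw [← hy]; simp⟩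

theorem s8_shift {GN GF GC : ℕ → Type} [∀ n, AddCommGroup (GN n)] [∀ n, Module A (GN n)]
    [∀ n, AddCommGroup (GF n)] [∀ n, Module A (GF n)]
    [∀ n, AddCommGroup (GC n)] [∀ n, Module A (GC n)]
    {dN : ∀ n, GN n →ₗ[A] GN (n + 1)} {dF : ∀ n, GF n →ₗ[A] GF (n + 1)}
    {dC : ∀ n, GC n →ₗ[A] GC (n + 1)}
    (i : ∀ n, GN n →ₗ[A] GF n) (q : ∀ n, GF n →ₗ[A] GC n)
    (hi : ∀ n x, i (n + 1) (dN n x) = dF n (i n x))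
    (hq : ∀ n x, q (n + 1) (dF n x) = dC n (q n x))
    (hinj : ∀ n, Function.Injective (i n)) (hex : ∀ n, Function.Exact (i n) (q n))
    (hsurj : ∀ n, Function.Surjective (q n))
    (hF : ∀ n, s8CEx dF n) (k : ℕ) :
    (∀ n < k + 1, s8CEx dN n) ↔ ∀ n < k, s8CEx dC n := by
  have key : ∀ n, s8CEx dC n ↔ s8CEx dN (n + 1) := by
    intro n
    cases n with
    | zero =>
      show Function.Injective _ ↔ Function.Exact _ _
      rw [← s8_inj_iff]
      exact s8_chase (f0 := (0 : PUnit.{1} →ₗ[A] GF 0)) (q0 := (0 : PUnit.{1} →ₗ[A] PUnit.{1}))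
        (hi 0) (hi 1) (by simp) (hq 0) (hinj 1) (hinj 2) (hex 0) (hex 1)
        (fun x => ⟨0, rfl⟩) (hsurj 0) ((s8_inj_iff _).2 (hF 0)) (hF 1)
    | succ n =>
      exact s8_chase (hi _) (hi _) (hq _) (hq _) (hinj _) (hinj _) (hex _) (hex _)
        (hsurj _) (hsurj _) (hF (n + 1)) (hF (n + 2))
  have h0 : s8CEx dN 0 := by
    intro a b hab
    apply hinj 0
    apply hF 0
    rw [← hi, hab, hi]
  constructor
  · intro h n hn
    exact (key n).2 (h _ (by omega))
  · intro h n hn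
    cases n with
    | zero => exact h0
    | succ n => exact (key n).1 (h _ (by omega))
end chase


section koszul
variable {A : Type} [CommRing A] {ℓ : ℕ}

/-- Koszul differential with coefficients. -/
def s8K (x : Fin ℓ → A) (N : Type) [AddCommGroup N] [Module A N] (i : ℕ) :
    ({s : Finset (Fin ℓ) // s.card = i} → N) →ₗ[A]
      ({s : Finset (Fin ℓ) // s.card = i + 1} → N) where
  toFun f T := ∑ t ∈ T.1.attach,
    ((-1 : A) ^ ((T.1.filter (fun s => s < t.1)).card) * x t.1) •
      f ⟨T.1.erase t.1, by
        rw [Finset.card_erase_of_mem t.2, T.2]; omega⟩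
  map_add' f g := by
    funext T
    simp [smul_add, Finset.sum_add_distrib]
  map_smul' a f := by
    funext T
    rw [RingHom.id_apply]
    simp only [Pi.smul_apply, Finset.smul_sum]
    exact Finset.sum_congr rfl fun t _ => smul_comm _ _ _

theorem s8K_eq (x : Fin ℓ → A) (i : ℕ) : kosD A x i = s8K x A i := rfl

variable (A) in
def s8sg (T : Finset (Fin ℓ)) (t : Fin ℓ) : A := (-1) ^ ((T.filter (fun s => s < t)).card)

theorem s8sg_mul_self (T : Finset (Fin ℓ)) (t : Fin ℓ) : s8sg A T t * s8sg A T t = 1 := by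
  unfold s8sg
  rw [← mul_pow]; simp

theorem s8sg_insert_self (T : Finset (Fin ℓ)) (t : Fin ℓ) : s8sg A (insert t T) t = s8sg A T t := by
  unfold s8sg
  rw [Finset.filter_insert]; simp

theorem s8sg_insert (T : Finset (Fin ℓ)) (t j : Fin ℓ) (hj : j ∉ T) :
    s8sg A (insert j T) t = (if j < t then -1 else 1) * s8sg A T t := by
  unfold s8sg
  rw [Finset.filter_insert]
  split_ifs with h
  · rw [Finset.card_insert_of_notMem (by simp [hj]), pow_succ]; ring
  · simp

theorem s8sg_swap (T : Finset (Fin ℓ)) (t j : Fin ℓ) (ht : t ∈ T) (hj : j ∉ T) :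
    s8sg A T j * s8sg A (insert j T) t = - (s8sg A T t * s8sg A (T.erase t) j) := by
  obtain ⟨U, hU, rfl⟩ : ∃ U, t ∉ U ∧ T = insert t U :=
    ⟨T.erase t, by simp, (Finset.insert_erase ht).symm⟩
  have hne : j ≠ t := fun h => hj (by simp [h])
  have hjU : j ∉ U := fun h => hj (by simp [h])
  rw [Finset.erase_insert hU, s8sg_insert _ _ _ hj, s8sg_insert _ _ _ hU, s8sg_insert_self]
  rcases lt_or_gt_of_ne hne with h | h
  · simp [h, h.not_gt]; ring
  · simp [h, h.not_gt]; ring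

variable (x : Fin ℓ → A) {N : Type} [AddCommGroup N] [Module A N]

def s8D (f : Finset (Fin ℓ) → N) (T : Finset (Fin ℓ)) : N :=
  ∑ t ∈ T, (s8sg A T t * x t) • f (T.erase t)

variable (A) in
def s8h (j : Fin ℓ) (f : Finset (Fin ℓ) → N) (T : Finset (Fin ℓ)) : N :=
  if j ∈ T then 0 else s8sg A T j • f (insert j T)

theorem s8_car (j : Fin ℓ) (f : Finset (Fin ℓ) → N) (T : Finset (Fin ℓ)) :
    s8D x (s8h A j f) T + s8h A j (s8D x f) T = x j • f T := by
  by_cases hj : j ∈ T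
  · have h2 : s8h A j (s8D x f) T = 0 := by simp [s8h, hj]
    rw [h2, add_zero, s8D, Finset.sum_eq_single_of_mem j hj]
    · have hsg : s8sg A T j = s8sg A (T.erase j) j := by
        conv_lhs => rw [← Finset.insert_erase hj, s8sg_insert_self]
      simp only [s8h, Finset.notMem_erase, if_false, Finset.insert_erase hj]
      rw [← hsg, smul_smul, mul_right_comm, s8sg_mul_self, one_mul]
    · intro t ht htj
      have : j ∈ T.erase t := by simp [hj, htj.symm]
      simp [s8h, this]
  · simp only [s8h, hj, if_false, s8D]
    rw [Finset.sum_insert hj, Finset.erase_insert hj, s8sg_insert_self, smul_add, smul_smul,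
      ← mul_assoc, s8sg_mul_self, one_mul, add_comm, add_assoc, Finset.smul_sum,
      ← Finset.sum_add_distrib, Finset.sum_eq_zero, add_zero]
    intro t ht
    have h1 : j ∉ T.erase t := fun h => hj (Finset.mem_of_mem_erase h)
    have htj : t ≠ j := fun h => hj (h ▸ ht)
    rw [if_neg h1, smul_smul, smul_smul, Finset.erase_insert_of_ne htj.symm, ← add_smul, ← mul_assoc,
      s8sg_swap _ _ _ ht hj]
    convert zero_smul A _ using 2
    ring

theorem s8D_add (f g : Finset (Fin ℓ) → N) : s8D x (f + g) = s8D x f + s8D x g := by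
  funext T; simp [s8D, Finset.sum_add_distrib]
theorem s8D_neg (f : Finset (Fin ℓ) → N) : s8D x (-f) = - s8D x f := by
  funext T; simp [s8D]
theorem s8D_smul (a : A) (f : Finset (Fin ℓ) → N) : s8D x (a • f) = a • s8D x f := by
  funext T; simp [s8D, Finset.smul_sum]; exact Finset.sum_congr rfl fun t _ => smul_comm _ _ _

theorem s8DD (T : Finset (Fin ℓ)) : ∀ f : Finset (Fin ℓ) → N, s8D x (s8D x f) T = 0 := by
  induction T using Finset.induction_on with
  | empty => intro f; simp [s8D]
  | insert j T hj ih =>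
    intro f
    have c1 : s8D x (s8h A j f) = x j • f - s8h A j (s8D x f) := by
      funext U; rw [eq_sub_iff_add_eq.2 (s8_car x j f U)]; rfl
    have c2 := s8_car x j (s8D x f) T
    have c3 : s8D x (s8h A j (s8D x f)) = x j • s8D x f - s8D x (s8D x (s8h A j f)) := by
      rw [c1, sub_eq_add_neg (x j • f), s8D_add, s8D_neg, s8D_smul]; abel
    rw [c3] at c2
    simp only [Pi.sub_apply, Pi.smul_apply, ih, sub_zero] at c2
    have c4 : s8h A j (s8D x (s8D x f)) T = 0 := by simpa using c2
    simp only [s8h, hj, if_false] at c4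
    have := congrArg (fun z => s8sg A T j • z) c4
    simpa [smul_smul, s8sg_mul_self] using this

/-- extension by zero -/
def s8ext {i : ℕ} (f : {s : Finset (Fin ℓ) // s.card = i} → N) (T : Finset (Fin ℓ)) : N :=
  if h : T.card = i then f ⟨T, h⟩ else 0

theorem s8K_res (i : ℕ) (g : Finset (Fin ℓ) → N) (T : {s : Finset (Fin ℓ) // s.card = i + 1}) :
    s8K x N i (fun T => g T.1) T = s8D x g T.1 := by
  show ∑ t ∈ T.1.attach, _ = _
  rw [s8D, ← Finset.sum_attach T.1]; rfl

theorem s8ext_res {i : ℕ} (f : {s : Finset (Fin ℓ) // s.card = i} → N) :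
    (fun T : {s : Finset (Fin ℓ) // s.card = i} => s8ext f T.1) = f := by
  funext T; simp [s8ext, T.2]

theorem s8D_ext {i : ℕ} (f : {s : Finset (Fin ℓ) // s.card = i} → N) :
    s8D x (s8ext f) = s8ext (s8K x N i f) := by
  funext T
  by_cases h : T.card = i + 1
  · have := s8K_res x i (s8ext f) ⟨T, h⟩
    rw [s8ext_res] at this
    simp [s8ext, h, this]
  · simp only [s8ext, h, dif_neg, not_false_iff, s8D]
    apply Finset.sum_eq_zero
    intro t ht
    have : (T.erase t).card ≠ i := by
      rw [Finset.card_erase_of_mem ht]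
      have := Finset.card_pos.2 ⟨t, ht⟩
      omega
    simp [this]

theorem s8KK (i : ℕ) (f : {s : Finset (Fin ℓ) // s.card = i} → N) :
    s8K x N (i + 1) (s8K x N i f) = 0 := by
  rw [← s8ext_res (s8K x N i f), ← s8D_ext]
  funext T
  rw [s8K_res]
  exact s8DD x _ _

/-- a partition of unity -/
def s8Unit (N : Type) [AddCommGroup N] [Module A N] : Prop :=
  ∃ v : Fin ℓ → (N →ₗ[A] N), ∀ y, ∑ j, x j • v j y = y

theorem s8_total (h : s8Unit x N) (f : Finset (Fin ℓ) → N) (hf : s8D x f = 0) :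
    ∃ g, s8D x g = f := by
  obtain ⟨v, hv⟩ := h
  refine ⟨∑ j, s8h A j (fun T => v j (f T)), ?_⟩
  have hsum : ∀ (s : Finset (Fin ℓ)) (F : Fin ℓ → Finset (Fin ℓ) → N),
      s8D x (∑ j ∈ s, F j) = ∑ j ∈ s, s8D x (F j) := by
    intro s F
    induction s using Finset.induction_on with
    | empty => funext T; simp [s8D]
    | insert a s ha ih => rw [Finset.sum_insert ha, Finset.sum_insert ha, s8D_add, ih]
  rw [hsum]
  funext T
  rw [Finset.sum_apply, ← hv (f T)]
  refine Finset.sum_congr rfl fun j _ => ?_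
  rw [← s8_car x j (fun T => v j (f T)) T]
  have : s8D x (fun T => v j (f T)) = 0 := by
    funext U
    have h1 : s8D x (fun T => v j (f T)) U = v j (s8D x f U) := by
      simp [s8D, map_sum, map_smul]
    rw [h1, hf]; simp
  rw [this]
  simp [s8h]

theorem s8K_unit (h : s8Unit x N) (n : ℕ) : s8CEx (s8K x N) n := by
  cases n with
  | zero =>
    show Function.Injective _
    rw [injective_iff_map_eq_zero]
    intro f hf
    have : s8D x (s8ext f) = 0 := by rw [s8D_ext, hf]; funext T; simp [s8ext]
    obtain ⟨g, hg⟩ := s8_total x h _ this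
    rw [← s8ext_res f, ← hg]
    funext T
    have : T.1 = ∅ := Finset.card_eq_zero.1 T.2
    simp [s8D, this]
  | succ n =>
    show Function.Exact _ _
    intro f
    constructor
    · intro hf
      have : s8D x (s8ext f) = 0 := by rw [s8D_ext, hf]; funext T; simp [s8ext]
      obtain ⟨g, hg⟩ := s8_total x h _ this
      refine ⟨fun T => g T.1, ?_⟩
      funext T
      rw [s8K_res, hg]
      exact congrFun (s8ext_res f) T
    · rintro ⟨g, rfl⟩
      exact s8KK x n g

/-- no `x`-socle -/
def s8NoSoc (N : Type) [AddCommGroup N] [Module A N] : Prop :=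
  ∀ y : N, (∀ j, x j • y = 0) → y = 0

theorem s8K_zero : s8CEx (s8K x N) 0 ↔ s8NoSoc x N := by
  show Function.Injective _ ↔ _
  have key : ∀ (f : {s : Finset (Fin ℓ) // s.card = 0} → N) (j : Fin ℓ)
     (h : ({j} : Finset (Fin ℓ)).card = 0 + 1), s8K x N 0 f ⟨{j}, h⟩ = x j • f ⟨∅, rfl⟩ := by
    intro f j h
    have := s8K_res x 0 (s8ext f) ⟨{j}, h⟩
    rw [s8ext_res] at this
    rw [this]
    simp [s8D, s8ext, s8sg, Finset.filter_singleton]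
  rw [injective_iff_map_eq_zero]
  constructor
  · intro h y hy
    have := h (fun _ => y) ?_
    · exact congrFun this ⟨∅, rfl⟩
    · funext ⟨T, hT⟩
      obtain ⟨j, rfl⟩ := Finset.card_eq_one.1 hT
      rw [key, hy]; rfl
  · intro h f hf
    have : f ⟨∅, rfl⟩ = 0 := h _ fun j => by rw [← key f j (by simp), hf]; rfl
    funext ⟨T, hT⟩
    obtain rfl : T = ∅ := Finset.card_eq_zero.1 hT
    exact this

theorem s8K_shift {F C : Type} [AddCommGroup F] [Module A F] [AddCommGroup C] [Module A C]
    (i : N →ₗ[A] F) (q : F →ₗ[A] C) (hi : Function.Injective i) (hq : Function.Surjective q)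
    (he : Function.Exact i q) (hF : ∀ n, s8CEx (s8K x F) n) (k : ℕ) :
    (∀ n < k + 1, s8CEx (s8K x N) n) ↔ ∀ n < k, s8CEx (s8K x C) n := by
  refine s8_shift (fun n => i.compLeft _) (fun n => q.compLeft _) ?_ ?_ ?_ ?_ ?_ hF k
  · intro n f; funext T
    show i (∑ t ∈ T.1.attach, _) = ∑ t ∈ T.1.attach, _
    simp [map_sum, map_smul]
  · intro n f; funext T
    show q (∑ t ∈ T.1.attach, _) = ∑ t ∈ T.1.attach, _
    simp [map_sum, map_smul]
  · intro n f g h; funext T; exact hi (congrFun h T)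
  · intro n f
    constructor
    · intro h
      choose g hg using fun T => (he (f T)).1 (congrFun h T)
      exact ⟨g, funext hg⟩
    · rintro ⟨g, rfl⟩; funext T; exact he.apply_apply_eq_zero _
  · intro n f
    choose g hg using fun T => hq (f T)
    exact ⟨g, funext hg⟩

end koszul


section extpart
variable {A : Type} [CommRing A] {ℓ : ℕ} (x : Fin ℓ → A)

theorem s8_torsion {N : Type} [AddCommGroup N] [Module A N] (h : s8NoSoc x N) (y : N)
    (hy : ∀ j, ∃ e : ℕ, x j ^ e • y = 0) : y = 0 := by
  by_contra hne
  have key : ∀ s : Finset (Fin ℓ), ∃ z : N, z ≠ 0 ∧ (∀ j ∈ s, x j • z = 0) ∧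
      ∀ j, ∃ e : ℕ, x j ^ e • z = 0 := by
    intro s
    induction s using Finset.induction_on with
    | empty => exact ⟨y, hne, by simp, hy⟩
    | insert a s ha ih =>
      obtain ⟨z, hz, h1, h2⟩ := ih
      classical
      let e := Nat.find (h2 a)
      have he : x a ^ e • z = 0 := Nat.find_spec (h2 a)
      have he0 : e ≠ 0 := by
        intro h0; rw [h0] at he; simp at he; exact hz he
      obtain ⟨m, hm⟩ := Nat.exists_eq_succ_of_ne_zero he0
      refine ⟨x a ^ m • z, Nat.find_min (h2 a) (show m < e by omega), ?_, ?_⟩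
      · intro j hj
        rcases Finset.mem_insert.1 hj with rfl | hj
        · rw [smul_smul, ← pow_succ', ← Nat.succ_eq_add_one, ← hm, he]
        · rw [smul_comm, h1 j hj, smul_zero]
      · intro j
        obtain ⟨e, he⟩ := h2 j
        exact ⟨e, by rw [smul_comm, he, smul_zero]⟩
  obtain ⟨z, hz, h1, -⟩ := key Finset.univ
  exact hz (h z fun j => h1 j (Finset.mem_univ j))

theorem s8_embed {N : Type} [AddCommGroup N] [Module A N] (h : s8NoSoc x N) :
    ∃ (F : Type) (_ : AddCommGroup F) (_ : Module A F) (i : N →ₗ[A] F),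
      Function.Injective i ∧ s8Unit x F := by
  refine ⟨∀ j, LocalizedModule (Submonoid.powers (x j)) N, inferInstance, inferInstance,
    LinearMap.pi fun j => LocalizedModule.mkLinearMap _ _, ?_, ?_⟩
  · rw [injective_iff_map_eq_zero]
    intro y hy
    apply s8_torsion x h
    intro j
    have := congrFun hy j
    simp only [LinearMap.pi_apply, Pi.zero_apply] at this
    rw [IsLocalizedModule.eq_zero_iff (Submonoid.powers (x j))] at this
    obtain ⟨⟨c, e, rfl⟩, hc⟩ := this
    exact ⟨e, hc⟩
  · refine ⟨fun j => LinearMap.single A _ j ∘ₗ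
      LocalizedModule.divBy (⟨x j, Submonoid.mem_powers _⟩ : Submonoid.powers (x j)) ∘ₗ
      LinearMap.proj j, ?_⟩
    intro y
    funext j
    rw [Finset.sum_apply, Finset.sum_eq_single j]
    · simp
      have := LocalizedModule.mul_by_divBy (⟨x j, Submonoid.mem_powers _⟩ : Submonoid.powers (x j)) (y j)
      exact this
    · intro b _ hb
      simp [Pi.single_eq_of_ne hb.symm]
    · simp

variable {P : ℕ → Type} [∀ n, AddCommGroup (P n)] [∀ n, Module A (P n)]
  (d : ∀ n, P (n + 1) →ₗ[A] P n) (N : Type) [AddCommGroup N] [Module A N]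

def s8H (n : ℕ) : (P n →ₗ[A] N) →ₗ[A] (P (n + 1) →ₗ[A] N) := LinearMap.lcomp A N (d n)

theorem s8H_apply (n : ℕ) (f : P n →ₗ[A] N) : s8H d N n f = f ∘ₗ d n := rfl

/-- the resolution data needed -/
structure s8Res : Prop where
  proj : ∀ n, Module.Projective A (P n)
  dd : ∀ n p, d n (d (n + 1) p) = 0
  hom0 : ∀ j, ∃ h : P 0 →ₗ[A] P 1, ∀ p, x j • p = d 0 (h p)
  homS : ∀ j n, ∃ (h : P n →ₗ[A] P (n + 1)) (h' : P (n + 1) →ₗ[A] P (n + 2)),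
    ∀ p, x j • p = d (n + 1) (h' p) + h (d n p)
  soc : ∀ (N : Type) [AddCommGroup N] [Module A N] (y : N), (∀ j, x j • y = 0) → y ≠ 0 →
    ∃ f : P 0 →ₗ[A] N, f ∘ₗ d 0 = 0 ∧ f ≠ 0

variable {x d}
theorem s8H_zero (hP : s8Res x d) : s8CEx (s8H d N) 0 ↔ s8NoSoc x N := by
  show Function.Injective _ ↔ _
  rw [injective_iff_map_eq_zero]
  constructor
  · intro h y hy
    by_contra hne
    obtain ⟨f, hf, hf0⟩ := hP.soc N y hy hne
    exact hf0 (h f hf)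
  · intro h f hf
    ext p
    apply h
    intro j
    obtain ⟨u, hu⟩ := hP.hom0 j
    rw [← map_smul, hu]
    exact LinearMap.congr_fun hf (u p)

theorem s8H_unit (hP : s8Res x d) (h : s8Unit x N) (n : ℕ) : s8CEx (s8H d N) n := by
  obtain ⟨v, hv⟩ := h
  cases n with
  | zero =>
    rw [s8H_zero N hP]
    intro y hy
    rw [← hv y]
    exact Finset.sum_eq_zero fun j _ => by rw [← map_smul, hy, map_zero]
  | succ n =>
    intro f
    constructor
    · intro hf
      choose u u' hu using fun j => hP.homS j n
      refine ⟨∑ j, v j ∘ₗ f ∘ₗ u j, ?_⟩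
      ext p
      rw [s8H_apply, LinearMap.comp_apply, LinearMap.sum_apply, ← hv (f p)]
      refine Finset.sum_congr rfl fun j _ => ?_
      rw [← map_smul, ← map_smul, hu, map_add]
      have : f (d (n + 1) (u' j p)) = 0 := LinearMap.congr_fun hf (u' j p)
      rw [this, zero_add]; rfl
    · rintro ⟨g, rfl⟩
      ext p
      simp [s8H_apply, hP.dd]

theorem s8H_shift (hP : s8Res x d) {N F C : Type} [AddCommGroup N] [Module A N] [AddCommGroup F]
    [Module A F] [AddCommGroup C] [Module A C]
    (i : N →ₗ[A] F) (q : F →ₗ[A] C) (hi : Function.Injective i) (hq : Function.Surjective q)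
    (he : Function.Exact i q) (hF : ∀ n, s8CEx (s8H d F) n) (k : ℕ) :
    (∀ n < k + 1, s8CEx (s8H d N) n) ↔ ∀ n < k, s8CEx (s8H d C) n := by
  refine s8_shift (fun n => LinearMap.compRight A i) (fun n => LinearMap.compRight A q)
    ?_ ?_ ?_ ?_ ?_ hF k
  · intro n f; rfl
  · intro n f; rfl
  · intro n f g h
    ext p
    exact hi (LinearMap.congr_fun h p)
  · intro n f
    constructor
    · intro h
      have hr : ∀ p, f p ∈ LinearMap.range i := fun p => (he (f p)).1 (LinearMap.congr_fun h p)
      refine ⟨(LinearEquiv.ofInjective i hi).symm.toLinearMap ∘ₗ f.codRestrict _ hr, ?_⟩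
      ext p
      have := LinearEquiv.apply_symm_apply (LinearEquiv.ofInjective i hi) (f.codRestrict _ hr p)
      exact congrArg Subtype.val this
    · rintro ⟨g, rfl⟩; ext p; exact he.apply_apply_eq_zero _
  · intro n f
    haveI := hP.proj n
    obtain ⟨g, hg⟩ := Module.projective_lifting_property q f hq
    exact ⟨g, hg⟩

theorem s8_compare (hP : s8Res x d) (k : ℕ) : ∀ (N : Type) [AddCommGroup N] [Module A N],
    (∀ n < k, s8CEx (s8H d N) n) ↔ ∀ n < k, s8CEx (s8K x N) n := by
  induction k with
  | zero => intro N _ _; simp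
  | succ k ih =>
    intro N _ _
    by_cases h : s8NoSoc x N
    · obtain ⟨F, _, _, i, hi, hu⟩ := s8_embed x h
      rw [s8H_shift hP i (LinearMap.range i).mkQ hi (Submodule.mkQ_surjective _)
        (LinearMap.exact_map_mkQ_range i) (s8H_unit F hP hu) k,
        s8K_shift x i (LinearMap.range i).mkQ hi (Submodule.mkQ_surjective _)
        (LinearMap.exact_map_mkQ_range i) (s8K_unit x hu) k]
      exact ih _
    · constructor
      · intro h'; exact absurd ((s8H_zero N hP).1 (h' 0 (by omega))) h
      · intro h'; exact absurd ((s8K_zero x).1 (h' 0 (by omega))) h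

theorem s8H_inj (hP : s8Res x d) (hex : ∀ n, Function.Exact (d (n + 1)) (d n))
    (hN : Module.Injective A N) (hs : s8NoSoc x N) (n : ℕ) :
    s8CEx (s8H d N) n := by
  cases n with
  | zero => exact (s8H_zero N hP).2 hs
  | succ n =>
    intro f
    constructor
    · intro hf
      have hk : LinearMap.ker (d n) ≤ LinearMap.ker f := by
        intro p hp
        obtain ⟨r, rfl⟩ := (hex n p).1 hp
        exact LinearMap.congr_fun hf r
      let g0 := (LinearMap.ker (d n)).liftQ f hk
      let m0 := (LinearMap.ker (d n)).liftQ (d n) le_rfl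
      have hm0 : Function.Injective m0 := by
        rw [← LinearMap.ker_eq_bot]; exact Submodule.ker_liftQ_eq_bot _ _ _ le_rfl
      obtain ⟨g, hg⟩ := hN.out m0 hm0 g0
      refine ⟨g, ?_⟩
      ext p
      exact hg (Submodule.Quotient.mk p)
    · rintro ⟨g, rfl⟩
      ext p
      simp [s8H_apply, hP.dd]

end extpart


section extglue
variable {A : Type} [CommRing A] 

theorem s8_extV (X : ModuleCat.{0} A) (PR : ProjectiveResolution X) (N : Type) [AddCommGroup N]
    [Module A N] (n : ℕ) :
    extV A X (ModuleCat.of A N) n ↔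
      s8CEx (s8H (P := fun n => PR.complex.X n) (fun n => (PR.complex.d (n + 1) n).hom) N) n := by
  unfold extV
  rw [← ModuleCat.isZero_iff_subsingleton, (PR.isoExt n (ModuleCat.of A N)).isZero_iff, ← HomologicalComplex.exactAt_iff_isZero_homology]
  cases n with
  | zero =>
    rw [HomologicalComplex.exactAt_iff' _ 0 0 1 (by simp) (by simp), ShortComplex.moduleCat_exact_iff]
    show _ ↔ Function.Injective _
    rw [injective_iff_map_eq_zero]
    constructor
    · intro h f hf
      obtain ⟨g, hg⟩ := h (ModuleCat.ofHom f) (by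
        show PR.complex.d 1 0 ≫ ModuleCat.ofHom f = 0
        ext p; exact LinearMap.congr_fun hf p)
      replace hg : PR.complex.d 0 0 ≫ (show PR.complex.X 0 ⟶ ModuleCat.of A N from g) = ModuleCat.ofHom f := hg
      rw [PR.complex.shape 0 0 (by simp), Limits.zero_comp] at hg
      exact (congrArg ModuleCat.Hom.hom hg).symm
    · intro h f hf
      replace hf : PR.complex.d 1 0 ≫ (show PR.complex.X 0 ⟶ ModuleCat.of A N from f) = 0 := hf
      have := h (ModuleCat.Hom.hom (show PR.complex.X 0 ⟶ ModuleCat.of A N from f))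
        (congrArg ModuleCat.Hom.hom hf)
      refine ⟨0, ?_⟩
      rw [map_zero]
      exact (ModuleCat.hom_ext this).symm
  | succ n =>
    rw [HomologicalComplex.exactAt_iff' _ n (n + 1) (n + 2) (by simp) (by simp),
      ShortComplex.moduleCat_exact_iff]
    show _ ↔ Function.Exact _ _
    constructor
    · intro h f
      constructor
      · intro hf
        obtain ⟨g, hg⟩ := h (ModuleCat.ofHom f) (by
          show PR.complex.d (n + 2) (n + 1) ≫ ModuleCat.ofHom f = 0
          ext p; exact LinearMap.congr_fun hf p)
        replace hg : PR.complex.d (n + 1) n ≫ (show PR.complex.X n ⟶ ModuleCat.of A N from g) = ModuleCat.ofHom f := hg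
        exact ⟨_, congrArg ModuleCat.Hom.hom hg⟩
      · rintro ⟨g, rfl⟩
        have := PR.complex.d_comp_d (n + 2) (n + 1) n
        ext p
        have := LinearMap.congr_fun (congrArg ModuleCat.Hom.hom this) p
        show g _ = 0
        exact (congrArg g this).trans (map_zero g)
    · intro h f hf
      replace hf : PR.complex.d (n + 2) (n + 1) ≫ (show PR.complex.X (n + 1) ⟶ ModuleCat.of A N from f) = 0 := hf
      obtain ⟨g, hg⟩ := (h (ModuleCat.Hom.hom (show PR.complex.X (n + 1) ⟶ ModuleCat.of A N from f))).1
        (congrArg ModuleCat.Hom.hom hf)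
      exact ⟨ModuleCat.ofHom g, ModuleCat.hom_ext hg⟩

theorem s8_pr_exact {X : ModuleCat.{0} A} (PR : ProjectiveResolution X) (n : ℕ) :
    Function.Exact (PR.complex.d (n + 2) (n + 1)).hom (PR.complex.d (n + 1) n).hom :=
  (ShortComplex.ShortExact.moduleCat_exact_iff_function_exact _).1 (PR.exact_succ n)

theorem s8_res [IsLocalRing A] {ℓ : ℕ} (x : Fin ℓ → A)
    (hx : Ideal.span (Set.range x) = IsLocalRing.maximalIdeal A)
    (PR : ProjectiveResolution (ModuleCat.of A (IsLocalRing.ResidueField A))) :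
    s8Res (P := fun n => PR.complex.X n) x (fun n => (PR.complex.d (n + 1) n).hom) := by
  have hxm : ∀ j, x j ∈ IsLocalRing.maximalIdeal A := fun j => by
    rw [← hx]; exact Ideal.subset_span ⟨j, rfl⟩
  have hk : ∀ (j : Fin ℓ) (z : IsLocalRing.ResidueField A), x j • z = 0 := by
    intro j z
    rw [Algebra.smul_def]
    have : algebraMap A (IsLocalRing.ResidueField A) (x j) = 0 :=
      (IsLocalRing.residue_eq_zero_iff _).2 (hxm j)
    rw [this, zero_mul]
  have hH : ∀ j, ∃ H : Homotopy (x j • 𝟙 PR.complex) 0, True := by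
    intro j
    refine ⟨ProjectiveResolution.liftHomotopyZero (P := PR) (Q := PR) _ ?_, trivial⟩
    apply HomologicalComplex.to_single_hom_ext
    ext p
    have h1 : ((x j • 𝟙 PR.complex) ≫ PR.π).f 0 = x j • PR.π.f 0 := by
      simp
    rw [h1]
    exact hk j ((PR.π.f 0).hom p)
  refine ⟨?_, ?_, ?_, ?_, ?_⟩
  · intro n
    exact (IsProjective.iff_projective _).2 (PR.projective n)
  · intro n p
    exact LinearMap.congr_fun (congrArg ModuleCat.Hom.hom (PR.complex.d_comp_d (n + 2) (n + 1) n)) p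
  · intro j
    obtain ⟨H, -⟩ := hH j
    refine ⟨(H.hom 0 1).hom, fun p => ?_⟩
    have := H.comm 0
    rw [Homotopy.dNext_zero_chainComplex, Homotopy.prevD_chainComplex] at this
    have := LinearMap.congr_fun (congrArg ModuleCat.Hom.hom this) p
    simpa using! this
  · intro j n
    obtain ⟨H, -⟩ := hH j
    refine ⟨(H.hom n (n + 1)).hom, (H.hom (n + 1) (n + 2)).hom, fun p => ?_⟩
    have := H.comm (n + 1)
    rw [Homotopy.dNext_succ_chainComplex, Homotopy.prevD_chainComplex] at this
    have := LinearMap.congr_fun (congrArg ModuleCat.Hom.hom this) p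
    refine Eq.trans ?_ (add_comm _ _)
    simpa using! this
  · intro N _ _ y hy hne
    have hy' : ∀ a ∈ IsLocalRing.maximalIdeal A, a • y = 0 := by
      intro a ha
      rw [← hx] at ha
      have : Ideal.span (Set.range x) ≤ LinearMap.ker (LinearMap.toSpanSingleton A N y) := by
        rw [Ideal.span_le]; rintro _ ⟨j, rfl⟩; simpa using hy j
      simpa using this ha
    let φ : IsLocalRing.ResidueField A →ₗ[A] N :=
      Submodule.liftQ (IsLocalRing.maximalIdeal A) (LinearMap.toSpanSingleton A N y)
        (fun a ha => by simpa using hy' a ha)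
    let π0 : PR.complex.X 0 →ₗ[A] IsLocalRing.ResidueField A := (PR.π.f 0).hom
    have hπ : Function.Surjective π0 := (ModuleCat.epi_iff_surjective _).1 (inferInstanceAs (Epi (PR.π.f 0)))
    refine ⟨φ ∘ₗ π0, ?_, ?_⟩
    · ext p
      have : π0 ((PR.complex.d 1 0).hom p) = 0 :=
        LinearMap.congr_fun (congrArg ModuleCat.Hom.hom PR.complex_d_comp_π_f_zero) p
      show φ (π0 ((PR.complex.d 1 0).hom p)) = 0
      rw [this, map_zero]
    · intro h0
      obtain ⟨p, hp⟩ := hπ (Submodule.Quotient.mk (1 : A))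
      have := LinearMap.congr_fun h0 p
      rw [LinearMap.comp_apply, hp] at this
      apply hne
      have h2 : φ (Submodule.Quotient.mk (1 : A)) = (1 : A) • y := rfl
      rw [h2, one_smul] at this
      exact this

theorem s8_rdepth [IsLocalRing A] (N : Type) [AddCommGroup N] [Module A N] (k : ℕ) :
    (k : ℕ∞) ≤ rdepth A N ↔ ∀ n < k,
      extV A (ModuleCat.of A (IsLocalRing.ResidueField A)) (ModuleCat.of A N) n := by
  unfold rdepth
  rw [le_sInf_iff]
  constructor
  · intro h n hn
    by_contra hc
    have := h n ⟨n, rfl, hc⟩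
    exact absurd (Nat.cast_le.1 this) (by omega)
  · rintro h _ ⟨i, rfl, hi⟩
    by_contra hc
    exact hi (h i (by simpa using hc))
end extglue


section part2
variable {R : Type} [CommRing R] [IsNoetherianRing R] (p : PrimeSpectrum R)

theorem s8_ass {ℓ : ℕ} (x : Fin ℓ → Localization.AtPrime p.asIdeal)
    (hx : Ideal.span (Set.range x) = IsLocalRing.maximalIdeal (Localization.AtPrime p.asIdeal))
    (C : Type) [AddCommGroup C] [Module R C] :
    p.asIdeal ∉ associatedPrimes R C ↔ s8NoSoc x (LocalizedModule p.asIdeal.primeCompl C) := by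
  have hA : IsNoetherianRing (Localization.AtPrime p.asIdeal) :=
    IsLocalization.isNoetherianRing p.asIdeal.primeCompl _ inferInstance
  have h1 : p.asIdeal ∈ associatedPrimes R C ↔
      IsLocalRing.maximalIdeal (Localization.AtPrime p.asIdeal) ∈
      associatedPrimes (Localization.AtPrime p.asIdeal) (LocalizedModule p.asIdeal.primeCompl C) := by
    rw [← Module.associatedPrimes.preimage_comap_associatedPrimes_eq_associatedPrimes_of_isLocalizedModule
      p.asIdeal.primeCompl (Localization.AtPrime p.asIdeal)
      (LocalizedModule.mkLinearMap p.asIdeal.primeCompl C)]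
    rw [Set.mem_preimage]
    have := Localization.AtPrime.under_maximalIdeal (I := p.asIdeal)
    rw [Ideal.under_def] at this
    rw [this]
  rw [h1, AssociatedPrimes.mem_iff, isAssociatedPrime_iff]
  constructor
  · intro h y hy
    by_contra hne
    refine h ⟨inferInstance, y, ?_⟩
    symm
    refine (IsLocalRing.maximalIdeal.isMaximal _).eq_of_le ?_ ?_ |>.symm
    · intro htop
      have : (1 : Localization.AtPrime p.asIdeal) ∈ (⊥ : Submodule (Localization.AtPrime p.asIdeal) _).colon {y} := by
        rw [htop]; trivial
      rw [Submodule.mem_colon_singleton, one_smul] at this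
      exact hne this
    · rw [← hx, Ideal.span_le]
      rintro _ ⟨j, rfl⟩
      simp only [SetLike.mem_coe, Submodule.mem_colon_singleton, Submodule.mem_bot]
      exact hy j
  · rintro h ⟨-, y, hy⟩
    have : y = 0 := h y fun j => by
      have : x j ∈ IsLocalRing.maximalIdeal (Localization.AtPrime p.asIdeal) := by
        rw [← hx]; exact Ideal.subset_span ⟨j, rfl⟩
      rw [hy] at this
      simpa [Submodule.mem_colon_singleton] using this
    have h1 : (1 : Localization.AtPrime p.asIdeal) ∈ IsLocalRing.maximalIdeal (Localization.AtPrime p.asIdeal) := by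
      rw [hy, Submodule.mem_colon_singleton, this]; simp
    exact (Ideal.ne_top_iff_one _).1 (IsLocalRing.maximalIdeal.isMaximal _).ne_top h1

theorem s8_ass_env {C E : Type} [AddCommGroup C] [Module R C] [AddCommGroup E] [Module R E]
    (f : C →ₗ[R] E) (hf : IsInjectiveEnvelope R f) (h : p.asIdeal ∉ associatedPrimes R C) :
    p.asIdeal ∉ associatedPrimes R E := by
  intro hE
  apply h
  rw [AssociatedPrimes.mem_iff, isAssociatedPrime_iff] at hE ⊢
  obtain ⟨hp, e, he⟩ := hE
  refine ⟨hp, ?_⟩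
  have he' : ∀ r, r ∈ p.asIdeal ↔ r • e = 0 := by
    intro r; rw [he, Submodule.mem_colon_singleton]; rfl
  have hne : e ≠ 0 := by
    rintro rfl
    exact (Ideal.ne_top_iff_one _).1 hp.ne_top ((he' 1).2 (by simp))
  have := hf.2.2 (Submodule.span R {e}) (by simpa using hne)
  obtain ⟨z, hz, hz0⟩ := Submodule.exists_mem_ne_zero_of_ne_bot this
  obtain ⟨h1, c, rfl⟩ := hz
  obtain ⟨r, hr⟩ := Submodule.mem_span_singleton.1 h1
  refine ⟨c, ?_⟩
  ext a
  rw [Submodule.mem_colon_singleton, Submodule.mem_bot, ← map_eq_zero_iff f hf.2.1, map_smul, ← hr,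
    smul_smul, ← he', hp.mul_mem_iff_mem_or_mem]
  have : r ∉ p.asIdeal := by
    rw [he', hr]; exact hz0
  tauto

theorem s8_ass_sum (k : ℕ) (C : Fin k → Type) [∀ i, AddCommGroup (C i)] [∀ i, Module R (C i)] :
    p.asIdeal ∉ associatedPrimes R (DirectSum (Fin k) C) ↔
      ∀ i, p.asIdeal ∉ associatedPrimes R (C i) := by
  rw [← not_iff_not]
  push Not
  constructor
  · intro h
    rw [AssociatedPrimes.mem_iff, isAssociatedPrime_iff] at h
    obtain ⟨hp, f, hf⟩ := h
    have hf' : ∀ r, r ∈ p.asIdeal ↔ ∀ i, r • f i = 0 := by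
      intro r
      rw [hf, Submodule.mem_colon_singleton, Submodule.mem_bot]
      constructor
      · intro h i
        rw [← DirectSum.smul_apply, h]; rfl
      · intro h
        ext i
        rw [DirectSum.smul_apply, h]; rfl
    by_contra! hc
    have : ∀ i, ∃ r, r ∉ p.asIdeal ∧ r • f i = 0 := by
      intro i
      by_contra! hi
      apply hc i
      rw [AssociatedPrimes.mem_iff, isAssociatedPrime_iff]
      refine ⟨hp, f i, ?_⟩
      ext r
      rw [Submodule.mem_colon_singleton, Submodule.mem_bot]
      refine ⟨fun hr => (hf' r).1 hr i, fun hr => ?_⟩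
      by_contra hrp
      exact hi r hrp hr
    choose r hr hr0 using this
    have h1 : ∏ i, r i ∈ p.asIdeal := by
      rw [hf']
      intro i
      rw [← Finset.prod_erase_mul _ _ (Finset.mem_univ i), mul_smul, hr0, smul_zero]
    obtain ⟨i, -, hi⟩ := (hp.prod_mem_iff).1 h1
    exact hr i hi
  · rintro ⟨i, hi⟩
    exact IsAssociatedPrime.map_of_injective (DirectSum.lof R (Fin k) C i) hi (DirectSum.of_injective i)

theorem s8_part2 {ℓ : ℕ} (x : Fin ℓ → Localization.AtPrime p.asIdeal)
    (hx : Ideal.span (Set.range x) = IsLocalRing.maximalIdeal (Localization.AtPrime p.asIdeal))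
    (M : Type) [AddCommGroup M] [Module R M] (seq : CosyzygySeq R M) 
    {P : ℕ → Type} [∀ n, AddCommGroup (P n)] [∀ n, Module (Localization.AtPrime p.asIdeal) (P n)]
    {d : ∀ n, P (n + 1) →ₗ[Localization.AtPrime p.asIdeal] P n} (hP : s8Res x d)
    (hex : ∀ n, Function.Exact (d (n + 1)) (d n)) (k : ℕ) : ∀ n,
    (∀ i < k, s8CEx (s8H d (LocalizedModule p.asIdeal.primeCompl (seq.C n))) i) ↔
      ∀ i < k, p.asIdeal ∉ associatedPrimes R (seq.C (n + i)) := by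
  induction k with
  | zero => simp
  | succ k ih =>
    intro n
    by_cases h : p.asIdeal ∈ associatedPrimes R (seq.C n)
    · constructor
      · intro h'
        have := (s8H_zero _ hP).1 (h' 0 (by omega))
        rw [← s8_ass p x hx] at this
        exact absurd h this
      · intro h'
        exact absurd h (h' 0 (by omega))
    · have hE := s8_ass_env p _ (seq.env n) h
      rw [s8_ass p x hx] at hE
      let S := p.asIdeal.primeCompl
      have hinjE : Module.Injective (Localization.AtPrime p.asIdeal)
          (LocalizedModule p.asIdeal.primeCompl (seq.E n)) := by
        have := (seq.env n).1
        exact Module.injective_of_isLocalizedModule p.asIdeal.primeCompl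
          (LocalizedModule.mkLinearMap p.asIdeal.primeCompl (seq.E n))
      let q : seq.E n →ₗ[R] seq.C (n + 1) :=
        (seq.isoSucc n).symm.toLinearMap ∘ₗ (LinearMap.range (seq.emb n)).mkQ
      have hq : Function.Surjective q :=
        (seq.isoSucc n).symm.surjective.comp (Submodule.mkQ_surjective _)
      have hexq : Function.Exact (seq.emb n) q := by
        intro y
        rw [← LinearMap.exact_map_mkQ_range (seq.emb n) y]
        show (seq.isoSucc n).symm _ = 0 ↔ _
        simp
      rw [s8H_shift hP (LocalizedModule.map S (seq.emb n)) (LocalizedModule.map S q)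
        (LocalizedModule.map_injective S _ (seq.env n).2.1)
        (LocalizedModule.map_surjective S _ hq)
        (LocalizedModule.map_exact S _ _ hexq) (s8H_inj _ hP hex hinjE hE) k, ih (n + 1)]
      constructor
      · intro h' i hi
        cases i with
        | zero => exact h
        | succ i => 
          have := h' i (by omega)
          rwa [show n + 1 + i = n + (i + 1) by omega] at this
      · intro h' i hi
        have := h' (i + 1) (by omega)
        rwa [show n + (i + 1) = n + 1 + i by omega] at this

theorem s8_ass_loc_equiv {A : Type} [CommRing A] {P : ℕ → Type} [∀ n, AddCommGroup (P n)]
    [∀ n, Module A (P n)]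
    {d : ∀ n, P (n + 1) →ₗ[A] P n} {N N' : Type} [AddCommGroup N] [Module A N] [AddCommGroup N']
    [Module A N'] (e : N ≃ₗ[A] N') (n : ℕ) (h : s8CEx (s8H d N) n) : s8CEx (s8H d N') n := by
  cases n with
  | zero =>
    intro f g hfg
    have := @h (e.symm.toLinearMap ∘ₗ f) (e.symm.toLinearMap ∘ₗ g)
      (congrArg (fun u => e.symm.toLinearMap ∘ₗ u) hfg)
    ext y
    exact e.symm.injective (LinearMap.congr_fun this y)
  | succ n =>
    intro f
    constructor
    · intro hf
      obtain ⟨g, hg⟩ := (h (e.symm.toLinearMap ∘ₗ f)).1 (by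
        ext y; exact (congrArg e.symm (LinearMap.congr_fun hf y)).trans (map_zero _))
      refine ⟨e.toLinearMap ∘ₗ g, ?_⟩
      ext y
      exact (congrArg e (LinearMap.congr_fun hg y)).trans (e.apply_symm_apply _)
    · rintro ⟨g, rfl⟩
      have := (h (s8H d N n (e.symm.toLinearMap ∘ₗ g))).2 ⟨_, rfl⟩
      ext y
      exact e.symm.injective ((LinearMap.congr_fun this y).trans (map_zero _).symm)
end part2


section torpart
variable {R : Type} [CommRing R]

/-- Exactness of `X ⊗ Q` in degree `n + 1`. -/
def s8T {Q : ℕ → Type} [∀ n, AddCommGroup (Q n)] [∀ n, Module R (Q n)]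
    (d : ∀ n, Q (n + 1) →ₗ[R] Q n) (X : Type) [AddCommGroup X] [Module R X] (n : ℕ) : Prop :=
  Function.Exact (LinearMap.lTensor X (d (n + 1))) (LinearMap.lTensor X (d n))

theorem s8_torV (X : Type) [AddCommGroup X] [Module R X] {M : ModuleCat.{0} R}
    (PR : ProjectiveResolution M) (n : ℕ) :
    torV R (ModuleCat.of R X) M (n + 1) ↔
      s8T (Q := fun n => PR.complex.X n) (fun n => (PR.complex.d (n + 1) n).hom) X n := by
  unfold torV
  rw [← ModuleCat.isZero_iff_subsingleton]
  have e := PR.isoLeftDerivedObj ((MonoidalCategory.tensoringLeft (ModuleCat.{0} R)).obj (ModuleCat.of R X)) (n + 1)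
  have : Limits.IsZero (((Tor (ModuleCat.{0} R) (n + 1)).obj (ModuleCat.of R X)).obj M) ↔ _ := e.isZero_iff
  rw [this]
  erw [← HomologicalComplex.exactAt_iff_isZero_homology]
  rw [HomologicalComplex.exactAt_iff' _ (n + 2) (n + 1) n (by simp) (by simp),
    ShortComplex.ShortExact.moduleCat_exact_iff_function_exact]
  rfl

variable {Q : ℕ → Type} [∀ n, AddCommGroup (Q n)] [∀ n, Module R (Q n)]
    (d : ∀ n, Q (n + 1) →ₗ[R] Q n)

theorem s8T_equiv {X Y : Type} [AddCommGroup X] [Module R X] [AddCommGroup Y] [Module R Y]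
    (e : X ≃ₗ[R] Y) (n : ℕ) (h : s8T d X n) : s8T d Y n := by
  unfold s8T at *
  exact Function.Exact.of_ladder_linearEquiv_of_exact (e₁ := e.rTensor (Q (n + 2)))
    (e₂ := e.rTensor (Q (n + 1))) (e₃ := e.rTensor (Q n))
    (by ext; simp) (by ext; simp) h

theorem s8T_flat (hd : ∀ n, Function.Exact (d (n + 1)) (d n)) (F : Type) [AddCommGroup F]
    [Module R F] [Module.Flat R F] (n : ℕ) : s8T d F n :=
  Module.Flat.lTensor_exact F (hd n)

theorem s8_comm {X Y P P' : Type} [AddCommGroup X] [Module R X] [AddCommGroup Y] [Module R Y]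
    [AddCommGroup P] [Module R P] [AddCommGroup P'] [Module R P'] (f : X →ₗ[R] Y) (g : P →ₗ[R] P')
    (z : TensorProduct R X P) :
    f.rTensor P' (g.lTensor X z) = g.lTensor Y (f.rTensor P z) := by
  rw [← LinearMap.comp_apply, ← LinearMap.comp_apply, LinearMap.rTensor_comp_lTensor,
    LinearMap.lTensor_comp_rTensor]

section ses
variable [∀ n, Module.Flat R (Q n)]
  (hd : ∀ n, Function.Exact (d (n + 1)) (d n))
  {X F Y : Type} [AddCommGroup X] [Module R X] [AddCommGroup F] [Module R F] [Module.Flat R F]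
  [AddCommGroup Y] [Module R Y] {i : X →ₗ[R] F} {q : F →ₗ[R] Y}
  (hi : Function.Injective i) (hiq : Function.Exact i q) (hq : Function.Surjective q)
include hd hi hiq hq

theorem s8T_shift (n : ℕ) : s8T d Y (n + 1) ↔ s8T d X n := by
  unfold s8T
  exact s8_chase (i1 := i.rTensor (Q (n + 2))) (i2 := i.rTensor (Q (n + 1)))
    (i3 := i.rTensor (Q n)) (q0 := q.rTensor (Q (n + 3))) (q1 := q.rTensor (Q (n + 2)))
    (q2 := q.rTensor (Q (n + 1)))
    (f0 := (d (n + 2)).lTensor F) (f1 := (d (n + 1)).lTensor F) (f2 := (d n).lTensor F)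
    (fun z => s8_comm _ _ z) (fun z => s8_comm _ _ z) (fun z => s8_comm _ _ z)
    (fun z => s8_comm _ _ z)
    (Module.Flat.rTensor_preserves_injective_linearMap _ hi)
    (Module.Flat.rTensor_preserves_injective_linearMap _ hi)
    (rTensor_exact _ hiq hq) (rTensor_exact _ hiq hq)
    (LinearMap.rTensor_surjective _ hq) (LinearMap.rTensor_surjective _ hq)
    (Module.Flat.lTensor_exact F (hd _)) (Module.Flat.lTensor_exact F (hd _))

theorem s8T_zero {M : Type} [AddCommGroup M] [Module R M] (ε : Q 0 →ₗ[R] M)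
    (hε : Function.Surjective ε) (hdε : Function.Exact (d 0) ε) :
    s8T d Y 0 ↔ Function.Injective (i.rTensor M) := by
  unfold s8T
  exact s8_chase0 (a1 := (d 0).lTensor X) (a0 := ε.lTensor X)
    (f2 := (d 1).lTensor F) (f1 := (d 0).lTensor F) (f0 := ε.lTensor F)
    (i0 := i.rTensor (Q 0)) (i1 := i.rTensor (Q 1))
    (q2 := q.rTensor (Q 2)) (q1 := q.rTensor (Q 1)) (q0 := q.rTensor (Q 0))
    (fun z => s8_comm _ _ z) (fun z => s8_comm _ _ z) (fun z => s8_comm _ _ z)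
    (fun z => s8_comm _ _ z)
    (Module.Flat.rTensor_preserves_injective_linearMap _ hi)
    (rTensor_exact _ hiq hq) (rTensor_exact _ hiq hq)
    (LinearMap.rTensor_surjective _ hq) (LinearMap.rTensor_surjective _ hq)
    (LinearMap.lTensor_surjective _ hε) (lTensor_exact X hdε hε)
    (Module.Flat.lTensor_exact F (hd _)) (Module.Flat.lTensor_exact F hdε)

end ses
end torpart


section torkos
variable {R : Type} [CommRing R] {A : Type} [CommRing A] [Algebra R A]
  {M N : Type} [AddCommGroup M] [Module R M] [AddCommGroup N] [Module R N] [Module A N]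
  [IsScalarTower R A N] {g : M →ₗ[R] N} {ℓ : ℕ}

def s8Th (hg : IsBaseChange A g) (ι : Type) [Fintype ι] [DecidableEq ι] :
    TensorProduct R (ι → A) M ≃ₗ[R] (ι → N) :=
  TensorProduct.piLeft R M (fun _ : ι => A) ≪≫ₗ
    LinearEquiv.piCongrRight (fun _ => hg.equiv.restrictScalars R)

theorem s8Th_tmul (hg : IsBaseChange A g) (ι : Type) [Fintype ι] [DecidableEq ι] (f : ι → A)
    (m : M) (s : ι) : s8Th hg ι (f ⊗ₜ[R] m) s = f s • g m := by
  simp [s8Th, hg.equiv_tmul]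

variable (x : Fin ℓ → A)

theorem s8Th_comm (hg : IsBaseChange A g) (i : ℕ) :
    ((s8K x N i).restrictScalars R) ∘ₗ (s8Th hg {s : Finset (Fin ℓ) // s.card = i}).toLinearMap =
      (s8Th hg {s : Finset (Fin ℓ) // s.card = i + 1}).toLinearMap ∘ₗ
        ((kosD A x i).restrictScalars R).rTensor M := by
  apply TensorProduct.ext'
  intro f m
  funext T
  show s8K x N i (s8Th hg _ (f ⊗ₜ[R] m)) T = s8Th hg _ (kosD A x i f ⊗ₜ[R] m) T
  rw [s8Th_tmul]
  simp only [s8K, kosD, LinearMap.coe_mk, AddHom.coe_mk, s8Th_tmul, Finset.sum_smul, smul_smul,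
    smul_eq_mul]

theorem s8_inj_lift {R U V S W : Type} [CommRing R] [AddCommGroup U] [AddCommGroup V]
    [AddCommGroup S] [AddCommGroup W] [Module R U] [Module R V] [Module R S] [Module R W]
    {f : U →ₗ[R] V} {q : V →ₗ[R] S} {i : S →ₗ[R] W} {h : V →ₗ[R] W} (hh : ∀ v, i (q v) = h v)
    (hf : Function.Exact f q) (hq : Function.Surjective q) :
    Function.Injective i ↔ Function.Exact f h := by
  rw [injective_iff_map_eq_zero]
  constructor
  · intro H v
    rw [← hh]
    exact ⟨fun hv => (hf v).1 (H _ hv), fun hv => by rw [(hf v).2 hv, map_zero]⟩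
  · intro H s hs
    obtain ⟨v, rfl⟩ := hq s
    rw [hh] at hs
    exact (hf v).2 ((H v).1 hs)

theorem s8_mkQ_exact {U V : Type} [AddCommGroup U] [AddCommGroup V] [Module A U] [Module A V]
    [Module R U] [Module R V] [IsScalarTower R A U] [IsScalarTower R A V] (f : U →ₗ[A] V) :
    Function.Exact (f.restrictScalars R) ((LinearMap.range f).mkQ.restrictScalars R) := by
  intro v
  show (LinearMap.range f).mkQ v = 0 ↔ _
  rw [← LinearMap.mem_ker, Submodule.ker_mkQ]
  rfl

theorem s8_mkQ_surj {U V : Type} [AddCommGroup U] [AddCommGroup V] [Module A U] [Module A V]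
    [Module R U] [Module R V] [IsScalarTower R A U] [IsScalarTower R A V] (f : U →ₗ[A] V) :
    Function.Surjective ((LinearMap.range f).mkQ.restrictScalars R) := by
  intro v
  obtain ⟨w, hw⟩ := Submodule.mkQ_surjective (LinearMap.range f) v
  exact ⟨w, hw⟩

variable {Q : ℕ → Type} [∀ n, AddCommGroup (Q n)] [∀ n, Module R (Q n)]
    (d : ∀ n, Q (n + 1) →ₗ[R] Q n)

theorem s8_step1 {U V : Type} [AddCommGroup U] [AddCommGroup V] [Module A U] [Module A V]
    [Module R U] [Module R V] [IsScalarTower R A U] [IsScalarTower R A V] (f : U →ₗ[A] V)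
    [Module.Flat R V] [∀ n, Module.Flat R (Q n)]
    (hd : ∀ n, Function.Exact (d (n + 1)) (d n))
    (ε : Q 0 →ₗ[R] M) (hε : Function.Surjective ε) (hdε : Function.Exact (d 0) ε)
    (hi : Function.Injective f) :
    (s8T d (V ⧸ LinearMap.range f) 0 ↔ Function.Injective ((f.restrictScalars R).rTensor M)) ∧
      ∀ n, s8T d (V ⧸ LinearMap.range f) (n + 1) ↔ s8T d U n := by
  have hi' : Function.Injective (f.restrictScalars R) := hi
  have hiq := s8_mkQ_exact (R := R) f
  have hq : Function.Surjective ((LinearMap.range f).mkQ.restrictScalars R) :=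
    s8_mkQ_surj f
  exact ⟨s8T_zero d hd hi' hiq hq ε hε hdε, s8T_shift d hd hi' hiq hq⟩

theorem s8_step2 {U V W : Type} [AddCommGroup U] [AddCommGroup V] [AddCommGroup W]
    [Module A U] [Module A V] [Module A W]
    [Module R U] [Module R V] [Module R W] [IsScalarTower R A U] [IsScalarTower R A V]
    [IsScalarTower R A W] (f : U →ₗ[A] V) (f' : V →ₗ[A] W)
    [Module.Flat R W] [∀ n, Module.Flat R (Q n)]
    (hd : ∀ n, Function.Exact (d (n + 1)) (d n))
    (ε : Q 0 →ₗ[R] M) (hε : Function.Surjective ε) (hdε : Function.Exact (d 0) ε)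
    (hex : Function.Exact f f') :
    (s8T d (W ⧸ LinearMap.range f') 0 ↔ Function.Exact ((f.restrictScalars R).rTensor M)
      ((f'.restrictScalars R).rTensor M)) ∧
      ∀ n, s8T d (W ⧸ LinearMap.range f') (n + 1) ↔ s8T d (V ⧸ LinearMap.range f) n := by
  let j : (V ⧸ LinearMap.range f) →ₗ[A] W :=
    (LinearMap.range f).liftQ f' (by rw [LinearMap.exact_iff.1 hex])
  have hjinj : Function.Injective j := by
    rw [← LinearMap.ker_eq_bot]
    exact Submodule.ker_liftQ_eq_bot _ _ _ (LinearMap.exact_iff.1 hex).le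
  have hi : Function.Injective (j.restrictScalars R) := hjinj
  have hiq : Function.Exact (j.restrictScalars R)
      ((LinearMap.range f').mkQ.restrictScalars R) := by
    have : Function.Exact j (LinearMap.range f').mkQ := by
      rw [LinearMap.exact_iff, Submodule.ker_mkQ]
      exact (Submodule.range_liftQ _ _ _).symm
    exact this
  have hq : Function.Surjective ((LinearMap.range f').mkQ.restrictScalars R) :=
    s8_mkQ_surj f'
  have h0 := s8T_zero d hd hi hiq hq ε hε hdε
  have hS := s8T_shift d hd hi hiq hq
  have hiq' := s8_mkQ_exact (R := R) f
  have hq' : Function.Surjective ((LinearMap.range f).mkQ.restrictScalars R) :=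
    s8_mkQ_surj f
  refine ⟨h0.trans ?_, hS⟩
  refine s8_inj_lift (h := (f'.restrictScalars R).rTensor M)
        (f := (f.restrictScalars R).rTensor M)
        (q := ((LinearMap.range f).mkQ.restrictScalars R).rTensor M) ?_
        (rTensor_exact M hiq' hq') (LinearMap.rTensor_surjective M hq')
  intro v
  rw [← LinearMap.rTensor_comp_apply]
  rfl

theorem s8_tor_main {K : ℕ → Type} [∀ n, AddCommGroup (K n)] [∀ n, Module R (K n)]
    [∀ n, Module A (K n)] [∀ n, IsScalarTower R A (K n)] [∀ n, Module.Flat R (K n)]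
    {G : ℕ → Type} [∀ n, AddCommGroup (G n)] [∀ n, Module R (G n)]
    [∀ n, Module A (G n)] [∀ n, IsScalarTower R A (G n)]
    (δ : ∀ n, K n →ₗ[A] K (n + 1)) (η : ∀ n, G n →ₗ[A] G (n + 1))
    (θ : ∀ n, TensorProduct R (K n) M ≃ₗ[R] G n)
    (hθ : ∀ n, ((η n).restrictScalars R) ∘ₗ (θ n).toLinearMap =
      (θ (n + 1)).toLinearMap ∘ₗ ((δ n).restrictScalars R).rTensor M)
    [∀ n, Module.Flat R (Q n)]
    (hd : ∀ n, Function.Exact (d (n + 1)) (d n))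
    (ε : Q 0 →ₗ[R] M) (hε : Function.Surjective ε) (hdε : Function.Exact (d 0) ε)
    (m : ℕ) (hA : ∀ i < m + 1, s8CEx δ i) :
    (∀ n, s8T d (K (m + 1) ⧸ LinearMap.range (δ m)) n) ↔ ∀ i < m + 1, s8CEx η i := by
  induction m with
  | zero =>
    obtain ⟨h0, hS⟩ := s8_step1 d (δ 0) hd ε hε hdε (hA 0 (by simp))
    have h1 : Function.Injective (((δ 0).restrictScalars R).rTensor M) ↔ s8CEx η 0 := by
      show _ ↔ Function.Injective (η 0)
      have h2 : Function.Injective ((η 0) ∘ (θ 0)) ↔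
          Function.Injective (η 0) := Equiv.injective_comp (θ 0).toEquiv _
      rw [← h2]
      have h3 : (η 0) ∘ (θ 0) = (θ 1) ∘ (((δ 0).restrictScalars R).rTensor M) :=
        congrArg DFunLike.coe (hθ 0)
      rw [h3]
      exact (Function.Injective.of_comp_iff (LinearEquiv.injective _) _).symm
    constructor
    · intro h i hi
      obtain rfl : i = 0 := by omega
      exact h1.1 (h0.1 (h 0))
    · intro h n
      cases n with
      | zero => exact h0.2 (h1.2 (h 0 (by simp)))
      | succ n => exact (hS n).2 (s8T_flat d hd _ n)
  | succ m ih =>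
    obtain ⟨h0, hS⟩ := s8_step2 d (δ m) (δ (m + 1)) hd ε hε hdε (hA (m + 1) (by omega))
    have h1 : Function.Exact (((δ m).restrictScalars R).rTensor M)
        (((δ (m + 1)).restrictScalars R).rTensor M) ↔ s8CEx η (m + 1) :=
      (Function.Exact.iff_of_ladder_linearEquiv (hθ m) (hθ (m + 1))).symm
    have ih' := ih (fun i hi => hA i (by omega))
    constructor
    · intro h i hi
      rcases Nat.lt_succ_iff_lt_or_eq.1 hi with hi | rfl
      · exact ih'.1 (fun n => (hS n).1 (h (n + 1))) i hi
      · exact h1.1 (h0.1 (h 0))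
    · intro h n
      cases n with
      | zero => exact h0.2 (h1.2 (h (m + 1) (by simp)))
      | succ n => exact (hS n).2 (ih'.2 (fun i hi => h i (by omega)) n)

theorem s8_tor_kos [Module.Flat R A] [∀ n, Module.Flat R (Q n)]
    (hg : IsBaseChange A g) (hd : ∀ n, Function.Exact (d (n + 1)) (d n))
    (ε : Q 0 →ₗ[R] M) (hε : Function.Surjective ε) (hdε : Function.Exact (d 0) ε)
    (m : ℕ) (hA : ∀ i < m + 1, s8CEx (s8K x A) i) :
    (∀ n, s8T d (KosTerm A ℓ (m + 1) ⧸ LinearMap.range (kosD A x m)) n) ↔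
      ∀ i < m + 1, s8CEx (s8K x N) i := by
  have hfl : ∀ i, Module.Flat R (KosTerm A ℓ i) := fun i => Module.Flat.trans R A _
  exact s8_tor_main (K := fun i => KosTerm A ℓ i)
    (G := fun i => ({s : Finset (Fin ℓ) // s.card = i} → N)) d (fun n => kosD A x n) (s8K x N)
    (fun n => s8Th hg _) (fun n => s8Th_comm x hg n) hd ε hε hdε m hA

end torkos


theorem s8_pr_aug {R : Type} [CommRing R] {M : ModuleCat.{0} R} (PR : ProjectiveResolution M) :
    ∃ ε : PR.complex.X 0 →ₗ[R] M, Function.Surjective ε ∧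
      Function.Exact (PR.complex.d 1 0).hom ε := by
  have h : (ShortComplex.mk _ _ PR.complex_d_comp_π_f_zero).Exact :=
    ShortComplex.exact_of_g_is_cokernel _ PR.isColimitCokernelCofork
  have h' := (ShortComplex.ShortExact.moduleCat_exact_iff_function_exact _).1 h
  have hs := (ModuleCat.epi_iff_surjective (PR.π.f 0)).1 inferInstance
  exact ⟨(PR.π.f 0).hom, hs, h'⟩

theorem s8_pr_flat {R : Type} [CommRing R] {M : ModuleCat.{0} R} (PR : ProjectiveResolution M)
    (n : ℕ) : Module.Flat R (PR.complex.X n) := by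
  have h : Projective (ModuleCat.of R (PR.complex.X n)) := PR.projective n
  have := (IsProjective.iff_projective (R := R) (PR.complex.X n)).2 h
  infer_instance

/-- The identity, as an `R`-linear equivalence. -/
def s8_kosEquiv {R A : Type} [CommRing R] [CommRing A] [Algebra R A] {ℓ : ℕ} (x : Fin ℓ → A)
    (m : ℕ) : KosCoker A x (m + 1) ≃ₗ[R] (KosTerm A ℓ (m + 1) ⧸ LinearMap.range (kosD A x m)) :=
  { AddEquiv.refl (KosTerm A ℓ (m + 1) ⧸ LinearMap.range (kosD A x m)) with
    map_smul' := fun r z => by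
      have h := algebraMap_smul A r
        (show KosTerm A ℓ (m + 1) ⧸ LinearMap.range (kosD A x m) from z)
      exact h }

theorem s8_tor_iff {R : Type} [CommRing R] (p : PrimeSpectrum R) {ℓ : ℕ}
    (x : Fin ℓ → Localization.AtPrime p.asIdeal) (M : Type) [AddCommGroup M] [Module R M] (m : ℕ)
    (hA : ∀ i < m + 1, s8CEx (s8K x (Localization.AtPrime p.asIdeal)) i) :
    (∀ j : ℕ, 1 ≤ j →
        torV R (ModuleCat.of R (KosCoker (Localization.AtPrime p.asIdeal) x (m + 1)))
          (ModuleCat.of R M) j) ↔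
      ∀ i < m + 1, s8CEx (s8K x (LocalizedModule p.asIdeal.primeCompl M)) i := by
  let PR := projectiveResolution (ModuleCat.of R M)
  obtain ⟨ε, hε, hdε⟩ := s8_pr_aug PR
  have hfl := s8_pr_flat PR
  have : Module.Flat R (Localization.AtPrime p.asIdeal) :=
    IsLocalization.flat _ p.asIdeal.primeCompl
  have hg : IsBaseChange (Localization.AtPrime p.asIdeal)
      (LocalizedModule.mkLinearMap p.asIdeal.primeCompl M) :=
    (isLocalizedModule_iff_isBaseChange p.asIdeal.primeCompl _ _).1 inferInstance
  rw [← s8_tor_kos (Q := fun n => PR.complex.X n) x (fun n => (PR.complex.d (n + 1) n).hom) hg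
    (s8_pr_exact PR) ε hε hdε m hA]
  constructor
  · intro h n
    exact s8T_equiv _ (s8_kosEquiv x m) n ((s8_torV _ PR n).1 (h (n + 1) (by simp)))
  · intro h j hj
    obtain ⟨n, rfl⟩ : ∃ n, j = n + 1 := ⟨j - 1, by omega⟩
    exact (s8_torV _ PR n).2 (s8T_equiv _ (s8_kosEquiv x m).symm n (h n))

/-- for a prime `p` of a commutative noetherian ring, `0 < k ≤ depth(R_p)`
and an `R`-module `M`, the following are equivalent: (i) `Tor_j(S_k(pR_p; R_p), M) = 0`
for all `j ≥ 1`; (ii) `depth_{R_p}(M_p) ≥ k`; (iii) `p ∉ Ass(⊕_{i=0}^{k-1} Ω_{-i}(M))`. -/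
theorem stmt8 (R : Type) [CommRing R] [IsNoetherianRing R] (p : PrimeSpectrum R)
    (k : ℕ) (hk : 0 < k) (hkd : (k : ℕ∞) ≤ ringDepthAt R p)
    (ℓ : ℕ) (x : Fin ℓ → Localization.AtPrime p.asIdeal)
    (hx : Ideal.span (Set.range x) =
      Ideal.map (algebraMap R (Localization.AtPrime p.asIdeal)) p.asIdeal)
    (M : Type) [AddCommGroup M] [Module R M] :
    ((∀ j : ℕ, 1 ≤ j →
        torV R (ModuleCat.of R (KosCoker (Localization.AtPrime p.asIdeal) x k))
          (ModuleCat.of R M) j) ↔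
      (k : ℕ∞) ≤ depthAt R p M) ∧
    (∀ seq : CosyzygySeq R M,
      ((k : ℕ∞) ≤ depthAt R p M ↔
        p.asIdeal ∉ associatedPrimes R (DirectSum (Fin k) fun i => ↥(seq.C i.1)))) := by
  have hx' : Ideal.span (Set.range x) =
      IsLocalRing.maximalIdeal (Localization.AtPrime p.asIdeal) :=
    hx.trans (Localization.AtPrime.map_eq_maximalIdeal)
  let PR := projectiveResolution (ModuleCat.of (Localization.AtPrime p.asIdeal)
    (IsLocalRing.ResidueField (Localization.AtPrime p.asIdeal)))
  have hres := s8_res x hx' PR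
  have hdep : ∀ (N : Type) [AddCommGroup N] [Module (Localization.AtPrime p.asIdeal) N],
      (k : ℕ∞) ≤ rdepth (Localization.AtPrime p.asIdeal) N ↔
        ∀ n < k, s8CEx (s8H (P := fun n => PR.complex.X n)
          (fun n => (PR.complex.d (n + 1) n).hom) N) n := by
    intro N _ _
    rw [s8_rdepth]
    exact forall₂_congr fun n _ => s8_extV _ PR N n
  have hA := (s8_compare hres k _).1 ((hdep _).1 hkd)
  refine ⟨?_, fun seq => ?_⟩
  · obtain ⟨m, rfl⟩ : ∃ m, k = m + 1 := ⟨k - 1, by omega⟩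
    rw [s8_tor_iff p x M m hA]
    unfold depthAt
    rw [hdep, s8_compare hres]
  · rw [s8_ass_sum p k (fun i => ↥(seq.C i.1))]
    have h2 := s8_part2 p x hx' M seq hres (s8_pr_exact PR) k 0
    have h3 : ∀ i : ℕ, p.asIdeal ∉ associatedPrimes R ↥(seq.C (0 + i)) ↔
        p.asIdeal ∉ associatedPrimes R ↥(seq.C i) := fun i => by rw [Nat.zero_add]
    have e : LocalizedModule p.asIdeal.primeCompl (seq.C 0) ≃ₗ[Localization.AtPrime p.asIdeal]
        LocalizedModule p.asIdeal.primeCompl M :=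
      IsLocalizedModule.mapEquiv p.asIdeal.primeCompl
        (LocalizedModule.mkLinearMap p.asIdeal.primeCompl (seq.C 0))
        (LocalizedModule.mkLinearMap p.asIdeal.primeCompl M)
        (Localization.AtPrime p.asIdeal) seq.iso0
    unfold depthAt
    rw [hdep]
    constructor
    · intro h i
      exact (h3 i.1).1 (h2.1 (fun n hn => s8_ass_loc_equiv e.symm n (h n hn)) i.1 i.2)
    · intro h n hn
      exact s8_ass_loc_equiv e n (h2.2 (fun i hi => (h3 i).2 (h ⟨i, hi⟩)) n hn)
end
end

section
/- Let R be a commutative noetherian ring and (C, W) a hereditary cotorsion pair cogenerated by a class P of pure-injective R-modules of finite injective dimension. Then for every M ∈ C and every associated prime p of M, the residue field k(p) of R_p belongs to C. -/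
open CategoryTheory Opposite

noncomputable section

/-- The left `Ext^1`-orthogonal class. -/
def leftPerp1 (R : Type) [Ring R] (𝒳 : Set (ModuleCat.{0} R)) : Set (ModuleCat.{0} R) :=
  {M | ∀ X ∈ 𝒳, extV R M X 1}

/-- The right `Ext^1`-orthogonal class. -/
def rightPerp1 (R : Type) [Ring R] (𝒳 : Set (ModuleCat.{0} R)) : Set (ModuleCat.{0} R) :=
  {N | ∀ X ∈ 𝒳, extV R X N 1}

/-- `(𝒞, 𝒲)` is a cotorsion pair. -/
def IsCotorsionPair (R : Type) [Ring R] (𝒞 𝒲 : Set (ModuleCat.{0} R)) : Prop :=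
  𝒞 = leftPerp1 R 𝒲 ∧ 𝒲 = rightPerp1 R 𝒞

/-- `(𝒞, 𝒲)` is a hereditary cotorsion pair. -/
def IsHereditaryCotorsionPair (R : Type) [Ring R] (𝒞 𝒲 : Set (ModuleCat.{0} R)) : Prop :=
  IsCotorsionPair R 𝒞 𝒲 ∧ ∀ X ∈ 𝒞, ∀ Y ∈ 𝒲, ∀ i : ℕ, 1 ≤ i → extV R X Y i

/-- The class `𝒞_(i) = {M ∣ Ext^j(M, W) = 0 for all j > i and all W ∈ 𝒲}`. -/
def cotShift (R : Type) [Ring R] (𝒲 : Set (ModuleCat.{0} R)) (i : ℕ) : Set (ModuleCat.{0} R) :=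
  {M | ∀ Y ∈ 𝒲, ∀ j : ℕ, i < j → extV R M Y j}

/-- The class of pure-injective `R`-modules of finite injective dimension. -/
def PIFinInj (R : Type) [CommRing R] : Set (ModuleCat.{0} R) :=
  {N | PureInjective R ↥N ∧ ∃ n : ℕ, injDimLE R N n}

/-- The residue field `k(p)` of `R_p`, as an `R`-module. -/
abbrev resField (R : Type) [CommRing R] (p : PrimeSpectrum R) : Type :=
  LocalizedModule p.asIdeal.primeCompl (R ⧸ p.asIdeal)

namespace Stmt9

open CategoryTheory.Abelian

variable {R : Type} [CommRing R]

/-- Vanishing of Ext, unbundled in the first variable. -/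
def VE (Y : ModuleCat.{0} R) (X : Type) [AddCommGroup X] [Module R X] (n : ℕ) : Prop :=
  Subsingleton (CategoryTheory.Abelian.Ext.{0} (ModuleCat.of R X) Y n)

theorem extV_iff (X Y : ModuleCat.{0} R) (n : ℕ) :
    extV R X Y (n + 1) ↔ VE Y X (n + 1) := by
  let Q := projectiveResolution X
  have e1 : extV R X Y (n + 1) ↔ ∀ f : Q.complex.X (n + 1) ⟶ Y,
      Q.complex.d (n + 2) (n + 1) ≫ f = 0 → ∃ g : Q.complex.X n ⟶ Y,
        Q.complex.d (n + 1) n ≫ g = f := by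
    unfold extV
    rw [(Q.isoExt (R := ℤ) (n + 1) Y).toLinearEquiv.toEquiv.subsingleton_congr,
      ← ModuleCat.isZero_iff_subsingleton,
      ← HomologicalComplex.exactAt_iff_isZero_homology,
      HomologicalComplex.exactAt_iff' _ n (n + 1) (n + 2) (by simp) (by simp),
      ShortComplex.moduleCat_exact_iff]
    rfl
  rw [e1]
  constructor
  · intro h
    refine subsingleton_of_forall_eq 0 fun x ↦ ?_
    obtain ⟨f, hf, rfl⟩ := Q.extMk_surjective x (n + 2) rfl
    exact (Q.extMk_eq_zero_iff f _ rfl hf n rfl).2 (h f hf)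
  · intro h f hf
    exact (Q.extMk_eq_zero_iff f (n + 2) rfl hf n rfl).1 (h.elim _ _)

theorem VE.les2 {Y : ModuleCat.{0} R} {A B C : Type} [AddCommGroup A] [Module R A]
    [AddCommGroup B] [Module R B] [AddCommGroup C] [Module R C]
    (f : A →ₗ[R] B) (g : B →ₗ[R] C) (hf : Function.Injective f) (hg : Function.Surjective g)
    (hfg : Function.Exact f g) (n : ℕ) (h1 : VE Y A n) (h3 : VE Y C n) : VE Y B n := by
  let S : ShortComplex (ModuleCat.{0} R) := ShortComplex.mk (ModuleCat.ofHom f) (ModuleCat.ofHom g)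
    (by ext x; exact hfg.apply_apply_eq_zero x)
  have hS : S.ShortExact := ModuleCat.shortComplex_shortExact S hfg hf hg
  refine subsingleton_of_forall_eq 0 fun x ↦ ?_
  obtain ⟨y, rfl⟩ := Ext.contravariant_sequence_exact₂ hS Y x (h1.elim _ _)
  rw [h3.elim y 0, Ext.comp_zero]

theorem VE.les1 {Y : ModuleCat.{0} R} {A B C : Type} [AddCommGroup A] [Module R A]
    [AddCommGroup B] [Module R B] [AddCommGroup C] [Module R C]
    (f : A →ₗ[R] B) (g : B →ₗ[R] C) (hf : Function.Injective f) (hg : Function.Surjective g)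
    (hfg : Function.Exact f g) (n : ℕ) (h2 : VE Y B n) (h3 : VE Y C (n + 1)) : VE Y A n := by
  let S : ShortComplex (ModuleCat.{0} R) := ShortComplex.mk (ModuleCat.ofHom f) (ModuleCat.ofHom g)
    (by ext x; exact hfg.apply_apply_eq_zero x)
  have hS : S.ShortExact := ModuleCat.shortComplex_shortExact S hfg hf hg
  refine subsingleton_of_forall_eq 0 fun x ↦ ?_
  obtain ⟨y, rfl⟩ := Ext.contravariant_sequence_exact₁ hS Y x (add_comm 1 n) (h3.elim _ _)
  rw [h2.elim y 0, Ext.comp_zero]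

theorem VE.pure {Y : ModuleCat.{0} R} (hY : PureInjective R Y)
    {A B C : Type} [AddCommGroup A] [Module R A]
    [AddCommGroup B] [Module R B] [AddCommGroup C] [Module R C]
    (f : A →ₗ[R] B) (g : B →ₗ[R] C) (hf : IsPureMono R f) (hg : Function.Surjective g)
    (hfg : Function.Exact f g) (h2 : VE Y B 1) : VE Y C 1 := by
  let S : ShortComplex (ModuleCat.{0} R) := ShortComplex.mk (ModuleCat.ofHom f) (ModuleCat.ofHom g)
    (by ext x; exact hfg.apply_apply_eq_zero x)
  have hS : S.ShortExact := ModuleCat.shortComplex_shortExact S hfg hf.1 hg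
  refine subsingleton_of_forall_eq 0 fun x ↦ ?_
  obtain ⟨y, rfl⟩ := Ext.contravariant_sequence_exact₃ hS Y x (h2.elim _ _) (add_zero 1)
  obtain ⟨φ, rfl⟩ := Ext.addEquiv₀.symm.surjective y
  obtain ⟨ψ, hψ⟩ := hY A B f hf φ.hom
  have : φ = S.f ≫ ModuleCat.ofHom ψ := by
    ext x; exact (LinearMap.congr_fun hψ x).symm
  subst this
  change hS.extClass.comp (Ext.mk₀ _) _ = 0
  rw [← Ext.mk₀_comp_mk₀, ← Ext.comp_assoc_of_second_deg_zero, hS.extClass_comp, Ext.zero_comp]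

theorem VE.exists_lift (n : ℕ) : ∀ Y : ModuleCat.{0} R, ∃ (E Z : ModuleCat.{0} R) (g : E ⟶ Z),
    Injective E ∧ ∀ (X : Type) [AddCommGroup X] [Module R X],
      VE Y X (n + 1) ↔ ∀ f : X →ₗ[R] Z, ∃ h : X →ₗ[R] E, g.hom ∘ₗ h = f := by
  induction n with
  | zero =>
    intro Y
    let S : ShortComplex (ModuleCat.{0} R) := ShortComplex.mk (Injective.ι Y)
      (Limits.cokernel.π (Injective.ι Y)) (by simp)
    have hS : S.ShortExact := { exact := ShortComplex.exact_cokernel _ }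
    refine ⟨S.X₂, S.X₃, S.g, inferInstanceAs (Injective (Injective.under Y)), fun X _ _ ↦ ?_⟩
    constructor
    · intro h f
      obtain ⟨x, hx⟩ := Ext.covariant_sequence_exact₃ (ModuleCat.of R X) hS
        (Ext.mk₀ (ModuleCat.ofHom f)) rfl (h.elim _ _)
      obtain ⟨φ, rfl⟩ := Ext.addEquiv₀.symm.surjective x
      refine ⟨φ.hom, ?_⟩
      change (Ext.mk₀ φ).comp _ _ = _ at hx
      rw [Ext.mk₀_comp_mk₀] at hx
      have := Ext.mk₀_bijective (ModuleCat.of R X) S.X₃ |>.1 hx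
      exact congrArg ModuleCat.Hom.hom this
    · intro h
      refine subsingleton_of_forall_eq 0 fun x ↦ ?_
      have : Injective S.X₂ := inferInstanceAs (Injective (Injective.under Y))
      obtain ⟨y, rfl⟩ := Ext.covariant_sequence_exact₁ (ModuleCat.of R X) hS x
        (Ext.eq_zero_of_injective _) (zero_add 1)
      obtain ⟨φ, rfl⟩ := Ext.addEquiv₀.symm.surjective y
      obtain ⟨ψ, hψ⟩ := h φ.hom
      have : φ = ModuleCat.ofHom ψ ≫ S.g := by
        ext x; exact (LinearMap.congr_fun hψ x).symm
      subst this
      change (Ext.mk₀ _).comp hS.extClass _ = 0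
      rw [← Ext.mk₀_comp_mk₀, Ext.comp_assoc_of_second_deg_zero, hS.comp_extClass, Ext.comp_zero]
  | succ n ih =>
    intro Y
    let S : ShortComplex (ModuleCat.{0} R) := ShortComplex.mk (Injective.ι Y)
      (Limits.cokernel.π (Injective.ι Y)) (by simp)
    have hS : S.ShortExact := { exact := ShortComplex.exact_cokernel _ }
    have : Injective S.X₂ := inferInstanceAs (Injective (Injective.under Y))
    obtain ⟨E, Z, g, hE, H⟩ := ih S.X₃
    refine ⟨E, Z, g, hE, fun X _ _ ↦ ?_⟩
    rw [← H X]
    constructor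
    · intro h
      refine subsingleton_of_forall_eq 0 fun x ↦ ?_
      obtain ⟨y, rfl⟩ := Ext.covariant_sequence_exact₃ (ModuleCat.of R X) hS x rfl (h.elim _ _)
      rw [Ext.eq_zero_of_injective y, Ext.zero_comp]
    · intro h
      refine subsingleton_of_forall_eq 0 fun x ↦ ?_
      obtain ⟨y, rfl⟩ := Ext.covariant_sequence_exact₁ (ModuleCat.of R X) hS x
        (Ext.eq_zero_of_injective _) rfl
      rw [h.elim y 0, Ext.zero_comp]

theorem VE.retract {Y : ModuleCat.{0} R} {A B : Type} [AddCommGroup A] [Module R A]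
    [AddCommGroup B] [Module R B] (i : A →ₗ[R] B) (r : B →ₗ[R] A) (hri : r ∘ₗ i = LinearMap.id)
    (n : ℕ) (h : VE Y B (n + 1)) : VE Y A (n + 1) := by
  obtain ⟨E, Z, g, -, H⟩ := VE.exists_lift n Y
  rw [H] at h ⊢
  intro f
  obtain ⟨k, hk⟩ := h (f ∘ₗ r)
  exact ⟨k ∘ₗ i, by rw [← LinearMap.comp_assoc, hk, LinearMap.comp_assoc, hri, LinearMap.comp_id]⟩

theorem VE.equiv {Y : ModuleCat.{0} R} {A B : Type} [AddCommGroup A] [Module R A]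
    [AddCommGroup B] [Module R B] (e : A ≃ₗ[R] B)
    (n : ℕ) (h : VE Y B (n + 1)) : VE Y A (n + 1) :=
  VE.retract e.toLinearMap e.symm.toLinearMap (by ext; simp) n h

theorem VE.finsupp {Y : ModuleCat.{0} R} {A : Type} [AddCommGroup A] [Module R A] (ι : Type)
    (n : ℕ) (h : VE Y A (n + 1)) : VE Y (ι →₀ A) (n + 1) := by
  obtain ⟨E, Z, g, -, H⟩ := VE.exists_lift n Y
  rw [H] at h ⊢
  intro f
  choose k hk using fun i : ι ↦ h (f ∘ₗ Finsupp.lsingle i)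
  refine ⟨Finsupp.lsum ℕ k, ?_⟩
  ext i a
  simpa using LinearMap.congr_fun (hk i) a

theorem VE.union {Y : ModuleCat.{0} R} {T : Type} [AddCommGroup T] [Module R T]
    (F : ℕ → Submodule R T) (hmono : Monotone F) (h0 : F 0 = ⊥) (hF : ∀ t, ∃ k, t ∈ F k)
    (n : ℕ) (h : ∀ k, VE Y (F (k + 1) ⧸ (F k).submoduleOf (F (k + 1))) (n + 1)) :
    VE Y T (n + 1) := by
  obtain ⟨E, Z, g, hE, H⟩ := VE.exists_lift n Y
  simp only [H] at h ⊢
  intro f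
  have hE' : Module.Injective R E := Module.injective_module_of_injective_object R E
  have step : ∀ k (u : F k →ₗ[R] E), g.hom ∘ₗ u = f ∘ₗ (F k).subtype →
      ∃ v : F (k + 1) →ₗ[R] E, g.hom ∘ₗ v = f ∘ₗ (F (k + 1)).subtype ∧
        v ∘ₗ Submodule.inclusion (hmono (Nat.le_succ k)) = u := by
    intro k u hu
    obtain ⟨u', hu'⟩ := hE'.out (Submodule.inclusion (hmono (Nat.le_succ k)))
      (Submodule.inclusion_injective _) u
    have hker : (F k).submoduleOf (F (k + 1)) ≤
        LinearMap.ker (f ∘ₗ (F (k + 1)).subtype - g.hom ∘ₗ u') := by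
      rintro ⟨x, hx⟩ hx'
      have hx'' : x ∈ F k := hx'
      have e1 := hu' ⟨x, hx''⟩
      have e2 := LinearMap.congr_fun hu ⟨x, hx''⟩
      simp only [LinearMap.mem_ker, LinearMap.sub_apply, LinearMap.comp_apply,
        Submodule.subtype_apply] at e2 ⊢
      rw [← e2, ← e1, sub_eq_zero]
      rfl
    obtain ⟨w, hw⟩ := h k (Submodule.liftQ _ _ hker)
    refine ⟨u' + w ∘ₗ Submodule.mkQ _, ?_, ?_⟩
    · ext x
      have := LinearMap.congr_fun hw (Submodule.Quotient.mk x)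
      simp at this
      simp [this]
    · ext ⟨x, hx⟩
      have e1 := hu' ⟨x, hx⟩
      have : (Submodule.Quotient.mk (Submodule.inclusion (hmono (Nat.le_succ k)) ⟨x, hx⟩) :
        F (k + 1) ⧸ (F k).submoduleOf (F (k + 1))) = 0 := by
        rw [Submodule.Quotient.mk_eq_zero]; exact hx
      simp [this, e1]
  let St (k : ℕ) := {u : F k →ₗ[R] E // g.hom ∘ₗ u = f ∘ₗ (F k).subtype}
  let s : ∀ k, St k := fun k ↦ Nat.rec (motive := St)
    ⟨0, by
      ext ⟨x, hx⟩
      have : x = 0 := by simpa [h0] using hx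
      subst this; simp⟩
    (fun k u ↦ ⟨(step k u.1 u.2).choose, (step k u.1 u.2).choose_spec.1⟩) k
  have hs : ∀ k x (hx : x ∈ F k) (hx' : x ∈ F (k + 1)), (s (k + 1)).1 ⟨x, hx'⟩ = (s k).1 ⟨x, hx⟩ :=
    fun k x hx hx' ↦ LinearMap.congr_fun (step k (s k).1 (s k).2).choose_spec.2 ⟨x, hx⟩
  have hs' : ∀ k l, k ≤ l → ∀ x (hx : x ∈ F k) (hx' : x ∈ F l),
      (s l).1 ⟨x, hx'⟩ = (s k).1 ⟨x, hx⟩ := by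
    intro k l hkl
    induction l, hkl using Nat.le_induction with
    | base => intros; rfl
    | succ l hl ih => intro x hx hx'; rw [hs l x (hmono hl hx), ih]
  choose κ hκ using hF
  have key : ∀ l x (hx : x ∈ F l), (s (κ x)).1 ⟨x, hκ x⟩ = (s l).1 ⟨x, hx⟩ := by
    intro l x hx
    rcases le_total l (κ x) with h | h
    · exact hs' _ _ h _ _ _
    · exact (hs' _ _ h _ _ _).symm
  refine ⟨{ toFun := fun x ↦ (s (κ x)).1 ⟨x, hκ x⟩, map_add' := ?_, map_smul' := ?_ }, ?_⟩
  · intro x y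
    have hx := hmono (le_max_left (κ x) (κ y)) (hκ x)
    have hy := hmono (le_max_right (κ x) (κ y)) (hκ y)
    rw [key _ x hx, key _ y hy, key _ _ (add_mem hx hy), ← map_add]
    rfl
  · intro r x
    rw [key _ (r • x) (Submodule.smul_mem _ r (hκ x))]
    exact map_smul (s (κ x)).1 r ⟨x, hκ x⟩
  · ext x
    exact LinearMap.congr_fun (s (κ x)).2 ⟨x, hκ x⟩

end Stmt9

namespace Stmt9

open CategoryTheory.Abelian TensorProduct

variable {R : Type} [CommRing R]

theorem pure_tensor {K L F : Type} [AddCommGroup K] [Module R K] [AddCommGroup L] [Module R L]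
    [AddCommGroup F] [Module R F] [Module.Flat R F] (f : K →ₗ[R] L) (g : L →ₗ[R] F)
    (hf : Function.Injective f) (hg : Function.Surjective g) (hfg : Function.Exact f g)
    (M : Type) [AddCommGroup M] [Module R M] : IsPureMono R (f.lTensor M) := by
  have hinj : ∀ (Q : Type) [AddCommGroup Q] [Module R Q],
      Function.Injective (f.lTensor Q) := fun Q _ _ ↦
    LinearMap.lTensor_injective_of_exact_of_flat g hg f hf hfg Q
  refine ⟨hinj M, fun Q _ _ ↦ ?_⟩
  have := hinj (Q ⊗[R] M)
  rw [LinearMap.lTensor_tensor] at this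
  intro x y hxy
  obtain ⟨x, rfl⟩ := (TensorProduct.assoc R Q M K).surjective x
  obtain ⟨y, rfl⟩ := (TensorProduct.assoc R Q M K).surjective y
  congr 1
  apply this
  simp [hxy]

theorem VE.tensor_free {Y : ModuleCat.{0} R} (F M : Type)
    [AddCommGroup M] [Module R M] (h : VE Y M 1) : VE Y (M ⊗[R] (F →₀ R)) 1 := by
  classical
  have h2 := VE.finsupp F 0 h
  exact VE.equiv (TensorProduct.finsuppScalarRight R R M F) 0 h2

theorem VE.tensor_aux {Y : ModuleCat.{0} R} (hY : PureInjective R Y) {L F : Type} (M : Type)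
    [AddCommGroup F] [Module R F] [Module.Flat R F] [AddCommGroup M] [Module R M]
    [AddCommGroup L] [Module R L] (π : L →ₗ[R] F) (hπ : Function.Surjective π)
    (h : VE Y (M ⊗[R] L) 1) : VE Y (F ⊗[R] M) 1 := by
  have hex : Function.Exact (LinearMap.ker π).subtype π := LinearMap.exact_subtype_ker_map π
  have hp := pure_tensor (LinearMap.ker π).subtype π (LinearMap.ker π).injective_subtype hπ hex M
  have h3 := VE.pure hY ((LinearMap.ker π).subtype.lTensor M) (π.lTensor M)
    hp (LinearMap.lTensor_surjective M hπ) (lTensor_exact M hex hπ) h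
  exact VE.equiv (TensorProduct.comm R F M) 0 h3

theorem VE.tensor {Y : ModuleCat.{0} R} (hY : PureInjective R Y) (F M : Type)
    [AddCommGroup F] [Module R F] [Module.Flat R F] [AddCommGroup M] [Module R M]
    (h : VE Y M 1) : VE Y (F ⊗[R] M) 1 :=
  VE.tensor_aux hY M _ (Finsupp.linearCombination_id_surjective R F) (VE.tensor_free F M h)

/-- The unit map `X → A ⊗ X`. -/
def unitMap (A X : Type) [CommRing A] [Algebra R A] [AddCommGroup X] [Module R X] :
    X →ₗ[R] A ⊗[R] X := TensorProduct.mk R A X 1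

theorem VE.cokerUnit {Y : ModuleCat.{0} R} (hY : PureInjective R Y)
    (A X : Type) [CommRing A] [Algebra R A] [Module.Flat R A] [AddCommGroup X] [Module R X]
    (h : VE Y (A ⊗[R] X) 1) :
    VE Y (A ⊗[R] ((A ⊗[R] X) ⧸ LinearMap.range (unitMap (R := R) A X))) 1 := by
  have h2 := VE.tensor hY A _ h
  have hex : Function.Exact ((unitMap (R := R) A X).lTensor A)
      ((LinearMap.range (unitMap (R := R) A X)).mkQ.lTensor A) :=
    lTensor_exact A (LinearMap.exact_map_mkQ_range _) (Submodule.mkQ_surjective _)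
  let μ : A ⊗[R] (A ⊗[R] X) →ₗ[R] A ⊗[R] X :=
    (LinearMap.mul' R A).rTensor X ∘ₗ (TensorProduct.assoc R A A X).symm.toLinearMap
  have hμ : μ ∘ₗ (unitMap (R := R) A X).lTensor A = LinearMap.id := by
    ext a x
    simp [μ, unitMap]
  obtain ⟨-, s, hs⟩ := ((Function.Exact.split_tfae' hex).out 1 0 rfl rfl).mp
    ⟨LinearMap.lTensor_surjective A (Submodule.mkQ_surjective _), μ, hμ⟩
  exact VE.retract s _ hs 0 h2

/-- Every element outside `p` acts bijectively. -/
def Loc (p : Ideal R) (X : Type) [AddCommGroup X] [Module R X] : Prop :=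
  ∀ s : R, s ∉ p → Function.Bijective (fun x : X ↦ s • x)

/-- A saturated submodule. -/
def Sat (p : Ideal R) {X : Type} [AddCommGroup X] [Module R X] (N : Submodule R X) : Prop :=
  ∀ s : R, s ∉ p → ∀ x : X, s • x ∈ N → x ∈ N

variable {p : Ideal R} {X Z : Type} [AddCommGroup X] [Module R X] [AddCommGroup Z] [Module R Z]

theorem Loc.sub (hX : Loc p X) {N : Submodule R X} (hN : Sat p N) : Loc p N := by
  intro s hs
  refine ⟨fun x y hxy ↦ Subtype.ext ((hX s hs).1 (congrArg Subtype.val hxy)), fun ⟨x, hx⟩ ↦ ?_⟩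
  obtain ⟨y, rfl⟩ := (hX s hs).2 x
  exact ⟨⟨y, hN s hs y hx⟩, rfl⟩

theorem Loc.quot (hX : Loc p X) {N : Submodule R X} (hN : Sat p N) : Loc p (X ⧸ N) := by
  intro s hs
  refine ⟨fun x y hxy ↦ ?_, fun x ↦ ?_⟩
  · obtain ⟨x, rfl⟩ := N.mkQ_surjective x
    obtain ⟨y, rfl⟩ := N.mkQ_surjective y
    simp only [← map_smul] at hxy
    rw [← sub_eq_zero, ← map_sub, ← smul_sub] at hxy
    rw [← sub_eq_zero, ← map_sub]
    simp only [Submodule.mkQ_apply, Submodule.Quotient.mk_eq_zero] at hxy ⊢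
    exact hN s hs _ hxy
  · obtain ⟨x, rfl⟩ := N.mkQ_surjective x
    obtain ⟨y, rfl⟩ := (hX s hs).2 x
    exact ⟨N.mkQ y, by simp⟩

theorem Loc.tensor (A : Type) [AddCommGroup A] [Module R A] (hX : Loc p X) :
    Loc p (A ⊗[R] X) := by
  intro s hs
  let e : X ≃ₗ[R] X := LinearEquiv.ofBijective (LinearMap.lsmul R X s) (hX s hs)
  have : (fun x : A ⊗[R] X ↦ s • x) = e.lTensor A := by
    have : LinearMap.lsmul R (A ⊗[R] X) s = e.toLinearMap.lTensor A := by
      ext a x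
      change s • (a ⊗ₜ[R] x) = a ⊗ₜ[R] (s • x)
      rw [TensorProduct.tmul_smul]
    exact congrArg (fun f : A ⊗[R] X →ₗ[R] A ⊗[R] X ↦ (f : _ → _)) this
  rw [this]
  exact (e.lTensor A).bijective

theorem sat_ker (hZ : Loc p Z) (f : X →ₗ[R] Z) : Sat p (LinearMap.ker f) := by
  intro s hs x hx
  rw [LinearMap.mem_ker, map_smul] at hx
  exact (hZ s hs).1 (by simpa using hx)

theorem sat_range (hX : Loc p X) (hZ : Loc p Z) (f : X →ₗ[R] Z) : Sat p (LinearMap.range f) := by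
  rintro s hs z ⟨x, hx⟩
  obtain ⟨y, rfl⟩ := (hX s hs).2 x
  refine ⟨y, (hZ s hs).1 ?_⟩
  simpa using hx

theorem sat_tor (hX : Loc p X) (I : Ideal R) : Sat p (Submodule.torsionBySet R X I) := by
  intro s hs x hx
  rw [Submodule.mem_torsionBySet_iff] at hx ⊢
  intro a
  apply (hX s hs).1
  simp only [smul_zero]
  rw [smul_comm, hx a]

theorem sat_submoduleOf {N : Submodule R X} (hN : Sat p N) (L : Submodule R X) :
    Sat p (N.submoduleOf L) := fun s hs x hx ↦ hN s hs x.1 hx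

theorem loc_of_isLocalizedModule (p : Ideal R) [p.IsPrime] (f : X →ₗ[R] Z)
    [IsLocalizedModule p.primeCompl f] : Loc p Z := by
  intro s hs
  have := IsLocalizedModule.map_units f (⟨s, hs⟩ : p.primeCompl)
  exact (Module.End.isUnit_iff _).1 this

/-- The residue field as a module. -/
abbrev KK (p : Ideal R) [p.IsPrime] : Type := IsLocalRing.ResidueField (Localization.AtPrime p)

theorem exists_equiv [p.IsPrime] (hX : Loc p X) (hp : ∀ a ∈ p, ∀ x : X, a • x = 0) :
    ∃ ι : Type, Nonempty (X ≃ₗ[R] (ι →₀ KK p)) := by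
  have : IsLocalizedModule p.primeCompl (LinearMap.id : X →ₗ[R] X) :=
    { map_units := fun s ↦ (Module.End.isUnit_iff _).2 (hX s.1 s.2)
      surj := fun y ↦ ⟨(y, 1), by simp⟩
      exists_of_eq := fun {x y} h ↦ ⟨1, by simpa using h⟩ }
  let W := LocalizedModule p.primeCompl X
  let e : W ≃ₗ[R] X := IsLocalizedModule.iso p.primeCompl (LinearMap.id : X →ₗ[R] X)
  have htor : Module.IsTorsionBySet (Localization.AtPrime p) W
      (IsLocalRing.maximalIdeal (Localization.AtPrime p)) := by
    intro w ⟨a, ha⟩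
    rw [SetLike.mem_coe, ← Localization.AtPrime.map_eq_maximalIdeal] at ha
    change a • w = 0
    revert ha
    suffices h : ∀ a ∈ Ideal.map (algebraMap R (Localization.AtPrime p)) p, a • w = 0 from h a
    intro a ha
    induction ha using Submodule.span_induction with
    | mem x hx =>
      obtain ⟨r, hr, rfl⟩ := hx
      rw [algebraMap_smul]
      apply e.injective
      rw [map_smul, hp r hr, map_zero]
    | zero => simp
    | add x y _ _ hx hy => rw [add_smul, hx, hy, add_zero]
    | smul c x _ hx => rw [smul_eq_mul, mul_smul, hx, smul_zero]
  let _ : Module (KK p) W := htor.module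
  have : IsScalarTower R (KK p) W := ⟨fun r k w ↦ by
    obtain ⟨k, rfl⟩ := IsLocalRing.residue_surjective k
    have h1 : ∀ k, (IsLocalRing.residue (Localization.AtPrime p) k : KK p) • w = k • w :=
      fun k ↦ rfl
    have h2 : r • IsLocalRing.residue (Localization.AtPrime p) k
      = IsLocalRing.residue (Localization.AtPrime p) (r • k) := rfl
    rw [h2, h1, h1, smul_assoc]⟩
  let b := Module.Free.chooseBasis (KK p) W
  exact ⟨_, ⟨e.symm ≪≫ₗ b.repr.restrictScalars R⟩⟩

/-- Vanishing for all torsion modules. -/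
theorem VE.torsion {Y : ModuleCat.{0} R} (n : ℕ)
    (H : ∀ (V : Type) [AddCommGroup V] [Module R V], Loc p V →
      (∀ a ∈ p, ∀ x : V, a • x = 0) → VE Y V (n + 1))
    (hX : Loc p X) (ht : ∀ x : X, ∃ k, ∀ a ∈ p ^ k, a • x = 0) : VE Y X (n + 1) := by
  let F (k : ℕ) := Submodule.torsionBySet R X (p ^ k : Ideal R)
  have hmem : ∀ k x, x ∈ F k ↔ ∀ a ∈ p ^ k, a • x = 0 := fun k x ↦ by
    simp [F, Submodule.mem_torsionBySet_iff]
  refine VE.union F (fun k l hkl x hx ↦ ?_) ?_ (fun t ↦ ?_) n (fun k ↦ H _ ?_ ?_)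
  · rw [hmem] at hx ⊢
    exact fun a ha ↦ hx a (Ideal.pow_le_pow_right hkl ha)
  · rw [eq_bot_iff]
    intro x hx
    rw [hmem] at hx
    simpa using hx 1 (by simp)
  · obtain ⟨k, hk⟩ := ht t
    exact ⟨k, (hmem _ _).2 hk⟩
  · exact (hX.sub (sat_tor hX _)).quot (sat_submoduleOf (sat_tor hX _) _)
  · intro a ha x
    obtain ⟨⟨x, hx⟩, rfl⟩ := Submodule.mkQ_surjective _ x
    rw [← map_smul, Submodule.mkQ_apply, Submodule.Quotient.mk_eq_zero]
    change a • x ∈ F k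
    rw [hmem] at hx ⊢
    intro b hb
    rw [← mul_smul]
    exact hx _ (by rw [pow_succ]; exact Ideal.mul_mem_mul hb ha)

/-- Product of the localizations at the elements of `s`. -/
abbrev AA (s : Finset R) : Type := (i : s) → Localization.Away (i : R)

theorem flat_AA (s : Finset R) : Module.Flat R (AA s) := by
  classical
  have : ∀ i : s, Module.Flat R (Localization.Away (i : R)) := fun i ↦
    IsLocalization.flat _ (Submonoid.powers (i : R))
  exact Module.Flat.of_linearEquiv
    (DirectSum.linearEquivFunOnFintype R s (fun i ↦ Localization.Away (i : R))).symm

theorem unit_tor (s : Finset R) (x : X)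
    (hx : unitMap (R := R) (AA s) X x = 0) (hs : Ideal.span (s : Set R) = p) :
    ∃ k, ∀ a ∈ p ^ k, a • x = 0 := by
  let J : Ideal R := LinearMap.ker (LinearMap.toSpanSingleton R X x)
  have hJ : ∀ a, a ∈ J ↔ a • x = 0 := fun a ↦ by simp [J]
  have : p ≤ J.radical := by
    rw [← hs, Ideal.span_le]
    intro i hi
    have h0 : TensorProduct.mk R (Localization.Away i) X 1 x = 0 := by
      have := congrArg ((LinearMap.proj (R := R) (φ := fun i : s ↦ Localization.Away (i : R))
        ⟨i, hi⟩).rTensor X) hx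
      simpa [unitMap] using this
    rw [IsLocalizedModule.eq_zero_iff (Submonoid.powers i)] at h0
    obtain ⟨⟨_, k, rfl⟩, hk⟩ := h0
    exact ⟨k, (hJ _).2 hk⟩
  obtain ⟨k, hk⟩ := Ideal.exists_pow_le_of_le_radical_of_fg this ⟨s, hs⟩
  exact ⟨k, fun a ha ↦ (hJ a).1 (hk ha)⟩

theorem unit_zero (s : Finset R) (x : X)
    (hx : ∀ i ∈ s, i • x = 0) : unitMap (R := R) (AA s) X x = 0 := by
  classical
  have h1 : (1 : AA s) = ∑ i : s, (i : R) • Pi.single i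
      (IsLocalization.mk' (Localization.Away (i : R)) 1
        (⟨i, Submonoid.mem_powers _⟩ : Submonoid.powers (i : R))) := by
    rw [← Finset.univ_sum_single (1 : AA s)]
    refine Finset.sum_congr rfl fun i _ ↦ ?_
    rw [← Pi.single_smul]
    congr 1
    rw [Algebra.smul_def, IsLocalization.mk'_spec'_mk]
    simp
  change (1 : AA s) ⊗ₜ[R] x = 0
  rw [h1, TensorProduct.sum_tmul]
  refine Finset.sum_eq_zero fun i _ ↦ ?_
  rw [TensorProduct.smul_tmul, hx i i.2, TensorProduct.tmul_zero]

end Stmt9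

namespace Stmt9

open CategoryTheory.Abelian TensorProduct

variable {R : Type} [CommRing R]

theorem range_step {Y : ModuleCat.{0} R} {X Z : Type} [AddCommGroup X] [Module R X]
    [AddCommGroup Z] [Module R Z] (f : X →ₗ[R] Z) (n : ℕ) (h2 : VE Y Z n)
    (h3 : VE Y (Z ⧸ LinearMap.range f) (n + 1)) : VE Y (LinearMap.range f) n :=
  VE.les1 (LinearMap.range f).subtype (LinearMap.range f).mkQ (Submodule.injective_subtype _)
    (Submodule.mkQ_surjective _) (LinearMap.exact_subtype_mkQ _) n h2 h3

theorem ker_exact {X Z : Type} [AddCommGroup X] [Module R X]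
    [AddCommGroup Z] [Module R Z] (f : X →ₗ[R] Z) :
    Function.Exact (LinearMap.ker f).subtype f.rangeRestrict := by
  intro x
  constructor
  · intro h
    exact ⟨⟨x, congrArg Subtype.val h⟩, rfl⟩
  · rintro ⟨y, rfl⟩
    exact Subtype.ext y.2

theorem step2 {p : Ideal R} (Pcl : Set (ModuleCat.{0} R))
    (hPI : ∀ Q ∈ Pcl, PureInjective R Q)
    (hC : ∀ (X : Type) [AddCommGroup X] [Module R X], (∀ Q ∈ Pcl, VE Q X 1) →
      ∀ Q ∈ Pcl, ∀ n, VE Q X (n + 1))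
    (Y : ModuleCat.{0} R) (hY : Y ∈ Pcl) (D : ℕ)
    (hD : ∀ (X : Type) [AddCommGroup X] [Module R X], ∀ n, D < n → VE Y X n)
    (s : Finset R) (hs : Ideal.span (s : Set R) = p) (d : ℕ)
    (H : ∀ (T : Type) [AddCommGroup T] [Module R T], Loc p T →
      (∀ x : T, ∃ k, ∀ a ∈ p ^ k, a • x = 0) → ∀ n, d ≤ n → VE Y T (n + 1)) (m : ℕ) :
    ∀ e, d ≤ e → D ≤ e + m → ∀ (X : Type) [AddCommGroup X] [Module R X], Loc p X →
      (∀ Q ∈ Pcl, VE Q (AA s ⊗[R] X) 1) → ∀ n, e ≤ n → VE Y X (n + 1) := by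
  have := flat_AA s
  induction m with
  | zero =>
    intro e _ he X _ _ _ _ n hn
    exact hD X _ (by omega)
  | succ m ih =>
    intro e hde he X _ _ hX hAX n hn
    let f := unitMap (R := R) (AA s) X
    have hAloc : Loc p (AA s ⊗[R] X) := hX.tensor _
    have h1 : VE Y (_ ⧸ LinearMap.range f) (n + 1 + 1) :=
      ih (e + 1) (by omega) (by omega) _ (hAloc.quot (sat_range hX hAloc f))
        (fun Q hQ ↦ VE.cokerUnit (hPI Q hQ) (AA s) X (hAX Q hQ)) (n + 1) (by omega)
    have h2 : VE Y (LinearMap.range f) (n + 1) := range_step f _ (hC _ hAX Y hY n) h1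
    have h3 : VE Y (LinearMap.ker f) (n + 1) := by
      refine H _ (hX.sub (sat_ker hAloc f)) (fun x ↦ ?_) n (by omega)
      obtain ⟨k, hk⟩ := unit_tor s x.1 x.2 hs
      exact ⟨k, fun a ha ↦ Subtype.ext (hk a ha)⟩
    exact VE.les2 (LinearMap.ker f).subtype f.rangeRestrict (Submodule.injective_subtype _)
      f.surjective_rangeRestrict (ker_exact f) _ h3 h2

theorem main_step {p : Ideal R} [p.IsPrime] (Pcl : Set (ModuleCat.{0} R))
    (hPI : ∀ Q ∈ Pcl, PureInjective R Q)
    (hC : ∀ (X : Type) [AddCommGroup X] [Module R X], (∀ Q ∈ Pcl, VE Q X 1) →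
      ∀ Q ∈ Pcl, ∀ n, VE Q X (n + 1))
    (Y : ModuleCat.{0} R) (hY : Y ∈ Pcl) (D : ℕ)
    (hD : ∀ (X : Type) [AddCommGroup X] [Module R X], ∀ n, D < n → VE Y X n)
    (s : Finset R) (hs : Ideal.span (s : Set R) = p)
    (N : Type) [AddCommGroup N] [Module R N] (hN : Loc p N) (hNC : ∀ Q ∈ Pcl, VE Q N 1)
    (v : N) (hv0 : v ≠ 0) (hv : ∀ a ∈ p, a • v = 0) (c : ℕ)
    (H : ∀ (V : Type) [AddCommGroup V] [Module R V], Loc p V →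
      (∀ a ∈ p, ∀ x : V, a • x = 0) → ∀ n, c + 1 ≤ n → VE Y V (n + 1)) :
    ∀ (V : Type) [AddCommGroup V] [Module R V], Loc p V →
      (∀ a ∈ p, ∀ x : V, a • x = 0) → ∀ n, c ≤ n → VE Y V (n + 1) := by
  have := flat_AA s
  have Ht : ∀ (T : Type) [AddCommGroup T] [Module R T], Loc p T →
      (∀ x : T, ∃ k, ∀ a ∈ p ^ k, a • x = 0) → ∀ n, c + 1 ≤ n → VE Y T (n + 1) :=
    fun T _ _ hT ht n hn ↦ VE.torsion n (fun V _ _ h1 h2 ↦ H V h1 h2 n hn) hT ht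
  let f := unitMap (R := R) (AA s) N
  have hAloc : Loc p (AA s ⊗[R] N) := hN.tensor _
  have hAN : ∀ Q ∈ Pcl, VE Q (AA s ⊗[R] N) 1 := fun Q hQ ↦ VE.tensor (hPI Q hQ) _ _ (hNC Q hQ)
  have h1 : VE Y (_ ⧸ LinearMap.range f) (c + 1 + 1 + 1) :=
    step2 Pcl hPI hC Y hY D hD s hs (c + 1) Ht D (c + 1) le_rfl (by omega) _
      (hAloc.quot (sat_range hN hAloc f))
      (fun Q hQ ↦ VE.cokerUnit (hPI Q hQ) (AA s) N (hAN Q hQ)) (c + 1 + 1) (by omega)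
  have h2 : VE Y (LinearMap.range f) (c + 1 + 1) := range_step f _ (hC _ hAN Y hY _) h1
  have h3 : VE Y (LinearMap.ker f) (c + 1) :=
    VE.les1 (LinearMap.ker f).subtype f.rangeRestrict (Submodule.injective_subtype _)
      f.surjective_rangeRestrict (ker_exact f) _ (hC _ hNC Y hY c) h2
  have hT : Loc p (LinearMap.ker f) := hN.sub (sat_ker hAloc f)
  have htor : ∀ x : LinearMap.ker f, ∃ k, ∀ a ∈ p ^ k, a • x = 0 := by
    intro x
    obtain ⟨k, hk⟩ := unit_tor s x.1 x.2 hs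
    exact ⟨k, fun a ha ↦ Subtype.ext (hk a ha)⟩
  let V0 : Submodule R (LinearMap.ker f) := Submodule.torsionBySet R _ (p : Set R)
  have hV0 : Sat p V0 := sat_tor hT p
  have h4 : VE Y (LinearMap.ker f ⧸ V0) (c + 1 + 1) := by
    refine Ht _ (hT.quot hV0) (fun x ↦ ?_) _ le_rfl
    obtain ⟨x, rfl⟩ := V0.mkQ_surjective x
    obtain ⟨k, hk⟩ := htor x
    exact ⟨k, fun a ha ↦ by rw [← map_smul, hk a ha, map_zero]⟩
  have h5 : VE Y V0 (c + 1) :=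
    VE.les1 V0.subtype V0.mkQ (Submodule.injective_subtype _)
      (Submodule.mkQ_surjective _) (LinearMap.exact_subtype_mkQ _) _ h3 h4
  obtain ⟨ι, ⟨e⟩⟩ := exists_equiv (hT.sub hV0) (fun a ha x ↦
    Subtype.ext ((Submodule.mem_torsionBySet_iff _ _).1 x.2 ⟨a, ha⟩))
  have hvk : v ∈ LinearMap.ker f := unit_zero s v fun i hi ↦ hv i (hs ▸ Ideal.subset_span hi)
  have hv' : (⟨v, hvk⟩ : LinearMap.ker f) ∈ V0 :=
    (Submodule.mem_torsionBySet_iff _ _).2 fun a ↦ Subtype.ext (hv a.1 a.2)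
  have hι : Nonempty ι := by
    by_contra hne
    rw [not_nonempty_iff] at hne
    have h0 : e ⟨⟨v, hvk⟩, hv'⟩ = e 0 := Subsingleton.elim _ _
    exact hv0 (congrArg (fun x : V0 ↦ (x.1 : N)) (e.injective h0))
  obtain ⟨i⟩ := hι
  have h6 : VE Y (KK p) (c + 1) :=
    VE.retract (Finsupp.lsingle (R := R) i) (Finsupp.lapply i) (by ext; simp) _
      (VE.equiv e.symm _ h5)
  intro V _ _ hV hpV n hn
  rcases hn.eq_or_lt with rfl | hn
  · obtain ⟨κ, ⟨e'⟩⟩ := exists_equiv hV hpV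
    exact VE.equiv e' _ (VE.finsupp κ _ h6)
  · exact H V hV hpV n hn

end Stmt9

/-- if `(𝒞, 𝒲)` is a hereditary cotorsion pair over a commutative noetherian
ring cogenerated by a class of pure-injective modules of finite injective dimension, then
for every `M ∈ 𝒞` and every associated prime `p` of `M`, the residue field `k(p)`
belongs to `𝒞`. -/
theorem stmt9 (R : Type) [CommRing R] [IsNoetherianRing R]
    (𝒞 𝒲 Pcl : Set (ModuleCat.{0} R))
    (hpair : IsHereditaryCotorsionPair R 𝒞 𝒲)
    (hP : Pcl ⊆ PIFinInj R)
    (hcogen : 𝒞 = leftPerp1 R Pcl) :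
    ∀ M ∈ 𝒞, ∀ p : PrimeSpectrum R, p.asIdeal ∈ associatedPrimes R ↥M →
      ModuleCat.of R (resField R p) ∈ 𝒞 := by
  intro M hM p hp
  have hPW : Pcl ⊆ 𝒲 := by
    intro Q hQ
    rw [hpair.1.2]
    intro X hX
    rw [hcogen] at hX
    exact hX Q hQ
  have hmem : ∀ (X : Type) [AddCommGroup X] [Module R X],
      ModuleCat.of R X ∈ 𝒞 ↔ ∀ Q ∈ Pcl, Stmt9.VE Q X 1 := by
    intro X _ _
    rw [hcogen]
    exact forall₂_congr fun Q _ ↦ Stmt9.extV_iff (ModuleCat.of R X) Q 0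
  have hC : ∀ (X : Type) [AddCommGroup X] [Module R X], (∀ Q ∈ Pcl, Stmt9.VE Q X 1) →
      ∀ Q ∈ Pcl, ∀ n, Stmt9.VE Q X (n + 1) := by
    intro X _ _ h Q hQ n
    exact (Stmt9.extV_iff (ModuleCat.of R X) Q n).1
      (hpair.2 _ ((hmem X).2 h) Q (hPW hQ) (n + 1) (by omega))
  have hPI : ∀ Q ∈ Pcl, PureInjective R Q := fun Q hQ ↦ (hP hQ).1
  have hpp : p.asIdeal.IsPrime := p.isPrime
  obtain ⟨s, hs⟩ := (isNoetherianRing_iff_ideal_fg R).1 inferInstance p.asIdeal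
  obtain ⟨-, m, hm⟩ := isAssociatedPrime_iff.1 hp
  have hm' : ∀ a, a ∈ p.asIdeal ↔ a • m = 0 := fun a ↦ by
    rw [hm, Submodule.mem_colon_singleton, Submodule.mem_bot]
  have hM' : ∀ Q ∈ Pcl, Stmt9.VE Q M 1 := (hmem M).1 hM
  have hflat : Module.Flat R (Localization.AtPrime p.asIdeal) :=
    IsLocalization.flat _ p.asIdeal.primeCompl
  let N := TensorProduct R (Localization.AtPrime p.asIdeal) M
  let j : M →ₗ[R] N := TensorProduct.mk R (Localization.AtPrime p.asIdeal) M 1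
  have hj : IsLocalizedModule p.asIdeal.primeCompl j := inferInstanceAs
    (IsLocalizedModule p.asIdeal.primeCompl
      (TensorProduct.mk R (Localization.AtPrime p.asIdeal) M 1))
  have hN : Stmt9.Loc p.asIdeal N := Stmt9.loc_of_isLocalizedModule p.asIdeal j
  have hNC : ∀ Q ∈ Pcl, Stmt9.VE Q N 1 := fun Q hQ ↦
    Stmt9.VE.tensor (hPI Q hQ) _ _ (hM' Q hQ)
  have hv0 : j m ≠ 0 := by
    intro h0
    rw [IsLocalizedModule.eq_zero_iff p.asIdeal.primeCompl] at h0
    obtain ⟨⟨t, ht⟩, h⟩ := h0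
    exact ht ((hm' t).2 h)
  have hv : ∀ a ∈ p.asIdeal, a • j m = 0 := fun a ha ↦ by
    rw [← map_smul, (hm' a).1 ha, map_zero]
  rw [hmem]
  intro Y hY
  obtain ⟨D, hD⟩ := (hP hY).2
  have hD' : ∀ (X : Type) [AddCommGroup X] [Module R X], ∀ n, D < n → Stmt9.VE Y X n := by
    intro X _ _ n hn
    obtain ⟨n, rfl⟩ : ∃ k, n = k + 1 := ⟨n - 1, by omega⟩
    exact (Stmt9.extV_iff (ModuleCat.of R X) Y n).1 (hD _ _ hn)
  have key : ∀ k c, D ≤ c + k → ∀ (V : Type) [AddCommGroup V] [Module R V],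
      Stmt9.Loc p.asIdeal V →
      (∀ a ∈ p.asIdeal, ∀ x : V, a • x = 0) → ∀ n, c ≤ n → Stmt9.VE Y V (n + 1) := by
    intro k
    induction k with
    | zero => intro c hc V _ _ _ _ n hn; exact hD' V _ (by omega)
    | succ k ih =>
      intro c hc
      exact Stmt9.main_step Pcl hPI hC Y hY D hD' s hs N hN hNC (j m) hv0 hv c
        (ih (c + 1) (by omega))
  refine key D 0 (by omega) _
    (Stmt9.loc_of_isLocalizedModule p.asIdeal
      (LocalizedModule.mkLinearMap p.asIdeal.primeCompl (R ⧸ p.asIdeal))) ?_ 0 le_rfl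
  intro a ha x
  induction x using LocalizedModule.induction_on with
  | h y t =>
    obtain ⟨y, rfl⟩ := Ideal.Quotient.mk_surjective y
    rw [LocalizedModule.smul'_mk]
    have : a • (Ideal.Quotient.mk p.asIdeal y) = 0 := by
      change Ideal.Quotient.mk p.asIdeal (a • y) = 0
      rw [Ideal.Quotient.eq_zero_iff_mem]
      exact Ideal.mul_mem_right _ _ ha
    rw [this, LocalizedModule.zero_mk]
end
end

section
/- Let R be a commutative noetherian ring and (C, W) a hereditary cotorsion pair cogenerated by a class P of pure-injective R-modules of finite injective dimension. Then C is closed under injective envelopes: if M ∈ C then the injective envelope E(M) belongs to C. -/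
open CategoryTheory Opposite

noncomputable section

open CategoryTheory.Abelian in
theorem extV_iff (R : Type) [Ring R] (X Y : ModuleCat.{0} R) (n : ℕ) :
    extV R X Y (n+1) ↔ Subsingleton (CategoryTheory.Abelian.Ext X Y (n+1)) := by
  let Q : ProjectiveResolution X := ProjectiveResolution.of X
  have h1 : extV R X Y (n+1) ↔ ∀ f : Q.complex.X (n+1) ⟶ Y, Q.complex.d (n+2) (n+1) ≫ f = 0 →
      ∃ g : Q.complex.X n ⟶ Y, Q.complex.d (n+1) n ≫ g = f := by
    unfold extV
    rw [← ModuleCat.isZero_iff_subsingleton, Iso.isZero_iff (Q.isoExt (R := ℤ) (n+1) Y),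
      ← HomologicalComplex.exactAt_iff_isZero_homology,
      HomologicalComplex.exactAt_iff' _ n (n+1) (n+2) (by simp) (by simp),
      ShortComplex.moduleCat_exact_iff]
    rfl
  rw [h1]
  constructor
  · intro h
    refine ⟨fun a b => ?_⟩
    have key : ∀ a : CategoryTheory.Abelian.Ext X Y (n+1), a = 0 := by
      intro a
      obtain ⟨f, hf, rfl⟩ := Q.extMk_surjective a (n+2) rfl
      rw [Q.extMk_eq_zero_iff f _ rfl hf n rfl]
      exact h f hf
    rw [key a, key b]
  · intro h f hf
    rw [← Q.extMk_eq_zero_iff f _ rfl hf n rfl]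
    exact Subsingleton.elim _ _

/-- unbundled Ext vanishing -/
def XV (R : Type) [Ring R] (X Y : Type) [AddCommGroup X] [Module R X] [AddCommGroup Y] [Module R Y]
    (n : ℕ) : Prop :=
  Subsingleton (CategoryTheory.Abelian.Ext (ModuleCat.of R X) (ModuleCat.of R Y) n)

section hom
variable {R : Type} [Ring R] {A B C P : Type} [AddCommGroup A] [Module R A]
  [AddCommGroup B] [Module R B] [AddCommGroup C] [Module R C] [AddCommGroup P] [Module R P]

theorem mkSES (f : A →ₗ[R] B) (g : B →ₗ[R] C) (hf : Function.Injective f)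
    (hg : Function.Surjective g) (he : Function.Exact f g) :
    ∃ w, (ShortComplex.mk (ModuleCat.ofHom f) (ModuleCat.ofHom g) w).ShortExact := by
  have w : ModuleCat.ofHom f ≫ ModuleCat.ofHom g = 0 := by
    rw [← ModuleCat.ofHom_comp, he.linearMap_comp_eq_zero]; rfl
  refine ⟨w, ?_⟩
  have h1 : Mono (ModuleCat.ofHom f) := (ModuleCat.mono_iff_injective _).2 hf
  have h2 : Epi (ModuleCat.ofHom g) := (ModuleCat.epi_iff_surjective _).2 hg
  refine ⟨?_⟩
  exact (ShortComplex.ShortExact.moduleCat_exact_iff_function_exact _).2 he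

theorem XV_left (f : A →ₗ[R] B) (g : B →ₗ[R] C) (hf : Function.Injective f)
    (hg : Function.Surjective g) (he : Function.Exact f g) (m : ℕ)
    (hB : XV R B P m) (hC : XV R C P (m+1)) : XV R A P m := by
  obtain ⟨w, hS⟩ := mkSES f g hf hg he
  have key : ∀ a : CategoryTheory.Abelian.Ext (ModuleCat.of R A) (ModuleCat.of R P) m, a = 0 := by
    intro a
    obtain ⟨b, hb⟩ := CategoryTheory.Abelian.Ext.contravariant_sequence_exact₁ hS _ a
      (n₁ := m+1) (by omega) (by unfold XV at hC; exact Subsingleton.elim _ _)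
    have : b = 0 := by unfold XV at hB; exact Subsingleton.elim _ _
    rw [← hb, this]; simp
  exact ⟨fun a b => by rw [key a, key b]⟩

/-- Ext^1 of a quotient -/
theorem XV_quot (f : A →ₗ[R] B) (g : B →ₗ[R] C) (hf : Function.Injective f)
    (hg : Function.Surjective g) (he : Function.Exact f g)
    (hB : XV R B P 1) (hA : ∀ u : A →ₗ[R] P, ∃ v : B →ₗ[R] P, v.comp f = u) : XV R C P 1 := by
  obtain ⟨w, hS⟩ := mkSES f g hf hg he
  have key : ∀ a : CategoryTheory.Abelian.Ext (ModuleCat.of R C) (ModuleCat.of R P) 1, a = 0 := by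
    intro a
    obtain ⟨b, hb⟩ := CategoryTheory.Abelian.Ext.contravariant_sequence_exact₃ hS _ a
      (by unfold XV at hB; exact Subsingleton.elim _ _) (n₀ := 0) (by omega)
    obtain ⟨u, rfl⟩ := CategoryTheory.Abelian.Ext.homEquiv₀.symm.surjective b
    obtain ⟨v, hv⟩ := hA u.hom
    have : CategoryTheory.Abelian.Ext.homEquiv₀.symm u =
      (CategoryTheory.Abelian.Ext.mk₀ (ModuleCat.ofHom f)).comp
        (CategoryTheory.Abelian.Ext.mk₀ (ModuleCat.ofHom v)) (zero_add 0) := by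
      rw [CategoryTheory.Abelian.Ext.mk₀_comp_mk₀, ← ModuleCat.ofHom_comp, hv]; rfl
    rw [← hb, this]
    exact hS.extClass_comp_assoc _
  exact ⟨fun a b => by rw [key a, key b]⟩

end hom

theorem liftcrit1 (R : Type) [Ring R] (P : Type) [AddCommGroup P] [Module R P] :
    ∃ (J L : Type) (_ : AddCommGroup J) (_ : Module R J) (_ : AddCommGroup L) (_ : Module R L)
      (π : J →ₗ[R] L), Module.Injective R J ∧
      (∀ (X : Type) [AddCommGroup X] [Module R X],
        XV R X P 1 ↔ ∀ g : X →ₗ[R] L, ∃ h : X →ₗ[R] J, π.comp h = g) ∧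
      (∀ (X : Type) [AddCommGroup X] [Module R X] (m : ℕ), 
        XV R X P (m+2) ↔ XV R X L (m+1)) := by
  let J := Injective.under (ModuleCat.of R P)
  let i : ModuleCat.of R P ⟶ J := Injective.ι _
  have hi : Function.Injective i.hom := (ModuleCat.mono_iff_injective _).1 inferInstance
  obtain ⟨w, hS⟩ := mkSES i.hom (LinearMap.range i.hom).mkQ hi
    (Submodule.mkQ_surjective _) (LinearMap.exact_map_mkQ_range _)
  have hJ0 : Injective J := Injective.injective_under _
  have hJ' : Injective (ModuleCat.of R J) := hJ0
  have hJ : Module.Injective R J := Module.injective_module_of_injective_object R J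
  refine ⟨J, J ⧸ LinearMap.range i.hom, inferInstance, inferInstance, inferInstance, inferInstance,
    (LinearMap.range i.hom).mkQ, hJ, ?_, ?_⟩
  · intro X _ _
    constructor
    · intro h g
      obtain ⟨b, hb⟩ := CategoryTheory.Abelian.Ext.covariant_sequence_exact₃ (ModuleCat.of R X) hS
        (CategoryTheory.Abelian.Ext.mk₀ (ModuleCat.ofHom g)) (n₁ := 1) rfl
        (by unfold XV at h; exact Subsingleton.elim _ _)
      obtain ⟨u, rfl⟩ := CategoryTheory.Abelian.Ext.homEquiv₀.symm.surjective b
      refine ⟨u.hom, ?_⟩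
      change (CategoryTheory.Abelian.Ext.mk₀ u).comp (CategoryTheory.Abelian.Ext.mk₀ _) _ = _ at hb
      rw [CategoryTheory.Abelian.Ext.mk₀_comp_mk₀] at hb
      have := CategoryTheory.Abelian.Ext.homEquiv₀.symm.injective hb
      exact congrArg ModuleCat.Hom.hom this
    · intro h
      have key : ∀ a : CategoryTheory.Abelian.Ext (ModuleCat.of R X) (ModuleCat.of R P) 1,
          a = 0 := by
        intro a
        obtain ⟨b, hb⟩ := CategoryTheory.Abelian.Ext.covariant_sequence_exact₁ (ModuleCat.of R X)
          hS a (CategoryTheory.Abelian.Ext.eq_zero_of_injective _) (n₀ := 0) rfl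
        obtain ⟨u, rfl⟩ := CategoryTheory.Abelian.Ext.homEquiv₀.symm.surjective b
        obtain ⟨v, hv⟩ := h u.hom
        have : CategoryTheory.Abelian.Ext.homEquiv₀.symm u =
          (CategoryTheory.Abelian.Ext.mk₀ (ModuleCat.ofHom v)).comp
            (CategoryTheory.Abelian.Ext.mk₀ (ModuleCat.ofHom (LinearMap.range i.hom).mkQ))
              (zero_add 0) := by
          rw [CategoryTheory.Abelian.Ext.mk₀_comp_mk₀, ← ModuleCat.ofHom_comp, hv]; rfl
        rw [← hb, this]
        exact (CategoryTheory.Abelian.Ext.comp_assoc _ _ _ _ (zero_add 1) rfl).trans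
          ((congrArg (fun t => CategoryTheory.Abelian.Ext.comp _ t (zero_add 1)) hS.comp_extClass).trans
            (CategoryTheory.Abelian.Ext.comp_zero _ _ _ _ (zero_add 1)))
      exact ⟨fun a b => by rw [key a, key b]⟩
  · intro X _ _ m
    constructor
    · intro h
      have key : ∀ a : CategoryTheory.Abelian.Ext (ModuleCat.of R X)
          (ModuleCat.of R (J ⧸ LinearMap.range i.hom)) (m+1), a = 0 := by
        intro a
        obtain ⟨b, hb⟩ := CategoryTheory.Abelian.Ext.covariant_sequence_exact₃ (ModuleCat.of R X)
          hS a (n₁ := m+2) rfl (by unfold XV at h; exact Subsingleton.elim _ _)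
        have : b = 0 := CategoryTheory.Abelian.Ext.eq_zero_of_injective _
        rw [← hb, this]; simp
      exact ⟨fun a b => by rw [key a, key b]⟩
    · intro h
      have key : ∀ a : CategoryTheory.Abelian.Ext (ModuleCat.of R X)
          (ModuleCat.of R P) (m+2), a = 0 := by
        intro a
        obtain ⟨b, hb⟩ := CategoryTheory.Abelian.Ext.covariant_sequence_exact₁ (ModuleCat.of R X)
          hS a (CategoryTheory.Abelian.Ext.eq_zero_of_injective _) (n₀ := m+1) rfl
        have : b = 0 := by unfold XV at h; exact Subsingleton.elim _ _
        rw [← hb, this]; simp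
      exact ⟨fun a b => by rw [key a, key b]⟩

theorem liftcrit (R : Type) [Ring R] (m : ℕ) : ∀ (P : Type) [AddCommGroup P] [Module R P],
    ∃ (J L : Type) (_ : AddCommGroup J) (_ : Module R J) (_ : AddCommGroup L) (_ : Module R L)
      (π : J →ₗ[R] L), Module.Injective R J ∧
      (∀ (X : Type) [AddCommGroup X] [Module R X],
        XV R X P (m+1) ↔ ∀ g : X →ₗ[R] L, ∃ h : X →ₗ[R] J, π.comp h = g) := by
  induction m with
  | zero =>
    intro P _ _
    obtain ⟨J, L, _, _, _, _, π, h1, h2, h3⟩ := liftcrit1 R P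
    exact ⟨J, L, _, _, _, _, π, h1, h2⟩
  | succ m ih =>
    intro P _ _
    obtain ⟨J, L, _, _, _, _, π, h1, h2, h3⟩ := liftcrit1 R P
    obtain ⟨J', L', _, _, _, _, π', h1', h2'⟩ := ih L
    exact ⟨J', L', _, _, _, _, π', h1', fun X _ _ => (h3 X m).trans (h2' X)⟩

theorem XV_retract {R : Type} [Ring R] {A B P : Type} [AddCommGroup A] [Module R A]
    [AddCommGroup B] [Module R B] [AddCommGroup P] [Module R P]
    (i : A →ₗ[R] B) (r : B →ₗ[R] A) (h : r.comp i = LinearMap.id) (m : ℕ)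
    (hB : XV R B P (m+1)) : XV R A P (m+1) := by
  obtain ⟨J, L, _, _, _, _, π, h1, h2⟩ := liftcrit R m P
  rw [h2] at hB ⊢
  intro g
  obtain ⟨u, hu⟩ := hB (g.comp r)
  refine ⟨u.comp i, ?_⟩
  rw [← LinearMap.comp_assoc, hu, LinearMap.comp_assoc, h, LinearMap.comp_id]

theorem XV_finsupp {R : Type} [Ring R] {A P : Type} [AddCommGroup A] [Module R A]
    [AddCommGroup P] [Module R P] (ι : Type) (m : ℕ)
    (hA : XV R A P (m+1)) : XV R (ι →₀ A) P (m+1) := by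
  obtain ⟨J, L, _, _, _, _, π, h1, h2⟩ := liftcrit R m P
  rw [h2] at hA ⊢
  intro g
  choose u hu using fun i : ι => hA (g.comp (Finsupp.lsingle i))
  refine ⟨Finsupp.lsum ℕ u, ?_⟩
  ext i a
  have := LinearMap.congr_fun (hu i) a
  simpa using this

theorem eklofZ {R : Type} [CommRing R] {E J L : Type} [AddCommGroup E] [Module R E]
    [AddCommGroup J] [Module R J] [AddCommGroup L] [Module R L] (π : J →ₗ[R] L)
    (hJ : Module.Injective R J) (g : E →ₗ[R] L) (G : Submodule R E → Prop) (h0 : G ⊥)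
    (hchain : ∀ c : Set (Submodule R E), c.Nonempty → IsChain (· ≤ ·) c → (∀ A ∈ c, G A) →
      G (sSup c))
    (hstep : ∀ A, G A → A ≠ ⊤ → ∃ A', A < A' ∧ G A' ∧ ∃ (V : Type) (_ : AddCommGroup V)
      (_ : Module R V) (q : A' →ₗ[R] V), Function.Surjective q ∧
        (∀ x : A', q x = 0 ↔ (x : E) ∈ A) ∧ ∀ t : V →ₗ[R] L, ∃ h : V →ₗ[R] J, π.comp h = t) :
    ∃ h : E →ₗ[R] J, π.comp h = g := by
  let S : Set (E →ₗ.[R] J) := {f | G f.domain ∧ ∀ x : f.domain, π (f x) = g x}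
  have hbot : (⊥ : E →ₗ.[R] J) ∈ S := by
    refine ⟨h0, ?_⟩
    rintro ⟨x, hx⟩
    have hx' : x = 0 := (Submodule.mem_bot R).1 hx
    subst hx'
    have : (⟨0, hx⟩ : (⊥ : E →ₗ.[R] J).domain) = 0 := rfl
    rw [this, LinearPMap.map_zero]; simp
  obtain ⟨f, -, hf⟩ := zorn_le_nonempty₀ S (by
    intro c hcS hc f0 hf0
    have hdir : DirectedOn (· ≤ ·) c := hc.directedOn
    refine ⟨LinearPMap.sSup c hdir, ?_, fun z hz => LinearPMap.le_sSup hdir hz⟩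
    have hd : (LinearPMap.sSup c hdir).domain = sSup (LinearPMap.domain '' c) := rfl
    have hne : (LinearPMap.domain '' c).Nonempty := ⟨_, f0, hf0, rfl⟩
    have hch : IsChain (· ≤ ·) (LinearPMap.domain '' c) := by
      rintro _ ⟨u, hu, rfl⟩ _ ⟨v, hv, rfl⟩ _
      rcases hc.total hu hv with h | h
      · exact Or.inl h.1
      · exact Or.inr h.1
    refine ⟨?_, ?_⟩
    · rw [hd]
      refine hchain _ hne hch ?_
      · rintro _ ⟨u, hu, rfl⟩; exact (hcS hu).1
    · rintro ⟨x, hx⟩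
      have hx' := hx
      rw [hd, Submodule.mem_sSup_of_directed hne hch.directedOn] at hx'
      obtain ⟨_, ⟨u, hu, rfl⟩, hxu⟩ := hx'
      have := (LinearPMap.le_sSup hdir hu).2 (x := ⟨x, hxu⟩) (y := ⟨x, hx⟩) rfl
      rw [← this]
      exact (hcS hu).2 ⟨x, hxu⟩) ⊥ hbot
  obtain ⟨hfG, hfg⟩ := hf.prop
  by_cases htop : f.domain = ⊤
  · refine ⟨f.toFun.comp ((LinearEquiv.ofTop _ htop).symm.toLinearMap), ?_⟩
    ext x
    exact hfg ((LinearEquiv.ofTop _ htop).symm x)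
  exfalso
  obtain ⟨A', hlt, hGA', V, _, _, q, hq, hker, hlift⟩ := hstep _ hfG htop
  obtain ⟨l, hl⟩ := hJ.out (Submodule.inclusion hlt.le)
    (Submodule.inclusion_injective _) f.toFun
  let δ : A' →ₗ[R] L := g.comp A'.subtype - π.comp l
  have hδ : LinearMap.ker q ≤ LinearMap.ker δ := by
    intro x hx
    have hxA := (hker x).1 hx
    have h1 := hl ⟨x, hxA⟩
    have h2 : Submodule.inclusion hlt.le ⟨x, hxA⟩ = x := rfl
    rw [h2] at h1
    have h3 := hfg ⟨x, hxA⟩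
    simp only [LinearMap.mem_ker, δ, LinearMap.sub_apply, LinearMap.comp_apply]
    rw [h1]
    erw [h3]
    simp
  obtain ⟨t, ht⟩ := hlift ((Submodule.liftQ _ δ hδ).comp (q.quotKerEquivOfSurjective hq).symm.toLinearMap)
  have ht' : ∀ x, π (t (q x)) = δ x := by
    intro x
    have := LinearMap.congr_fun ht (q x)
    simp only [LinearMap.comp_apply] at this
    rw [this]
    have h4 : (q.quotKerEquivOfSurjective hq).symm (q x) = Submodule.Quotient.mk x := by
      rw [LinearEquiv.symm_apply_eq]; rfl
    erw [h4]
    rfl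
  have hnew : (⟨A', l + t.comp q⟩ : E →ₗ.[R] J) ∈ S := by
    refine ⟨hGA', fun x => ?_⟩
    change π (l x + t (q x)) = g x
    rw [map_add, ht' x]
    simp [δ]
  have hle : f ≤ ⟨A', l + t.comp q⟩ := by
    refine ⟨hlt.le, ?_⟩
    rintro ⟨x, hx⟩ ⟨y, hy⟩ (rfl : x = y)
    change f.toFun _ = l ⟨x, hy⟩ + t (q ⟨x, hy⟩)
    rw [(hker ⟨x, hy⟩).2 hx, map_zero, add_zero]
    exact (hl ⟨x, hx⟩).symm
  have := hf.le_of_ge hnew hle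
  exact absurd this.1 (not_le_of_gt hlt)

open TensorProduct in
theorem XV_flat_aux {R : Type} [CommRing R] {M F K ι P : Type} [AddCommGroup M] [Module R M]
    [AddCommGroup F] [Module R F] [Module.Flat R F] [AddCommGroup P] [Module R P]
    [AddCommGroup K] [Module R K] (k : K →ₗ[R] (ι →₀ R)) (φ : (ι →₀ R) →ₗ[R] F)
    (hk : Function.Injective k) (hφ : Function.Surjective φ) (hex : Function.Exact k φ)
    (hP : PureInjective R P) (hM : XV R M P 1) : XV R (M ⊗[R] F) P 1 := by
  classical
  have hinj : ∀ (A : Type) [AddCommGroup A] [Module R A],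
      Function.Injective (k.lTensor A) := by
    intro A _ _
    exact LinearMap.lTensor_injective_of_exact_of_flat φ hφ k hk hex A
  refine XV_quot (k.lTensor M) (φ.lTensor M) (hinj M)
    (LinearMap.lTensor_surjective M hφ) (lTensor_exact M hex hφ) ?_ ?_
  · have h := XV_finsupp (P := P) ι 0 hM
    let e : M ⊗[R] (ι →₀ R) ≃ₗ[R] (ι →₀ M) := TensorProduct.finsuppScalarRight R R M ι
    refine XV_retract e.toLinearMap e.symm.toLinearMap ?_ 0 h
    exact LinearMap.ext fun x => e.symm_apply_apply x
  · refine hP _ _ _ ⟨hinj M, fun Q _ _ => ?_⟩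
    have h := hinj (Q ⊗[R] M)
    have heq : (k.lTensor (Q ⊗[R] M)) =
      (TensorProduct.assoc R Q M (ι →₀ R)).symm.toLinearMap.comp
      (((k.lTensor M).lTensor Q).comp
        (TensorProduct.assoc R Q M K).toLinearMap) := by
      apply TensorProduct.ext_threefold
      intro a b c
      rfl
    rw [heq] at h
    intro a b hab
    obtain ⟨a, rfl⟩ := (TensorProduct.assoc R Q M K).surjective a
    obtain ⟨b, rfl⟩ := (TensorProduct.assoc R Q M K).surjective b
    congr 1
    apply h
    exact congrArg (TensorProduct.assoc R Q M (ι →₀ R)).symm hab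

open TensorProduct in
theorem XV_flat {R : Type} [CommRing R] {M F P : Type} [AddCommGroup M] [Module R M]
    [AddCommGroup F] [Module R F] [Module.Flat R F] [AddCommGroup P] [Module R P]
    (hP : PureInjective R P) (hM : XV R M P 1) : XV R (M ⊗[R] F) P 1 :=
  XV_flat_aux (ι := F) (K := LinearMap.ker (Finsupp.linearCombination R (id : F → F)))
    (LinearMap.ker (Finsupp.linearCombination R (id : F → F))).subtype
    (Finsupp.linearCombination R id)
    (Submodule.subtype_injective _) (Finsupp.linearCombination_id_surjective R F)
    (LinearMap.exact_subtype_ker_map _) hP hM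

structure KV (R : Type) [CommRing R] (p : Ideal R) (V : Type) [AddCommGroup V] [Module R V] :
    Prop where
  kill : ∀ a ∈ p, ∀ v : V, a • v = 0
  bij : ∀ s, s ∉ p → Function.Bijective (fun v : V => s • v)

theorem retract_field {R κ : Type} [CommRing R] [Field κ] [Algebra R κ] {V Z : Type}
    [AddCommGroup V] [AddCommGroup Z] [Module R V] [Module R Z] [Module κ V] [Module κ Z]
    [IsScalarTower R κ V] [IsScalarTower R κ Z] [Nontrivial Z] :
    ∃ (ι : Type) (i : V →ₗ[R] (ι →₀ Z)) (r : (ι →₀ Z) →ₗ[R] V), r.comp i = LinearMap.id := by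
  classical
  let b := Module.Basis.ofVectorSpace κ V
  obtain ⟨z, hz⟩ := exists_ne (0 : Z)
  let j : κ →ₗ[κ] Z := LinearMap.toSpanSingleton κ Z z
  have hj : LinearMap.ker j = ⊥ := LinearMap.ker_toSpanSingleton κ hz
  obtain ⟨q, hq⟩ := j.exists_leftInverse_of_injective hj
  refine ⟨_, ((Finsupp.mapRange.linearMap j).comp b.repr.toLinearMap).restrictScalars R,
    (b.repr.symm.toLinearMap.comp (Finsupp.mapRange.linearMap q)).restrictScalars R, ?_⟩
  ext v
  have h2 : (Finsupp.mapRange.linearMap q) ((Finsupp.mapRange.linearMap j) (b.repr v)) =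
      b.repr v := by
    ext i
    exact LinearMap.congr_fun hq (b.repr v i)
  simp only [LinearMap.comp_apply, LinearMap.restrictScalars_apply, LinearEquiv.coe_coe, h2]
  simp

theorem KV_field {R : Type} [CommRing R] (p : Ideal R) [p.IsPrime] {V : Type}
    [AddCommGroup V] [Module R V] (h : KV R p V) :
    ∃ (W : Type) (_ : AddCommGroup W) (_ : Module R W)
      (_ : Module (IsLocalRing.ResidueField (Localization.AtPrime p)) W)
      (_ : IsScalarTower R (IsLocalRing.ResidueField (Localization.AtPrime p)) W),
      Nonempty (V ≃ₗ[R] W) := by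
  have : IsLocalizedModule p.primeCompl (LinearMap.id : V →ₗ[R] V) :=
    { map_units := fun s => (Module.End.isUnit_iff _).2 (h.bij s.1 s.2)
      surj := fun y => ⟨(y, 1), by simp⟩
      exists_of_eq := fun {x y} hxy => ⟨1, by simpa using hxy⟩ }
  let e : V ≃ₗ[R] LocalizedModule p.primeCompl V :=
    IsLocalizedModule.linearEquiv p.primeCompl LinearMap.id
      (LocalizedModule.mkLinearMap p.primeCompl V)
  let A := Localization.AtPrime p
  let W := LocalizedModule p.primeCompl V
  have hW : Module.IsTorsionBySet A W (IsLocalRing.maximalIdeal A : Set A) := by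
    rintro w ⟨x, hx⟩
    have hle : IsLocalRing.maximalIdeal A ≤ LinearMap.ker (LinearMap.toSpanSingleton A W w) := by
      rw [← Localization.AtPrime.map_eq_maximalIdeal]
      refine Ideal.map_le_iff_le_comap.2 fun a ha => ?_
      change algebraMap R A a • w = 0
      rw [algebraMap_smul]
      obtain ⟨v, rfl⟩ := e.surjective w
      rw [← map_smul, h.kill a ha, map_zero]
    exact hle hx
  let : Module (IsLocalRing.ResidueField A) W := hW.module
  have : IsScalarTower R (IsLocalRing.ResidueField A) W := hW.isScalarTower
  exact ⟨W, inferInstance, inferInstance, inferInstance, inferInstance, ⟨e⟩⟩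

theorem KV_retract {R : Type} [CommRing R] (p : Ideal R) [p.IsPrime] {V Z P : Type}
    [AddCommGroup V] [Module R V] [AddCommGroup Z] [Module R Z] [AddCommGroup P] [Module R P]
    [Nontrivial Z] (hV : KV R p V) (hZ : KV R p Z) (m : ℕ) (h : XV R Z P (m+1)) :
    XV R V P (m+1) := by
  obtain ⟨V', _, _, _, _, ⟨eV⟩⟩ := KV_field p hV
  obtain ⟨Z', _, _, _, _, ⟨eZ⟩⟩ := KV_field p hZ
  have : Nontrivial Z' := eZ.symm.toEquiv.nontrivial
  obtain ⟨ι, i, r, hir⟩ := retract_field (R := R)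
    (κ := IsLocalRing.ResidueField (Localization.AtPrime p)) (V := V') (Z := Z')
  have h1 : XV R Z' P (m+1) := XV_retract eZ.symm.toLinearMap eZ.toLinearMap
    (LinearMap.ext fun x => eZ.apply_symm_apply x) m h
  have h2 := XV_finsupp ι m h1
  have h3 : XV R V' P (m+1) := XV_retract i r hir m h2
  exact XV_retract eV.toLinearMap eV.symm.toLinearMap
    (LinearMap.ext fun x => eV.symm_apply_apply x) m h3

/-- every multiplication by an element of `p` factors through a free module. -/
def NN (R : Type) [CommRing R] (p : Ideal R) (N : Type) [AddCommGroup N] [Module R N] : Prop :=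
  Module.Finite R N ∧ ∀ a ∈ p, ∃ (r : ℕ) (f : N →ₗ[R] (Fin r → R)) (g : (Fin r → R) →ₗ[R] N),
    ∀ x, g (f x) = a • x

theorem NN_quot (R : Type) [CommRing R] (p : Ideal R) : NN R p (R ⧸ p) := by
  refine ⟨inferInstance, fun a ha => ⟨0, 0, 0, fun x => ?_⟩⟩
  obtain ⟨x, rfl⟩ := Ideal.Quotient.mk_surjective x
  have : a • (Ideal.Quotient.mk p x) = Ideal.Quotient.mk p (a * x) := rfl
  rw [this, Ideal.Quotient.eq_zero_iff_mem.2 (p.mul_mem_right _ ha)]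
  simp

theorem NN_syz (R : Type) [CommRing R] [IsNoetherianRing R] (p : Ideal R) {N : Type}
    [AddCommGroup N] [Module R N] (h : NN R p N) :
    ∃ (r : ℕ) (π : (Fin r → R) →ₗ[R] N), Function.Surjective π ∧
      NN R p (LinearMap.ker π) ∧
      ∀ a ∈ p, ∃ u : (Fin r → R) →ₗ[R] (LinearMap.ker π), ∀ x : LinearMap.ker π, u x = a • x := by
  have := h.1
  obtain ⟨r, π, hπ⟩ := Module.Finite.exists_fin' R N
  have key : ∀ a ∈ p, ∃ u : (Fin r → R) →ₗ[R] (LinearMap.ker π),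
      ∀ x : LinearMap.ker π, u x = a • x := by
    intro a ha
    obtain ⟨k, f, g, hfg⟩ := h.2 a ha
    obtain ⟨g', hg'⟩ := Module.projective_lifting_property π g hπ
    refine ⟨LinearMap.codRestrict _ (a • LinearMap.id - g'.comp (f.comp π)) ?_, ?_⟩
    · intro x
      have := LinearMap.congr_fun hg' (f (π x))
      simp only [LinearMap.comp_apply] at this
      simp [this, hfg]
    · intro x
      ext1
      have hx : π x = 0 := x.2
      simp [hx]
  refine ⟨r, π, hπ, ⟨inferInstance, fun a ha => ?_⟩, key⟩
  obtain ⟨u, hu⟩ := key a ha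
  exact ⟨r, (LinearMap.ker π).subtype, u, hu⟩

theorem factor_surj {R : Type} [CommRing R] {F N L : Type} [AddCommGroup F] [Module R F]
    [AddCommGroup N] [Module R N] [AddCommGroup L] [Module R L] (π : F →ₗ[R] N)
    (hπ : Function.Surjective π) (ψ : F →ₗ[R] L) (h : ∀ x, π x = 0 → ψ x = 0) :
    ∃ t : N →ₗ[R] L, ∀ x, t (π x) = ψ x := by
  refine ⟨((LinearMap.ker π).liftQ ψ h).comp
    (π.quotKerEquivOfSurjective hπ).symm.toLinearMap, fun x => ?_⟩
  have h4 : (π.quotKerEquivOfSurjective hπ).symm (π x) = Submodule.Quotient.mk x := by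
    rw [LinearEquiv.symm_apply_eq]; rfl
  simp only [LinearMap.comp_apply, LinearEquiv.coe_coe, h4]
  rfl

theorem XV_homfree {R : Type} [CommRing R] {L P : Type} [AddCommGroup L] [Module R L]
    [AddCommGroup P] [Module R P] (r m : ℕ) (h : XV R L P (m+1)) :
    XV R ((Fin r → R) →ₗ[R] L) P (m+1) := by
  let e1 : (Fin r → L) ≃ₗ[R] ((Fin r → R) →ₗ[R] L) := (Pi.basisFun R (Fin r)).constr R
  let e2 : (Fin r →₀ L) ≃ₗ[R] (Fin r → L) := Finsupp.linearEquivFunOnFinite R L (Fin r)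
  let e := e2.trans e1
  exact XV_retract e.symm.toLinearMap e.toLinearMap
    (LinearMap.ext fun x => e.apply_symm_apply x) m (XV_finsupp (Fin r) m h)

theorem stepC_one {R : Type} [CommRing R] [IsNoetherianRing R] (p : Ideal R)
    {L P : Type} [AddCommGroup L] [Module R L] [AddCommGroup P] [Module R P]
    (hbij : ∀ s, s ∉ p → Function.Bijective (fun v : L => s • v)) (m : ℕ)
    (hL : XV R L P (m+1))
    (h1 : ∀ (N : Type) [AddCommGroup N] [Module R N], NN R p N → XV R (N →ₗ[R] L) P (m+2))
    (h2 : ∀ (V : Type) [AddCommGroup V] [Module R V], KV R p V → XV R V P (m+3))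
    (N : Type) [AddCommGroup N] [Module R N] (hN : NN R p N) :
    XV R (N →ₗ[R] L) P (m+1) := by
  obtain ⟨r, π, hπ, hΩ, hu⟩ := NN_syz R p hN
  let res : ((Fin r → R) →ₗ[R] L) →ₗ[R] (LinearMap.ker π →ₗ[R] L) :=
    LinearMap.lcomp R L (LinearMap.ker π).subtype
  have hres : ∀ ψ x, res ψ x = ψ x := fun ψ x => rfl
  have hdiv : ∀ s, s ∉ p → ∃ e : L →ₗ[R] L, (∀ x, s • e x = x) ∧ ∀ x, e (s • x) = x := by
    intro s hs
    let e := LinearEquiv.ofBijective (LinearMap.lsmul R L s) (hbij s hs)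
    exact ⟨e.symm.toLinearMap, fun x => e.apply_symm_apply x, fun x => e.symm_apply_apply x⟩
  have hH : KV R p ((LinearMap.ker π →ₗ[R] L) ⧸ LinearMap.range res) := by
    refine ⟨fun a ha v => ?_, fun s hs => ⟨?_, ?_⟩⟩
    · obtain ⟨φ, rfl⟩ := Submodule.Quotient.mk_surjective _ v
      obtain ⟨u, hu⟩ := hu a ha
      rw [← Submodule.Quotient.mk_smul, Submodule.Quotient.mk_eq_zero]
      refine ⟨φ.comp u, ?_⟩
      ext x
      rw [hres, LinearMap.comp_apply, hu, map_smul]; rfl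
    · obtain ⟨e, he1, he2⟩ := hdiv s hs
      intro v w hvw
      obtain ⟨φ, rfl⟩ := Submodule.Quotient.mk_surjective _ v
      obtain ⟨φ', rfl⟩ := Submodule.Quotient.mk_surjective _ w
      simp only [← Submodule.Quotient.mk_smul] at hvw
      rw [Submodule.Quotient.eq] at hvw ⊢
      obtain ⟨ψ, hψ⟩ := hvw
      refine ⟨e.comp ψ, ?_⟩
      ext x
      have := LinearMap.congr_fun hψ x
      rw [hres] at this
      rw [hres, LinearMap.comp_apply, this]
      simp [he2]
    · obtain ⟨e, he1, he2⟩ := hdiv s hs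
      intro v
      obtain ⟨φ, rfl⟩ := Submodule.Quotient.mk_surjective _ v
      refine ⟨Submodule.Quotient.mk (e.comp φ), ?_⟩
      simp only [← Submodule.Quotient.mk_smul]
      congr 1
      ext x
      simp [he1]
  have hB : XV R (LinearMap.range res) P (m+2) :=
    XV_left (LinearMap.range res).subtype (LinearMap.range res).mkQ
      (Submodule.subtype_injective _) (Submodule.mkQ_surjective _)
      (LinearMap.exact_subtype_mkQ _) (m+2) (h1 _ hΩ) (h2 _ hH)
  refine XV_left (LinearMap.lcomp R L π) res.rangeRestrict ?_ res.surjective_rangeRestrict ?_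
    (m+1) (XV_homfree r m hL) hB
  · intro φ ψ h
    ext x
    obtain ⟨y, rfl⟩ := hπ x
    exact LinearMap.congr_fun h y
  · intro ψ
    constructor
    · intro h
      have h' : res ψ = 0 := congrArg Subtype.val h
      obtain ⟨t, ht⟩ := factor_surj π hπ ψ (fun x hx => by
        exact LinearMap.congr_fun h' ⟨x, hx⟩)
      exact ⟨t, LinearMap.ext ht⟩
    · rintro ⟨t, rfl⟩
      apply Subtype.ext
      change res _ = 0
      ext x
      rw [hres]
      have : π x = 0 := x.2
      simp [this]

theorem stepC {R : Type} [CommRing R] [IsNoetherianRing R] (p : Ideal R) [p.IsPrime]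
    {L P : Type} [AddCommGroup L] [Module R L] [AddCommGroup P] [Module R P]
    (hbij : ∀ s, s ∉ p → Function.Bijective (fun v : L => s • v))
    (z : L) (hz : z ≠ 0) (hpz : ∀ a ∈ p, a • z = 0)
    (hL : ∀ m, XV R L P (m+1)) (n : ℕ)
    (hfin : ∀ (X : Type) [AddCommGroup X] [Module R X], ∀ j, n < j → XV R X P j)
    (V : Type) [AddCommGroup V] [Module R V] (hV : KV R p V) : XV R V P 1 := by
  have hZ : KV R p ((R ⧸ p) →ₗ[R] L) := by
    refine ⟨fun a ha v => ?_, fun s hs => ⟨?_, ?_⟩⟩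
    · ext
      rw [LinearMap.comp_apply, LinearMap.comp_apply, LinearMap.smul_apply, ← map_smul]
      have : a • (p.mkQ 1) = 0 := by
        rw [← map_smul]
        exact Ideal.Quotient.eq_zero_iff_mem.2 (by simpa using ha)
      rw [this]; simp
    · intro v w hvw
      ext
      exact (hbij s hs).1 (LinearMap.congr_fun hvw (p.mkQ 1))
    · let e := LinearEquiv.ofBijective (LinearMap.lsmul R L s) (hbij s hs)
      intro v
      refine ⟨e.symm.toLinearMap.comp v, ?_⟩
      ext
      exact e.apply_symm_apply _
  have hnt : Nontrivial ((R ⧸ p) →ₗ[R] L) := by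
    refine ⟨p.liftQ (LinearMap.toSpanSingleton R L z) hpz, 0, fun h => hz ?_⟩
    have := LinearMap.congr_fun h (p.mkQ 1)
    have h2 : (1 : R) • z = 0 := this
    simpa using h2
  have key : ∀ k m : ℕ, n < m + k →
      ((∀ (V : Type) [AddCommGroup V] [Module R V], KV R p V → XV R V P (m+1)) ∧
      ∀ (N : Type) [AddCommGroup N] [Module R N], NN R p N → XV R (N →ₗ[R] L) P (m+1)) := by
    intro k
    induction k with
    | zero => exact fun m hm => ⟨fun V _ _ _ => hfin V _ (by omega),
        fun N _ _ _ => hfin _ _ (by omega)⟩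
    | succ k ih =>
      intro m hm
      have h1 := ih (m+1) (by omega)
      have h2 := ih (m+2) (by omega)
      have h3 : ∀ (N : Type) [AddCommGroup N] [Module R N], NN R p N →
          XV R (N →ₗ[R] L) P (m+1) := fun N _ _ hN =>
        stepC_one p hbij m (hL m) h1.2 h2.1 N hN
      exact ⟨fun V _ _ hV => KV_retract p hV hZ m (h3 _ (NN_quot R p)), h3⟩
  exact (key (n+1) 0 (by omega)).1 V hV

theorem exists_assoc (R : Type) [CommRing R] [IsNoetherianRing R] {Q : Type} [AddCommGroup Q]
    [Module R Q] (x : Q) (hx : x ≠ 0) :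
    ∃ (p : Ideal R) (_ : p.IsPrime) (y : Q), ∀ a, a • y = 0 ↔ a ∈ p := by
  obtain ⟨p, hp, -⟩ := exists_le_isAssociatedPrime_of_isNoetherianRing R x hx
  obtain ⟨h1, y, hy⟩ := isAssociatedPrime_iff.1 hp
  refine ⟨p, h1, y, fun a => ?_⟩
  rw [hy, Submodule.mem_colon_singleton, Submodule.mem_bot]

theorem mem_sSup_chain {R E : Type} [CommRing R] [AddCommGroup E] [Module R E]
    (c : Set (Submodule R E)) (hne : c.Nonempty) (hc : IsChain (· ≤ ·) c) (x : E) :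
    x ∈ sSup c ↔ ∃ A ∈ c, x ∈ A :=
  Submodule.mem_sSup_of_directed hne hc.directedOn

theorem stepD {R : Type} [CommRing R] [IsNoetherianRing R] (p : Ideal R) [p.IsPrime]
    {I P : Type} [AddCommGroup I] [Module R I] [AddCommGroup P] [Module R P]
    (hI : Module.Injective R I) (y : I) (hy : ∀ a, a • y = 0 ↔ a ∈ p)
    (hess : ∀ x : I, x ≠ 0 → ∃ r c : R, r • x = c • y ∧ r • x ≠ 0)
    (hKV : ∀ (V : Type) [AddCommGroup V] [Module R V], KV R p V → XV R V P 1) :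
    XV R I P 1 := by
  have hpp : p.IsPrime := inferInstance
  have hinj : ∀ s, s ∉ p → ∀ x : I, s • x = 0 → x = 0 := by
    intro s hs x hx
    by_contra hne
    obtain ⟨r, c, h1, h2⟩ := hess x hne
    have h3 : (s * c) • y = 0 := by
      rw [mul_smul, ← h1, smul_comm, hx, smul_zero]
    rcases hpp.mem_or_mem ((hy _).1 h3) with h | h
    · exact hs h
    · exact h2 (h1.trans ((hy c).2 h))
  have hsurj : ∀ s, s ∉ p → ∀ x : I, ∃ x' : I, s • x' = x := by
    intro s hs x
    obtain ⟨h, hh⟩ := hI.out (LinearMap.lsmul R I s) (by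
      rw [← LinearMap.ker_eq_bot, LinearMap.ker_eq_bot']
      exact fun x hx => hinj s hs x hx) LinearMap.id
    refine ⟨h x, ?_⟩
    rw [← map_smul]
    exact hh x
  have htors : ∀ a ∈ p, ∀ x : I, ∃ n : ℕ, a ^ n • x = 0 := by
    intro a ha x
    let ann : ℕ →o Ideal R :=
      { toFun := fun n => LinearMap.ker (LinearMap.toSpanSingleton R I (a ^ n • x))
        monotone' := monotone_nat_of_le_succ (by
          intro n b hb
          rw [LinearMap.mem_ker, LinearMap.toSpanSingleton_apply] at hb ⊢
          rw [pow_succ', mul_smul, smul_comm, hb, smul_zero]) }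
    obtain ⟨n, hn⟩ := monotone_stabilizes_iff_noetherian.2 ‹IsNoetherianRing R› ann
    refine ⟨n, ?_⟩
    by_contra hne
    obtain ⟨r, c, h1, h2⟩ := hess _ hne
    have h3 : r ∈ ann (n+1) := by
      change r • (a ^ (n+1) • x) = 0
      rw [pow_succ', mul_smul, smul_comm, h1, smul_comm, (hy a).2 ha, smul_zero]
    rw [← hn (n+1) (Nat.le_succ n)] at h3
    exact h2 h3
  obtain ⟨J, L, _, _, _, _, π, hJ, hcrit⟩ := liftcrit R 0 P
  rw [hcrit]
  intro g
  refine eklofZ π hJ g (fun A => ∀ s, s ∉ p → ∀ x, s • x ∈ A → x ∈ A) ?_ ?_ ?_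
  · intro s hs x hx
    exact hinj s hs x hx
  · intro c hne hc hG s hs x hx
    rw [mem_sSup_chain c hne hc] at hx ⊢
    obtain ⟨A, hA, hxA⟩ := hx
    exact ⟨A, hA, hG A hA s hs x hxA⟩
  · intro A hG hA
    obtain ⟨x0, hx0⟩ : ∃ x0, x0 ∉ A := by
      by_contra hcon
      push Not at hcon
      exact hA (eq_top_iff.2 fun x _ => hcon x)
    obtain ⟨q, hq, x, hx⟩ := exists_assoc R (A.mkQ x0)
      (fun h => hx0 ((Submodule.Quotient.mk_eq_zero A).1 h))
    obtain ⟨x, rfl⟩ := A.mkQ_surjective x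
    have hx' : ∀ a, a • x ∈ A ↔ a ∈ q := by
      intro a
      rw [← hx, ← map_smul]
      exact (Submodule.Quotient.mk_eq_zero A).symm
    have hxA : x ∉ A := by
      intro h
      exact hq.ne_top ((Ideal.eq_top_iff_one q).2 ((hx' 1).1 (by simpa using h)))
    have hpx : ∀ a ∈ p, a • x ∈ A := by
      intro a ha
      obtain ⟨n, hn⟩ := htors a ha x
      have : a ^ n ∈ q := (hx' _).1 (by rw [hn]; exact A.zero_mem)
      exact (hx' a).2 (hq.mem_of_pow_mem n this)
    have h1p : (1 : R) ∉ p := fun h => hpp.ne_top ((Ideal.eq_top_iff_one p).2 h)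
    let A' : Submodule R I :=
      { carrier := {w | ∃ s, s ∉ p ∧ ∃ r : R, s • w - r • x ∈ A}
        zero_mem' := ⟨1, h1p, 0, by simp⟩
        add_mem' := by
          rintro w w' ⟨s, hs, r, h⟩ ⟨s', hs', r', h'⟩
          refine ⟨s * s', fun hh => (hpp.mem_or_mem hh).elim hs hs', s' * r + s * r', ?_⟩
          have := A.add_mem (A.smul_mem s' h) (A.smul_mem s h')
          convert this using 1
          module
        smul_mem' := by
          rintro c w ⟨s, hs, r, h⟩
          refine ⟨s, hs, c * r, ?_⟩
          have := A.smul_mem c h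
          convert this using 1
          module }
    have hAA' : A ≤ A' := fun w hw => ⟨1, h1p, 0, by simpa using hw⟩
    have hxA' : x ∈ A' := ⟨1, h1p, 1, by simp⟩
    have hmk : ∀ w : A', (Submodule.Quotient.mk w : A' ⧸ A.submoduleOf A') = 0 ↔ (w : I) ∈ A := by
      intro w
      rw [Submodule.Quotient.mk_eq_zero]; rfl
    have hKVV : KV R p (A' ⧸ A.submoduleOf A') := by
      refine ⟨fun a ha v => ?_, fun s hs => ⟨?_, ?_⟩⟩
      · obtain ⟨⟨w, s, hs, r, h⟩, rfl⟩ := Submodule.Quotient.mk_surjective _ v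
        rw [← Submodule.Quotient.mk_smul, hmk]
        change a • w ∈ A
        refine hG s hs _ ?_
        have := A.add_mem (A.smul_mem a h) (A.smul_mem r (hpx a ha))
        convert this using 1
        module
      · intro v v' h
        obtain ⟨w, rfl⟩ := Submodule.Quotient.mk_surjective _ v
        obtain ⟨w', rfl⟩ := Submodule.Quotient.mk_surjective _ v'
        rw [← sub_eq_zero] at h ⊢
        simp only at h
        rw [← smul_sub, ← Submodule.Quotient.mk_sub, ← Submodule.Quotient.mk_smul, hmk] at h
        rw [← Submodule.Quotient.mk_sub, hmk]
        exact hG s hs _ h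
      · intro v
        obtain ⟨⟨w, t, ht, r, h⟩, rfl⟩ := Submodule.Quotient.mk_surjective _ v
        obtain ⟨w', hw'⟩ := hsurj s hs w
        refine ⟨Submodule.Quotient.mk ⟨w', t * s,
          fun hh => (hpp.mem_or_mem hh).elim ht hs, r, ?_⟩, ?_⟩
        · rw [mul_smul, hw']; exact h
        · simp only [← Submodule.Quotient.mk_smul]
          congr 1
          exact Subtype.ext hw'
    refine ⟨A', lt_of_le_of_ne hAA' (fun h => hxA (h ▸ hxA')), ?_, _, inferInstance, inferInstance,
      (A.submoduleOf A').mkQ, Submodule.mkQ_surjective _, hmk, ?_⟩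
    · rintro s hs w ⟨t, ht, r, h⟩
      exact ⟨t * s, fun hh => (hpp.mem_or_mem hh).elim ht hs, r, by rw [mul_smul]; exact h⟩
    · exact (hcrit _).1 (hKV _ hKVV)

theorem inj_of_retract {R E : Type} [CommRing R] [AddCommGroup E] [Module R E]
    (hE : Module.Injective R E) (A : Submodule R E) (ρ : E →ₗ[R] A) (h : ∀ a : A, ρ a = a) :
    Module.Injective R A := by
  refine ⟨fun X Y _ _ _ _ f hf g => ?_⟩
  obtain ⟨k, hk⟩ := hE.out f hf (A.subtype.comp g)
  refine ⟨ρ.comp k, fun x => ?_⟩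
  rw [LinearMap.comp_apply, hk x]
  exact h (g x)

theorem inj_chain {R E : Type} [CommRing R] [IsNoetherianRing R] [AddCommGroup E] [Module R E]
    (c : Set (Submodule R E)) (hne : c.Nonempty) (hc : IsChain (· ≤ ·) c)
    (h : ∀ A ∈ c, Module.Injective R A) : Module.Injective R (sSup c : Submodule R E) := by
  apply Module.Baer.injective
  intro I g
  let g' : I →ₗ[R] E := (sSup c).subtype.comp g
  have hfg : (LinearMap.range g').FG := by
    rw [LinearMap.range_eq_map]
    exact (IsNoetherian.noetherian (⊤ : Submodule R I)).map g'
  have hle : LinearMap.range g' ≤ sSup c := by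
    rintro _ ⟨x, rfl⟩
    exact (g x).2
  obtain ⟨A, hA, hle'⟩ := (CompleteLattice.isCompactElement_iff_le_of_directed_sSup_le _ _).1
    ((Submodule.fg_iff_compact _).1 hfg) c hne hc.directedOn hle
  obtain ⟨k, hk⟩ := (h A hA).out I.subtype (Submodule.subtype_injective _)
    (LinearMap.codRestrict A g' (fun x => hle' ⟨x, rfl⟩))
  refine ⟨(Submodule.inclusion (le_sSup hA)).comp k, fun x hx => ?_⟩
  apply Subtype.ext
  have := congrArg Subtype.val (hk ⟨x, hx⟩)
  exact this

theorem exists_max_disjoint {R E : Type} [CommRing R] [AddCommGroup E] [Module R E]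
    (A Y : Submodule R E) (h : Disjoint A Y) :
    ∃ K, A ≤ K ∧ Disjoint K Y ∧ ∀ K', K ≤ K' → Disjoint K' Y → K' = K := by
  obtain ⟨K, hAK, hK⟩ := zorn_le_nonempty₀ {K : Submodule R E | Disjoint K Y} (by
    intro c hcS hc K0 hK0
    refine ⟨sSup c, ?_, fun z hz => le_sSup hz⟩
    exact (hc.directedOn.disjoint_sSup_left).2 hcS) A h
  exact ⟨K, hAK, hK.prop, fun K' h1 h2 => le_antisymm (hK.le_of_ge h2 h1) h1⟩

theorem decomp {R E : Type} [CommRing R] [AddCommGroup E] [Module R E]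
    (hE : Module.Injective R E) (A : Submodule R E) (y : E)
    (hAy : Disjoint A (Submodule.span R {y})) :
    ∃ ψ : E →ₗ[R] E, (∀ e, ψ (ψ e) = ψ e) ∧ (∀ a ∈ A, ψ a = a) ∧ ψ y = 0 ∧
      ∀ x, ψ x = 0 → x ≠ 0 → ∃ r c : R, r • x = c • y ∧ r • x ≠ 0 := by
  obtain ⟨K, hAK, hKY, hKmax⟩ := exists_max_disjoint A _ hAy
  obtain ⟨H, hYH, hHK, hHmax⟩ := exists_max_disjoint _ K hKY.symm
  have hyH : y ∈ H := hYH (Submodule.mem_span_singleton_self y)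
  have hd : ∀ x, x ∈ H → x ∈ K → x = 0 := fun x h1 h2 =>
    Submodule.disjoint_def.1 hHK x h1 h2
  obtain ⟨φ, hφ⟩ := hE.out (H.mkQ.comp K.subtype) (by
    rw [← LinearMap.ker_eq_bot, LinearMap.ker_eq_bot']
    intro k hk
    have : (k : E) ∈ H := (Submodule.Quotient.mk_eq_zero H).1 hk
    exact Subtype.ext (hd k this k.2)) K.subtype
  let ψ : E →ₗ[R] E := φ.comp H.mkQ
  have hψK : ∀ k ∈ K, ψ k = k := fun k hk => hφ ⟨k, hk⟩
  have hψH : ∀ x ∈ H, ψ x = 0 := by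
    intro x hx
    change φ (Submodule.Quotient.mk x) = 0
    rw [(Submodule.Quotient.mk_eq_zero H).2 hx, map_zero]
  have hker : LinearMap.ker ψ = H := by
    refine hHmax _ hψH ?_
    rw [Submodule.disjoint_def]
    intro x hx hxK
    rw [← hψK x hxK]; exact hx
  have hrange : LinearMap.range ψ = K := by
    refine hKmax _ (fun k hk => ⟨k, hψK k hk⟩) ?_
    rw [Submodule.disjoint_def]
    rintro _ ⟨e, rfl⟩ he
    by_contra hne
    have heH : e ∉ H := fun h => hne (hψH e h)
    have hnd : ¬ Disjoint (H ⊔ Submodule.span R {e}) K := by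
      intro hdis
      have := hHmax _ le_sup_left hdis
      exact heH (this ▸ (le_sup_right : Submodule.span R {e} ≤ _)
        (Submodule.mem_span_singleton_self e))
    rw [Submodule.disjoint_def] at hnd
    push Not at hnd
    obtain ⟨k, hk1, hk2, hk3⟩ := hnd
    obtain ⟨h, hh, e', he', rfl⟩ := Submodule.mem_sup.1 hk1
    obtain ⟨r, rfl⟩ := Submodule.mem_span_singleton.1 he'
    have h5 := hψK _ hk2
    rw [map_add, hψH h hh, zero_add, map_smul] at h5
    apply hk3
    refine Submodule.disjoint_def.1 hKY _ hk2 ?_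
    rw [← h5]
    exact Submodule.smul_mem _ r he
  refine ⟨ψ, fun e => hψK _ (hrange ▸ LinearMap.mem_range_self ψ e),
    fun a ha => hψK a (hAK ha), hψH y hyH, ?_⟩
  intro x hx hx0
  have hxH : x ∈ H := hker ▸ hx
  by_contra hcon
  push Not at hcon
  have hxK : K ⊔ Submodule.span R {x} = K := by
    refine hKmax _ le_sup_left ?_
    rw [Submodule.disjoint_def]
    intro z hz1 hz2
    obtain ⟨k, hk, e', he', rfl⟩ := Submodule.mem_sup.1 hz1
    obtain ⟨r, rfl⟩ := Submodule.mem_span_singleton.1 he'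
    obtain ⟨c, hc⟩ := Submodule.mem_span_singleton.1 hz2
    have hk0 : k = 0 := by
      refine hd k ?_ hk
      have : k = c • y - r • x := by rw [hc]; abel
      rw [this]
      exact H.sub_mem (H.smul_mem _ hyH) (H.smul_mem _ hxH)
    rw [hk0, zero_add] at hc ⊢
    exact hcon r c hc.symm
  have : x ∈ K := hxK ▸ (le_sup_right : Submodule.span R {x} ≤ _)
    (Submodule.mem_span_singleton_self x)
  exact hx0 (hd x hxH this)

theorem stepE {R : Type} [CommRing R] [IsNoetherianRing R]
    {M E P : Type} [AddCommGroup M] [Module R M] [AddCommGroup E] [Module R E]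
    [AddCommGroup P] [Module R P] (f : M →ₗ[R] E) (hf : IsInjectiveEnvelope R f)
    (hAss : ∀ (p : Ideal R) [p.IsPrime] (m : M), (∀ a, a • m = 0 ↔ a ∈ p) →
      ∀ (V : Type) [AddCommGroup V] [Module R V], KV R p V → XV R V P 1) :
    XV R E P 1 := by
  obtain ⟨hE, hfi, hfe⟩ := hf
  obtain ⟨J, L, _, _, _, _, π, hJ, hcrit⟩ := liftcrit R 0 P
  rw [hcrit]
  intro g
  refine eklofZ π hJ g (fun A => Module.Injective R A) ?_ ?_ ?_
  · exact inj_of_retract hE ⊥ 0 (fun a => Subsingleton.elim _ _)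
  · intro c hne hc hG
    exact inj_chain c hne hc hG
  · intro A hG hA
    obtain ⟨x0, hx0⟩ : ∃ x0, x0 ∉ A := by
      by_contra hcon
      push Not at hcon
      exact hA (eq_top_iff.2 fun x _ => hcon x)
    obtain ⟨ρ, hρ⟩ := hG.out A.subtype (Submodule.subtype_injective _) LinearMap.id
    have hρ' : ∀ a : A, ρ a = a := hρ
    obtain ⟨p, hp, ⟨y, hyρ⟩, hy⟩ := exists_assoc R
      (⟨x0 - ρ x0, by rw [LinearMap.mem_ker, map_sub, hρ', sub_self]⟩ : LinearMap.ker ρ)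
      (fun h => hx0 (by
        have h1 : x0 - ρ x0 = 0 := congrArg Subtype.val h
        rw [sub_eq_zero.1 h1]; exact (ρ x0).2))
    have hy' : ∀ a, a • y = 0 ↔ a ∈ p := by
      intro a
      rw [← hy a, ← Subtype.coe_inj]; rfl
    have hy0 : y ≠ 0 := by
      rintro rfl
      exact hp.ne_top ((Ideal.eq_top_iff_one p).2 ((hy' 1).1 (smul_zero _)))
    have hKV : ∀ (V : Type) [AddCommGroup V] [Module R V], KV R p V → XV R V P 1 := by
      have h1 := hfe (Submodule.span R {y}) (by simpa using hy0)
      obtain ⟨z, hz, hz0⟩ := Submodule.exists_mem_ne_zero_of_ne_bot h1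
      obtain ⟨hz1, m, rfl⟩ := hz
      obtain ⟨c, hc⟩ := Submodule.mem_span_singleton.1 hz1
      have hcp : c ∉ p := fun h => hz0 (by rw [← hc]; exact (hy' c).2 h)
      refine hAss p m fun a => ?_
      rw [← (map_eq_zero_iff f hfi), map_smul, ← hc, smul_smul, hy']
      exact ⟨fun h => (hp.mem_or_mem h).resolve_right hcp, fun h => p.mul_mem_right _ h⟩
    obtain ⟨ψ, hψψ, hψA, hψy, hess⟩ := decomp hE A y (by
      rw [Submodule.disjoint_def]
      intro x hxA hx
      obtain ⟨c, rfl⟩ := Submodule.mem_span_singleton.1 hx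
      have h1 := hρ' ⟨_, hxA⟩
      have h2 : ρ y = 0 := hyρ
      simp only [map_smul, h2, smul_zero] at h1
      exact (congrArg Subtype.val h1).symm)
    let H := LinearMap.ker ψ
    let τ : E →ₗ[R] H := LinearMap.codRestrict H (LinearMap.id - ψ) (fun x => by
      simp [H, hψψ])
    have hτ : ∀ x, (τ x : E) = x - ψ x := fun x => rfl
    have hτH : ∀ x : H, τ x = x := fun x => Subtype.ext (by
      have : ψ x = 0 := x.2
      rw [hτ, this, sub_zero])
    have hHinj : Module.Injective R H := inj_of_retract hE H τ hτH
    have hXH : XV R H P 1 := by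
      refine stepD p hHinj ⟨y, hψy⟩ ?_ ?_ hKV
      · intro a
        rw [← hy' a, ← Subtype.coe_inj]; rfl
      · intro x hx
        obtain ⟨r, c, h1, h2⟩ := hess x x.2 (fun h => hx (Subtype.ext h))
        exact ⟨r, c, Subtype.ext h1, fun h => h2 (congrArg Subtype.val h)⟩
    have hyA : y ∉ A := by
      intro h
      apply hy0
      rw [← hψA y h, hψy]
    refine ⟨A ⊔ H, lt_of_le_of_ne le_sup_left (fun h => hyA ?_), ?_, H, inferInstance,
      inferInstance, τ.comp (A ⊔ H).subtype, ?_, ?_, (hcrit _).1 hXH⟩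
    · rw [h]; exact (le_sup_right : H ≤ A ⊔ H) hψy
    · refine inj_of_retract hE (A ⊔ H)
        ((Submodule.inclusion le_sup_left).comp (ρ.comp ψ) +
          (Submodule.inclusion le_sup_right).comp τ) ?_
      rintro ⟨x, hx⟩
      obtain ⟨a, ha, h, hh, rfl⟩ := Submodule.mem_sup.1 hx
      apply Subtype.ext
      have e1 : ψ (a + h) = a := by rw [map_add, hψA a ha, (hh : ψ h = 0), add_zero]
      change ((ρ (ψ (a + h)) : A) : E) + (a + h - ψ (a + h)) = a + h
      rw [e1, hρ' ⟨a, ha⟩]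
      simp
    · intro h
      exact ⟨⟨h, (le_sup_right : H ≤ A ⊔ H) h.2⟩, hτH h⟩
    · rintro ⟨x, hx⟩
      obtain ⟨a, ha, h, hh, rfl⟩ := Submodule.mem_sup.1 hx
      have e1 : ψ (a + h) = a := by rw [map_add, hψA a ha, (hh : ψ h = 0), add_zero]
      rw [← Subtype.coe_inj]
      change a + h - ψ (a + h) = 0 ↔ a + h ∈ A
      rw [e1, add_sub_cancel_left]
      refine ⟨fun h0 => by rw [h0, add_zero]; exact ha, fun h0 => ?_⟩
      have := hψA _ h0
      rw [e1] at this
      simpa using this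
/-- if `(𝒞, 𝒲)` is a hereditary cotorsion pair over a commutative noetherian
ring cogenerated by a class of pure-injective modules of finite injective dimension, then
`𝒞` is closed under injective envelopes. -/
theorem stmt10 (R : Type) [CommRing R] [IsNoetherianRing R]
    (𝒞 𝒲 Pcl : Set (ModuleCat.{0} R))
    (hpair : IsHereditaryCotorsionPair R 𝒞 𝒲)
    (hP : Pcl ⊆ PIFinInj R)
    (hcogen : 𝒞 = leftPerp1 R Pcl) :
    ∀ M ∈ 𝒞, ∀ (E : Type) (_ : AddCommGroup E) (_ : Module R E) (f : ↥M →ₗ[R] E),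
      IsInjectiveEnvelope R f → ModuleCat.of R E ∈ 𝒞 := by
  intro M hM E _ _ f hf
  obtain ⟨⟨hc1, hc2⟩, hher⟩ := hpair
  have hPW : Pcl ⊆ 𝒲 := by
    intro Q hQ
    rw [hc2]
    intro X hX
    rw [hcogen] at hX
    exact hX Q hQ
  have h𝒞 : ∀ (X : Type) [AddCommGroup X] [Module R X],
      (∀ Q ∈ Pcl, XV R X Q 1) → ModuleCat.of R X ∈ 𝒞 := by
    intro X _ _ h
    rw [hcogen]
    exact fun Q hQ => (extV_iff R (ModuleCat.of R X) Q 0).2 (h Q hQ)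
  refine h𝒞 E fun Q hQ => ?_
  refine stepE f hf ?_
  intro p _ m hm V _ _ hV
  have hMp : ModuleCat.of R (LocalizedModule p.primeCompl M) ∈ 𝒞 := by
    refine h𝒞 _ fun Q' hQ' => ?_
    have h1 : XV R M Q' 1 := by
      rw [hcogen] at hM
      exact (extV_iff R M Q' 0).1 (hM Q' hQ')
    have : Module.Flat R (Localization.AtPrime p) :=
      IsLocalization.flat _ p.primeCompl
    have h2 := XV_flat (F := Localization.AtPrime p) (hP hQ').1 h1
    let e := ((LocalizedModule.equivTensorProduct p.primeCompl M).restrictScalars R).trans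
      (TensorProduct.comm R (Localization p.primeCompl) M)
    exact XV_retract e.toLinearMap e.symm.toLinearMap
      (LinearMap.ext fun x => e.symm_apply_apply x) 0 h2
  obtain ⟨n, hn⟩ := (hP hQ).2
  have hp1 : (1 : R) ∉ p := p.one_notMem
  refine stepC p (L := LocalizedModule p.primeCompl M) ?_
    (LocalizedModule.mkLinearMap p.primeCompl M m) ?_ ?_ ?_ n ?_ V hV
  · intro s hs
    exact (Module.End.isUnit_iff _).1 (IsLocalizedModule.map_units
      (LocalizedModule.mkLinearMap p.primeCompl M) (⟨s, hs⟩ : p.primeCompl))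
  · intro h0
    rw [IsLocalizedModule.eq_zero_iff p.primeCompl] at h0
    obtain ⟨c, hc⟩ := h0
    exact c.2 ((hm c).1 hc)
  · intro a ha
    rw [← map_smul, (hm a).2 ha, map_zero]
  · intro k
    exact (extV_iff R _ Q k).1 (hher _ hMp Q (hPW hQ) (k+1) (by omega))
  · intro X _ _ j hj
    obtain ⟨j, rfl⟩ : ∃ j', j = j' + 1 := ⟨j - 1, by omega⟩
    exact (extV_iff R _ Q j).1 (hn (ModuleCat.of R X) _ hj)
end
end
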